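/- arXiv:1609.09151 — 2 statements merged into one kernel-verified Lean document; each statement's English description precedes it below -/
import Mathlib

section
/- Let n₁, n₂ ≥ 1 be integers, μ₁ < n₁²/4, μ₂ < n₂²/4, γᵢ = √(nᵢ²/4 − μᵢ), and μ = μ₁ + μ₂. Let u be a positive C² function on ℝ^{n₁}×(0,∞)×ℝ^{n₂}×(0,∞) which is weakly μ-harmonic, i.e. −(Δ₁ + Δ₂)u = μu, and suppose there is a constant C > 0 such that u(x₁,y₁,x₂,y₂) ≤ C · y₁^{n₁/2+γ₁} · y₂^{n₂/2+γ₂} for all (x₁,y₁,x₂,y₂). Then u is strongly (μ₁,μ₂)-harmonic: −Δ₁u = μ₁u and −Δ₂u = μ₂u on ℝ^{n₁}×(0,∞)×ℝ^{n₂}×(0,∞). -/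
open Real Topology

noncomputable def lapX {n : ℕ} (u : EuclideanSpace ℝ (Fin n) → ℝ → ℝ)
    (x : EuclideanSpace ℝ (Fin n)) (y : ℝ) : ℝ :=
  ∑ i : Fin n, iteratedDeriv 2 (fun t : ℝ => u (x + t • EuclideanSpace.single i (1:ℝ)) y) 0

noncomputable def hypLap (n : ℕ) (u : EuclideanSpace ℝ (Fin n) → ℝ → ℝ)
    (x : EuclideanSpace ℝ (Fin n)) (y : ℝ) : ℝ :=
  y ^ 2 * (lapX u x y + iteratedDeriv 2 (u x) y) - ((n : ℝ) - 1) * y * deriv (u x) y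

noncomputable def hypLap1 (n₁ n₂ : ℕ)
    (u : EuclideanSpace ℝ (Fin n₁) → ℝ → EuclideanSpace ℝ (Fin n₂) → ℝ → ℝ)
    (x₁ : EuclideanSpace ℝ (Fin n₁)) (y₁ : ℝ)
    (x₂ : EuclideanSpace ℝ (Fin n₂)) (y₂ : ℝ) : ℝ :=
  hypLap n₁ (fun x y => u x y x₂ y₂) x₁ y₁

noncomputable def hypLap2 (n₁ n₂ : ℕ)
    (u : EuclideanSpace ℝ (Fin n₁) → ℝ → EuclideanSpace ℝ (Fin n₂) → ℝ → ℝ)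
    (x₁ : EuclideanSpace ℝ (Fin n₁)) (y₁ : ℝ)
    (x₂ : EuclideanSpace ℝ (Fin n₂)) (y₂ : ℝ) : ℝ :=
  hypLap n₂ (u x₁ y₁) x₂ y₂


noncomputable def qf (z : ℝ) : ℝ := Real.log (1 + z ^ 2)
noncomputable def qf1 (z : ℝ) : ℝ := 2 * z / (1 + z ^ 2)
noncomputable def qf2 (z : ℝ) : ℝ := 2 * (1 - z ^ 2) / (1 + z ^ 2) ^ 2

lemma qf_hd (z : ℝ) : HasDerivAt qf (qf1 z) z := by
  have h : HasDerivAt (fun z : ℝ => 1 + z ^ 2) (2 * z) z := by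
    simpa using (hasDerivAt_pow 2 z).const_add 1
  exact h.log (by positivity)

lemma qf1_hd (z : ℝ) : HasDerivAt qf1 (qf2 z) z := by
  have h : HasDerivAt (fun z : ℝ => 1 + z ^ 2) (2 * z) z := by
    simpa using (hasDerivAt_pow 2 z).const_add 1
  have h2 : HasDerivAt (fun z : ℝ => 2 * z) 2 z := by
    simpa using (hasDerivAt_id z).const_mul 2
  have h3 := h2.div h (by positivity)
  refine h3.congr_deriv ?_
  unfold qf2
  congr 1
  ring

lemma qf_nonneg (z : ℝ) : 0 ≤ qf z := Real.log_nonneg (by nlinarith [sq_nonneg z])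

lemma qf_cont : Continuous qf := by
  unfold qf
  exact Continuous.log (by fun_prop) (fun z => by positivity)

lemma abs_le_of_qf {z B : ℝ} (h : qf z ≤ B) : |z| ≤ Real.exp B := by
  have h1 : (1 + z ^ 2) ≤ Real.exp B := by
    have := Real.exp_le_exp.2 h
    rwa [qf, Real.exp_log (by positivity)] at this
  have : |z| ≤ 1 + z ^ 2 := by
    rw [← sq_abs]; nlinarith [sq_nonneg (|z| - 1), abs_nonneg z]
  linarith

lemma qf1_le (z : ℝ) : qf1 z ≤ 1 := by
  unfold qf1
  rw [div_le_one (by positivity)]; nlinarith [sq_nonneg (z - 1)]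

lemma qf2_le (z : ℝ) : qf2 z ≤ 2 := by
  unfold qf2
  rw [div_le_iff₀ (by positivity)]; nlinarith [sq_nonneg z, sq_nonneg (z ^ 2)]

/-- s-slices of q(c e^{-s}) -/
noncomputable def rf1 (z : ℝ) : ℝ := -(z * qf1 z)
noncomputable def rf2 (z : ℝ) : ℝ := z * qf1 z + z ^ 2 * qf2 z

lemma rf1_le (z : ℝ) : rf1 z ≤ 0 := by
  unfold rf1 qf1
  have : z * (2 * z / (1 + z ^ 2)) = 2 * z ^ 2 / (1 + z ^ 2) := by ring
  rw [this]
  have : 0 ≤ 2 * z ^ 2 / (1 + z ^ 2) := by positivity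
  linarith

lemma rf2_le (z : ℝ) : rf2 z ≤ 1 := by
  unfold rf2 qf1 qf2
  have h : z * (2 * z / (1 + z ^ 2)) + z ^ 2 * (2 * (1 - z ^ 2) / (1 + z ^ 2) ^ 2)
      = 4 * z ^ 2 / (1 + z ^ 2) ^ 2 := by
    field_simp; ring
  rw [h, div_le_one (by positivity)]
  nlinarith [sq_nonneg (1 - z ^ 2)]

lemma qs_hd (c s : ℝ) :
    HasDerivAt (fun t : ℝ => qf (c * Real.exp (-t))) (rf1 (c * Real.exp (-s))) s := by
  have h0 : HasDerivAt (fun t : ℝ => c * Real.exp (-t)) (-(c * Real.exp (-s))) s := by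
    have := ((hasDerivAt_neg s).exp).const_mul c
    exact this.congr_deriv (by ring)
  have := (qf_hd (c * Real.exp (-s))).comp s h0
  refine this.congr_deriv ?_
  unfold rf1; ring

lemma qs1_hd (c s : ℝ) :
    HasDerivAt (fun t : ℝ => rf1 (c * Real.exp (-t))) (rf2 (c * Real.exp (-s))) s := by
  have h0 : HasDerivAt (fun t : ℝ => c * Real.exp (-t)) (-(c * Real.exp (-s))) s := by
    have := ((hasDerivAt_neg s).exp).const_mul c
    exact this.congr_deriv (by ring)
  have h1 : HasDerivAt rf1 (-(1 * qf1 (c * Real.exp (-s))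
      + (c * Real.exp (-s)) * qf2 (c * Real.exp (-s)))) (c * Real.exp (-s)) :=
    ((hasDerivAt_id _).mul (qf1_hd _)).neg
  have := h1.comp s h0
  refine this.congr_deriv ?_
  unfold rf2; ring

noncomputable def phi {n : ℕ} (x : EuclideanSpace ℝ (Fin n)) (s : ℝ) : ℝ :=
  qf s + ∑ j, qf (x j * Real.exp (-s))

lemma phi_nonneg {n : ℕ} (x : EuclideanSpace ℝ (Fin n)) (s : ℝ) : 0 ≤ phi x s :=
  add_nonneg (qf_nonneg _) (Finset.sum_nonneg fun _ _ => qf_nonneg _)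

lemma phi_cont {n : ℕ} : Continuous (fun p : EuclideanSpace ℝ (Fin n) × ℝ => phi p.1 p.2) := by
  unfold phi
  refine (qf_cont.comp continuous_snd).add (continuous_finsetSum _ fun j _ => ?_)
  exact qf_cont.comp (by fun_prop)

lemma phi_s_bound {n : ℕ} {x : EuclideanSpace ℝ (Fin n)} {s B : ℝ} (h : phi x s ≤ B) :
    |s| ≤ Real.exp B := by
  apply abs_le_of_qf
  have : 0 ≤ ∑ j, qf (x j * Real.exp (-s)) := Finset.sum_nonneg fun _ _ => qf_nonneg _
  unfold phi at h; linarith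

lemma phi_x_bound {n : ℕ} {x : EuclideanSpace ℝ (Fin n)} {s B : ℝ} (h : phi x s ≤ B) :
    ‖x‖ ≤ n * (Real.exp B * Real.exp (Real.exp B)) := by
  have hs := phi_s_bound h
  have hj : ∀ j, |x j| ≤ Real.exp B * Real.exp (Real.exp B) := by
    intro j
    have h1 : qf (x j * Real.exp (-s)) ≤ B := by
      have h2 : qf (x j * Real.exp (-s)) ≤ ∑ j, qf (x j * Real.exp (-s)) :=
        Finset.single_le_sum (f := fun j => qf (x j * Real.exp (-s)))
          (fun _ _ => qf_nonneg _) (Finset.mem_univ j)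
      have := qf_nonneg s
      unfold phi at h; linarith
    have h2 := abs_le_of_qf h1
    rw [abs_mul, abs_of_pos (Real.exp_pos _)] at h2
    have h3 : |x j| = |x j| * Real.exp (-s) * Real.exp s := by
      rw [mul_assoc, ← Real.exp_add]; simp
    rw [h3]
    have h4 : Real.exp s ≤ Real.exp (Real.exp B) := Real.exp_le_exp.2 ((le_abs_self s).trans hs)
    gcongr
  have hx : x = ∑ j, x j • EuclideanSpace.single j (1 : ℝ) := by
    ext k
    simp [Finset.sum_apply, Pi.single_apply]
  calc ‖x‖ = ‖∑ j, x j • EuclideanSpace.single j (1 : ℝ)‖ := by rw [← hx]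
    _ ≤ ∑ j, ‖x j • EuclideanSpace.single j (1 : ℝ)‖ := norm_sum_le _ _
    _ ≤ ∑ j : Fin n, Real.exp B * Real.exp (Real.exp B) := by
        refine Finset.sum_le_sum fun j _ => ?_
        rw [norm_smul]; simpa using hj j
    _ = _ := by simp

noncomputable def phis1 {n : ℕ} (x : EuclideanSpace ℝ (Fin n)) (s : ℝ) : ℝ :=
  qf1 s + ∑ j, rf1 (x j * Real.exp (-s))
noncomputable def phis2 {n : ℕ} (x : EuclideanSpace ℝ (Fin n)) (s : ℝ) : ℝ :=
  qf2 s + ∑ j, rf2 (x j * Real.exp (-s))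

lemma phis_hd {n : ℕ} (x : EuclideanSpace ℝ (Fin n)) (s : ℝ) :
    HasDerivAt (fun t => phi x t) (phis1 x s) s :=
  (qf_hd s).add (HasDerivAt.fun_sum fun j _ => qs_hd (x j) s)

lemma phis1_hd {n : ℕ} (x : EuclideanSpace ℝ (Fin n)) (s : ℝ) :
    HasDerivAt (fun t => phis1 x t) (phis2 x s) s :=
  (qf1_hd s).add (HasDerivAt.fun_sum fun j _ => qs1_hd (x j) s)

lemma phis1_le {n : ℕ} (x : EuclideanSpace ℝ (Fin n)) (s : ℝ) : phis1 x s ≤ 1 := by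
  have : ∑ j, rf1 (x j * Real.exp (-s)) ≤ 0 := Finset.sum_nonpos fun _ _ => rf1_le _
  have := qf1_le s
  unfold phis1; linarith

lemma phis2_le {n : ℕ} (x : EuclideanSpace ℝ (Fin n)) (s : ℝ) : phis2 x s ≤ 2 + n := by
  have : ∑ j, rf2 (x j * Real.exp (-s)) ≤ ∑ j : Fin n, (1 : ℝ) :=
    Finset.sum_le_sum fun _ _ => rf2_le _
  have := qf2_le s
  simp at *
  unfold phis2; linarith

noncomputable def phix1 {n : ℕ} (x : EuclideanSpace ℝ (Fin n)) (s : ℝ) (i : Fin n) (t : ℝ) : ℝ :=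
  qf1 ((x i + t) * Real.exp (-s)) * Real.exp (-s)

lemma phix_eq {n : ℕ} (x : EuclideanSpace ℝ (Fin n)) (s : ℝ) (i : Fin n) (t : ℝ) :
    phi (x + t • EuclideanSpace.single i (1 : ℝ)) s
      = qf ((x i + t) * Real.exp (-s)) + (qf s + ∑ j ∈ Finset.univ.erase i, qf (x j * Real.exp (-s))) := by
  unfold phi
  rw [← Finset.add_sum_erase _ _ (Finset.mem_univ i)]
  have : ∑ j ∈ Finset.univ.erase i,
      qf ((x + t • EuclideanSpace.single i (1 : ℝ)) j * Real.exp (-s))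
      = ∑ j ∈ Finset.univ.erase i, qf (x j * Real.exp (-s)) := by
    refine Finset.sum_congr rfl fun j hj => ?_
    have := Finset.ne_of_mem_erase hj
    simp [this]
  rw [this]
  simp
  ring

lemma phix_hd {n : ℕ} (x : EuclideanSpace ℝ (Fin n)) (s : ℝ) (i : Fin n) (t : ℝ) :
    HasDerivAt (fun t : ℝ => phi (x + t • EuclideanSpace.single i (1 : ℝ)) s) (phix1 x s i t) t := by
  simp_rw [phix_eq]
  have h0 : HasDerivAt (fun t : ℝ => (x i + t) * Real.exp (-s)) (Real.exp (-s)) t := by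
    simpa using ((hasDerivAt_id t).const_add (x i)).mul_const (Real.exp (-s))
  exact ((qf_hd _).comp t h0).add_const _

lemma phix1_hd {n : ℕ} (x : EuclideanSpace ℝ (Fin n)) (s : ℝ) (i : Fin n) :
    HasDerivAt (fun t : ℝ => phix1 x s i t)
      (qf2 (x i * Real.exp (-s)) * Real.exp (-s) * Real.exp (-s)) 0 := by
  have h0 : HasDerivAt (fun t : ℝ => (x i + t) * Real.exp (-s)) (Real.exp (-s)) 0 := by
    simpa using ((hasDerivAt_id (0:ℝ)).const_add (x i)).mul_const (Real.exp (-s))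
  have := ((qf1_hd _).comp (0:ℝ) h0).mul_const (Real.exp (-s))
  refine this.congr_deriv ?_
  simp

lemma second_test {f f' : ℝ → ℝ} {f'' t₀ : ℝ} (h1 : ∀ᶠ t in 𝓝 t₀, HasDerivAt f (f' t) t)
    (h2 : HasDerivAt f' f'' t₀) (hmax : IsLocalMax f t₀) : f' t₀ = 0 ∧ f'' ≤ 0 := by
  have h0 : f' t₀ = 0 := by
    rw [← h1.self_of_nhds.deriv]; exact hmax.deriv_eq_zero
  refine ⟨h0, ?_⟩
  by_contra! hpos
  have he : deriv f =ᶠ[𝓝 t₀] f' := h1.mono fun t ht => ht.deriv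
  have hdd : deriv (deriv f) t₀ = f'' := by rw [he.deriv_eq]; exact h2.deriv
  have hmin := isLocalMin_of_deriv_deriv_pos (f := f) (x₀ := t₀) (by rw [hdd]; exact hpos)
    (by rw [h1.self_of_nhds.deriv, h0]) h1.self_of_nhds.continuousAt
  have hc : f =ᶠ[𝓝 t₀] fun _ => f t₀ := by
    filter_upwards [hmin, hmax] with t ha hb using le_antisymm hb ha
  have hc1 := hc.deriv.deriv_eq
  rw [hdd] at hc1
  simp at hc1
  linarith

lemma slice_test {f₁ f₂ g g' : ℝ → ℝ} {g'' t₀ : ℝ} (hf₁ : ContDiff ℝ 2 f₁) (hf₂ : ContDiff ℝ 2 f₂)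
    (hg : ∀ᶠ t in 𝓝 t₀, HasDerivAt g (g' t) t) (hg' : HasDerivAt g' g'' t₀)
    (hmax : ∀ᶠ t in 𝓝 t₀, f₁ t - f₂ t - g t ≤ f₁ t₀ - f₂ t₀ - g t₀) :
    deriv f₁ t₀ - deriv f₂ t₀ = g' t₀ ∧
    deriv (deriv f₁) t₀ - deriv (deriv f₂) t₀ ≤ g'' := by
  have d1 : ∀ {f : ℝ → ℝ}, ContDiff ℝ 2 f → ∀ t, HasDerivAt f (deriv f t) t := fun h t =>
    ((h.differentiable (by norm_num)) t).hasDerivAt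
  have d2 : ∀ {f : ℝ → ℝ}, ContDiff ℝ 2 f → ∀ t, HasDerivAt (deriv f) (deriv (deriv f) t) t :=
    fun h t => by
      have := (contDiff_succ_iff_deriv (n := 1).1 (by simpa [one_add_one_eq_two] using h)).2.2
      exact ((this.differentiable (by norm_num)) t).hasDerivAt
  have := second_test (f := fun t => f₁ t - f₂ t - g t)
    (f' := fun t => deriv f₁ t - deriv f₂ t - g' t)
    (f'' := deriv (deriv f₁) t₀ - deriv (deriv f₂) t₀ - g'') (t₀ := t₀)
    (hg.mono fun t ht => ((d1 hf₁ t).sub (d1 hf₂ t)).sub ht)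
    (((d2 hf₁ t₀).sub (d2 hf₂ t₀)).sub hg') hmax
  constructor <;> linarith [this.1, this.2]


noncomputable def ePart {n : ℕ} (γ : ℝ) (g : EuclideanSpace ℝ (Fin n) → ℝ → ℝ)
    (x : EuclideanSpace ℝ (Fin n)) (s : ℝ) : ℝ :=
  Real.exp (2 * s) * ∑ i : Fin n,
      deriv (deriv (fun t : ℝ => g (x + t • EuclideanSpace.single i (1:ℝ)) s)) 0
    + deriv (deriv (g x)) s + 2 * γ * deriv (g x) s

lemma expfac (s q : ℝ) : Real.exp (2 * s) * (q * Real.exp (-s) * Real.exp (-s)) = q := by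
  have : Real.exp (2 * s) * (q * Real.exp (-s) * Real.exp (-s))
      = q * (Real.exp (2 * s) * Real.exp (-s) * Real.exp (-s)) := by ring
  rw [this, ← Real.exp_add, ← Real.exp_add]
  ring_nf; simp

lemma cd_x {n : ℕ} {g : EuclideanSpace ℝ (Fin n) → ℝ → ℝ}
    (hg : ContDiff ℝ 2 (fun p : EuclideanSpace ℝ (Fin n) × ℝ => g p.1 p.2))
    (x v : EuclideanSpace ℝ (Fin n)) (s : ℝ) : ContDiff ℝ 2 (fun t : ℝ => g (x + t • v) s) :=
  hg.comp (g := fun p : EuclideanSpace ℝ (Fin n) × ℝ => g p.1 p.2)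
    (f := fun t : ℝ => (x + t • v, s)) (by fun_prop)

lemma cd_s {n : ℕ} {g : EuclideanSpace ℝ (Fin n) → ℝ → ℝ}
    (hg : ContDiff ℝ 2 (fun p : EuclideanSpace ℝ (Fin n) × ℝ => g p.1 p.2))
    (x : EuclideanSpace ℝ (Fin n)) : ContDiff ℝ 2 (g x) :=
  hg.comp (g := fun p : EuclideanSpace ℝ (Fin n) × ℝ => g p.1 p.2)
    (f := fun t : ℝ => (x, t)) (by fun_prop)

lemma factor2 {n : ℕ} {γ δ : ℝ} (hγ : 0 ≤ γ) (hδ : 0 ≤ δ)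
    {g₁ g₂ : EuclideanSpace ℝ (Fin n) → ℝ → ℝ}
    (h₁ : ContDiff ℝ 2 (fun p : EuclideanSpace ℝ (Fin n) × ℝ => g₁ p.1 p.2))
    (h₂ : ContDiff ℝ 2 (fun p : EuclideanSpace ℝ (Fin n) × ℝ => g₂ p.1 p.2))
    (x : EuclideanSpace ℝ (Fin n)) (s : ℝ)
    (hmax : ∀ x' s', g₁ x' s' - g₂ x' s' - δ * phi x' s' ≤ g₁ x s - g₂ x s - δ * phi x s) :
    ePart γ g₁ x s - ePart γ g₂ x s ≤ δ * (3 * n + 2 + 2 * γ) := by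
  have hs := slice_test (t₀ := s) (cd_s h₁ x) (cd_s h₂ x) (g := fun t => δ * phi x t)
    (g' := fun t => δ * phis1 x t) (g'' := δ * phis2 x s)
    (Filter.Eventually.of_forall fun t => (phis_hd x t).const_mul δ)
    ((phis1_hd x s).const_mul δ) (Filter.Eventually.of_forall fun t => hmax x t)
  have hx : ∀ i, deriv (deriv (fun t : ℝ => g₁ (x + t • EuclideanSpace.single i (1:ℝ)) s)) 0
      - deriv (deriv (fun t : ℝ => g₂ (x + t • EuclideanSpace.single i (1:ℝ)) s)) 0
      ≤ δ * (qf2 (x i * Real.exp (-s)) * Real.exp (-s) * Real.exp (-s)) := by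
    intro i
    refine (slice_test (t₀ := 0) (cd_x h₁ x _ s) (cd_x h₂ x _ s)
      (g := fun t => δ * phi (x + t • EuclideanSpace.single i (1:ℝ)) s)
      (g' := fun t => δ * phix1 x s i t)
      (Filter.Eventually.of_forall fun t => (phix_hd x s i t).const_mul δ)
      ((phix1_hd x s i).const_mul δ) (Filter.Eventually.of_forall fun t => ?_)).2
    simpa using hmax (x + t • EuclideanSpace.single i (1:ℝ)) s
  have hsum : Real.exp (2 * s) * ∑ i : Fin n,
      deriv (deriv (fun t : ℝ => g₁ (x + t • EuclideanSpace.single i (1:ℝ)) s)) 0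
      - Real.exp (2 * s) * ∑ i : Fin n,
      deriv (deriv (fun t : ℝ => g₂ (x + t • EuclideanSpace.single i (1:ℝ)) s)) 0
      ≤ δ * (2 * n) := by
    rw [← mul_sub, ← Finset.sum_sub_distrib, Finset.mul_sum]
    calc _ ≤ ∑ i : Fin n, δ * 2 := by
          refine Finset.sum_le_sum fun i _ => ?_
          refine (mul_le_mul_of_nonneg_left (hx i) (Real.exp_pos _).le).trans ?_
          rw [mul_left_comm, expfac]
          exact mul_le_mul_of_nonneg_left (qf2_le _) hδ
      _ = δ * (2 * n) := by simp; ring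
  have e1 := mul_le_mul_of_nonneg_left (phis2_le x s) hδ
  have e2 := mul_le_mul_of_nonneg_left (phis1_le x s) hδ
  have e3 : 2 * γ * (deriv (g₁ x) s - deriv (g₂ x) s) ≤ 2 * γ * δ := by
    rw [hs.1]
    refine mul_le_mul_of_nonneg_left ?_ (by linarith)
    linarith
  have := hs.2
  unfold ePart
  nlinarith

/-- reflection does not change the second derivative -/
lemma dd_neg (f : ℝ → ℝ) : deriv (deriv (fun t => f (-t))) 0 = deriv (deriv f) 0 := by
  have : deriv (fun t => f (-t)) = fun t => - deriv f (-t) := by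
    ext t; exact deriv_comp_neg f t
  rw [this]
  simp [deriv_comp_neg (deriv f)]

lemma factor1 {n : ℕ} {γ δ A β c : ℝ} (hγ : 0 ≤ γ) (hδ : 0 ≤ δ) (hA : 0 ≤ A)
    (hβ : 0 < β) (hβ1 : β < 1) (hβγ : β < 2 * γ)
    (hc1 : c ≤ β * (1 - β)) (hc2 : c ≤ β * (2 * γ - β))
    {g : EuclideanSpace ℝ (Fin n) → ℝ → ℝ}
    (hg : ContDiff ℝ 2 (fun p : EuclideanSpace ℝ (Fin n) × ℝ => g p.1 p.2))
    (i : Fin n)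
    (x : EuclideanSpace ℝ (Fin n)) (s h : ℝ) (hh : 0 < h)
    (hmax : ∀ x' s' h', 0 ≤ h' →
      g (x' - h' • EuclideanSpace.single i (1:ℝ)) s' - g (x' + h' • EuclideanSpace.single i (1:ℝ)) s'
        - (A * (h' * Real.exp (-s')) ^ β + δ * phi x' s')
      ≤ g (x - h • EuclideanSpace.single i (1:ℝ)) s - g (x + h • EuclideanSpace.single i (1:ℝ)) s
        - (A * (h * Real.exp (-s)) ^ β + δ * phi x s)) :
    ePart γ g (x - h • EuclideanSpace.single i (1:ℝ)) s
      - ePart γ g (x + h • EuclideanSpace.single i (1:ℝ)) s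
      ≤ -(A * c) + δ * (3 * n + 2 + 2 * γ) := by
  set e : EuclideanSpace ℝ (Fin n) := EuclideanSpace.single i (1:ℝ) with he
  set xm := x - h • e with hxm
  set xp := x + h • e with hxp
  set ρ := h * Real.exp (-s) with hρ
  have hρpos : 0 < ρ := by positivity
  have hr1 : ∀ t, HasDerivAt (fun t : ℝ => (h * Real.exp (-t)) ^ β)
      (-β * (h * Real.exp (-t)) ^ β) t := by
    intro t
    have h0 : HasDerivAt (fun t : ℝ => h * Real.exp (-t)) (-(h * Real.exp (-t))) t := by
      have := ((hasDerivAt_neg t).exp).const_mul h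
      exact this.congr_deriv (by ring)
    have hp : 0 < h * Real.exp (-t) := by positivity
    refine (h0.rpow_const (p := β) (Or.inl hp.ne')).congr_deriv ?_
    rw [Real.rpow_sub_one hp.ne']
    field_simp
  have hs := slice_test (t₀ := s) (cd_s hg xm) (cd_s hg xp)
    (g := fun t => A * (h * Real.exp (-t)) ^ β + δ * phi x t)
    (g' := fun t => A * (-β * (h * Real.exp (-t)) ^ β) + δ * phis1 x t)
    (g'' := A * (-β * (-β * (h * Real.exp (-s)) ^ β)) + δ * phis2 x s)
    (Filter.Eventually.of_forall fun t => ((hr1 t).const_mul A).add ((phis_hd x t).const_mul δ))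
    ((((hr1 s).const_mul (-β)).const_mul A).add ((phis1_hd x s).const_mul δ))
    (Filter.Eventually.of_forall fun t => hmax x t h hh.le)
  have hx : ∀ j, j ≠ i →
      deriv (deriv (fun t : ℝ => g (xm + t • EuclideanSpace.single j (1:ℝ)) s)) 0
      - deriv (deriv (fun t : ℝ => g (xp + t • EuclideanSpace.single j (1:ℝ)) s)) 0
      ≤ δ * (qf2 (x j * Real.exp (-s)) * Real.exp (-s) * Real.exp (-s)) := by
    intro j _
    refine (slice_test (t₀ := 0) (cd_x hg xm _ s) (cd_x hg xp _ s)
      (g := fun t => δ * phi (x + t • EuclideanSpace.single j (1:ℝ)) s)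
      (g' := fun t => δ * phix1 x s j t)
      (Filter.Eventually.of_forall fun t => (phix_hd x s j t).const_mul δ)
      ((phix1_hd x s j).const_mul δ) (Filter.Eventually.of_forall fun t => ?_)).2
    have := hmax (x + t • EuclideanSpace.single j (1:ℝ)) s h hh.le
    have r1 : x + t • EuclideanSpace.single j (1:ℝ) - h • e
        = xm + t • EuclideanSpace.single j (1:ℝ) := by rw [hxm]; abel
    have r2 : x + t • EuclideanSpace.single j (1:ℝ) + h • e
        = xp + t • EuclideanSpace.single j (1:ℝ) := by rw [hxp]; abel
    rw [r1, r2] at this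
    simp only [zero_smul, add_zero]
    linarith
  have hi : deriv (deriv (fun t : ℝ => g (xm + t • e) s)) 0
      - deriv (deriv (fun t : ℝ => g (xp + t • e) s)) 0
      ≤ A * (β * (β - 1) * ρ ^ (β - 2) * Real.exp (-s) * Real.exp (-s)) := by
    rw [← dd_neg (fun t : ℝ => g (xm + t • e) s)]
    have hlin : ∀ t : ℝ, HasDerivAt (fun t : ℝ => (h + t) * Real.exp (-s)) (Real.exp (-s)) t := by
      intro t
      simpa using ((hasDerivAt_id t).const_add h).mul_const (Real.exp (-s))
    have hnear : ∀ᶠ t : ℝ in 𝓝 0, 0 < h + t := by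
      have : Filter.Tendsto (fun t : ℝ => h + t) (𝓝 0) (𝓝 (h + 0)) :=
        (continuous_const.add continuous_id).tendsto 0
      exact this.eventually (lt_mem_nhds (by simpa using hh))
    have hcm : ContDiff ℝ 2 (fun t : ℝ => g (xm + (-t) • e) s) := by
      have := cd_x hg xm (-e) s
      simpa using this
    refine (slice_test (t₀ := 0) hcm (cd_x hg xp e s)
      (g := fun t => A * ((h + t) * Real.exp (-s)) ^ β)
      (g' := fun t => A * (Real.exp (-s) * β * ((h + t) * Real.exp (-s)) ^ (β - 1)))
      ?_ ?_ ?_).2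
    · filter_upwards [hnear] with t ht
      have hp : 0 < (h + t) * Real.exp (-s) := by positivity
      exact ((hlin t).rpow_const (Or.inl hp.ne')).const_mul A
    · have hp : 0 < (h + 0) * Real.exp (-s) := by simpa using hρpos
      have := (((hlin 0).rpow_const (p := β - 1) (Or.inl hp.ne')).const_mul
        (Real.exp (-s) * β)).const_mul A
      refine this.congr_deriv ?_
      rw [add_zero, ← hρ, show β - 1 - 1 = β - 2 by ring]
      ring
    · filter_upwards [hnear] with t ht
      have := hmax x s (h + t) ht.le
      have r1 : x - (h + t) • e = xm + (-t) • e := by rw [hxm, add_smul, neg_smul]; abel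
      have r2 : x + (h + t) • e = xp + t • e := by rw [hxp, add_smul]; abel
      rw [r1, r2] at this
      simp only [neg_zero, zero_smul, add_zero]
      linarith
  have hsum : Real.exp (2 * s) * ∑ j : Fin n,
      deriv (deriv (fun t : ℝ => g (xm + t • EuclideanSpace.single j (1:ℝ)) s)) 0
      - Real.exp (2 * s) * ∑ j : Fin n,
      deriv (deriv (fun t : ℝ => g (xp + t • EuclideanSpace.single j (1:ℝ)) s)) 0
      ≤ A * (β * (β - 1) * ρ ^ (β - 2)) + δ * (2 * n) := by
    rw [← mul_sub, ← Finset.sum_sub_distrib, Finset.mul_sum]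
    rw [← Finset.add_sum_erase _ _ (Finset.mem_univ i)]
    have p1 := mul_le_mul_of_nonneg_left hi (Real.exp_pos (2 * s)).le
    rw [mul_left_comm, expfac] at p1
    have p2 : ∑ j ∈ Finset.univ.erase i, Real.exp (2 * s) *
        (deriv (deriv (fun t : ℝ => g (xm + t • EuclideanSpace.single j (1:ℝ)) s)) 0
      - deriv (deriv (fun t : ℝ => g (xp + t • EuclideanSpace.single j (1:ℝ)) s)) 0)
        ≤ δ * (2 * n) := by
      calc _ ≤ ∑ j ∈ Finset.univ.erase i, δ * 2 := by
            refine Finset.sum_le_sum fun j hj => ?_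
            refine (mul_le_mul_of_nonneg_left (hx j (Finset.ne_of_mem_erase hj))
              (Real.exp_pos _).le).trans ?_
            rw [mul_left_comm, expfac]
            exact mul_le_mul_of_nonneg_left (qf2_le _) hδ
        _ ≤ ∑ j : Fin n, δ * 2 :=
            Finset.sum_le_sum_of_subset_of_nonneg (Finset.erase_subset _ _)
              (fun _ _ _ => by positivity)
        _ = δ * (2 * n) := by simp; ring
    exact add_le_add p1 p2
  have e1 := mul_le_mul_of_nonneg_left (phis2_le x s) hδ
  have e2 := mul_le_mul_of_nonneg_left (phis1_le x s) hδ
  have e3 : 2 * γ * (deriv (g xm) s - deriv (g xp) s) ≤ 2 * γ * (A * (-β * ρ ^ β) + δ) := by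
    rw [hs.1]
    refine mul_le_mul_of_nonneg_left ?_ (by linarith)
    linarith
  have e4 := hs.2
  have key : c ≤ β * (1 - β) * ρ ^ (β - 2) + β * (2 * γ - β) * ρ ^ β := by
    have q1 : 0 ≤ ρ ^ (β - 2) := Real.rpow_nonneg hρpos.le _
    have q2 : 0 ≤ ρ ^ β := Real.rpow_nonneg hρpos.le _
    have b1 : 0 ≤ β * (1 - β) := by nlinarith
    have b2 : 0 ≤ β * (2 * γ - β) := by nlinarith
    rcases le_total ρ 1 with hle | hle
    · have : 1 ≤ ρ ^ (β - 2) := Real.one_le_rpow_of_pos_of_le_one_of_nonpos hρpos hle (by linarith)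
      nlinarith
    · have : 1 ≤ ρ ^ β := Real.one_le_rpow hle hβ.le
      nlinarith
  have key2 := mul_le_mul_of_nonneg_left key hA
  unfold ePart
  nlinarith


lemma exists_max_proper {Z : Type*} [NormedAddCommGroup Z] [ProperSpace Z] {S : Set Z}
    (hS : IsClosed S) {F : Z → ℝ} (hF : Continuous F) {z₀ : Z} (hz₀ : z₀ ∈ S) {R : ℝ}
    (hR : ∀ z ∈ S, F z₀ ≤ F z → ‖z‖ ≤ R) : ∃ z ∈ S, ∀ z' ∈ S, F z' ≤ F z := by
  have hc : IsCompact (S ∩ Metric.closedBall 0 R) :=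
    (isCompact_closedBall (0:Z) R).inter_left hS
  have hz₀' : z₀ ∈ S ∩ Metric.closedBall 0 R := ⟨hz₀, by simpa using hR z₀ hz₀ le_rfl⟩
  obtain ⟨z, hz, hm⟩ := hc.exists_isMaxOn ⟨z₀, hz₀'⟩ hF.continuousOn
  refine ⟨z, hz.1, fun z' hz' => ?_⟩
  by_cases h : F z₀ ≤ F z'
  · exact hm ⟨hz', by simpa using hR z' hz' h⟩
  · exact (not_le.1 h).le.trans (hm hz₀')

lemma xstep_le {n₁ n₂ : ℕ} {γ₁ γ₂ C : ℝ} (hγ₁ : 0 < γ₁) (hγ₂ : 0 ≤ γ₂)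
    {G : EuclideanSpace ℝ (Fin n₁) → ℝ → EuclideanSpace ℝ (Fin n₂) → ℝ → ℝ}
    (hG : ContDiff ℝ 2
      (fun p : (EuclideanSpace ℝ (Fin n₁) × ℝ) × (EuclideanSpace ℝ (Fin n₂) × ℝ) =>
        G p.1.1 p.1.2 p.2.1 p.2.2))
    (hC : ∀ x₁ s₁ x₂ s₂, |G x₁ s₁ x₂ s₂| ≤ C)
    (heq : ∀ x₁ s₁ x₂ s₂, ePart γ₁ (fun x s => G x s x₂ s₂) x₁ s₁
      + ePart γ₂ (G x₁ s₁) x₂ s₂ = 0)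
    (i : Fin n₁) (x₁ : EuclideanSpace ℝ (Fin n₁)) (s₁ : ℝ)
    (x₂ : EuclideanSpace ℝ (Fin n₂)) (s₂ h : ℝ) (hh : 0 ≤ h) :
    G (x₁ - h • EuclideanSpace.single i (1:ℝ)) s₁ x₂ s₂
      ≤ G (x₁ + h • EuclideanSpace.single i (1:ℝ)) s₁ x₂ s₂ := by
  by_contra! hlt
  set e : EuclideanSpace ℝ (Fin n₁) := EuclideanSpace.single i (1:ℝ) with he
  set w := G (x₁ - h • e) s₁ x₂ s₂ - G (x₁ + h • e) s₁ x₂ s₂ with hw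
  have hw0 : 0 < w := sub_pos.2 hlt
  obtain ⟨β, hβ, hβ1, hβγ⟩ : ∃ β : ℝ, 0 < β ∧ β < 1 ∧ β < 2 * γ₁ := by
    refine ⟨min (1/2) γ₁, lt_min (by norm_num) hγ₁, (min_le_left _ _).trans_lt (by norm_num),
      (min_le_right _ _).trans_lt (by linarith)⟩
  obtain ⟨c, hc, hc1, hc2⟩ : ∃ c : ℝ, 0 < c ∧ c ≤ β * (1 - β) ∧ c ≤ β * (2 * γ₁ - β) := by
    refine ⟨min (β * (1 - β)) (β * (2 * γ₁ - β)), lt_min ?_ ?_, min_le_left _ _, min_le_right _ _⟩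
    · exact mul_pos hβ (by linarith)
    · exact mul_pos hβ (by linarith)
  obtain ⟨A, hA, hA0⟩ : ∃ A : ℝ, 0 < A ∧ A * (h * Real.exp (-s₁)) ^ β ≤ w / 4 := by
    have hr : 0 ≤ (h * Real.exp (-s₁)) ^ β := Real.rpow_nonneg (by positivity) _
    refine ⟨w / 4 / ((h * Real.exp (-s₁)) ^ β + 1), by positivity, ?_⟩
    rw [div_mul_eq_mul_div, div_le_iff₀ (by positivity)]
    nlinarith
  set K : ℝ := (3 * n₁ + 2 + 2 * γ₁) + (3 * n₂ + 2 + 2 * γ₂) with hK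
  have hK0 : 0 < K := by positivity
  obtain ⟨δ, hδ, hδ1, hδ2⟩ : ∃ δ : ℝ, 0 < δ ∧ δ * (phi x₁ s₁ + phi x₂ s₂) ≤ w / 4 ∧
      δ * K < A * c := by
    have h1 := phi_nonneg x₁ s₁
    have h2 := phi_nonneg x₂ s₂
    refine ⟨min (w / 4 / (phi x₁ s₁ + phi x₂ s₂ + 1)) (A * c / 2 / K), lt_min (by positivity)
      (by positivity), ?_, ?_⟩
    · refine (mul_le_mul_of_nonneg_right (min_le_left _ _) (by positivity)).trans ?_
      rw [div_mul_eq_mul_div, div_le_iff₀ (by positivity)]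
      nlinarith
    · refine (mul_le_mul_of_nonneg_right (min_le_right _ _) hK0.le).trans_lt ?_
      rw [div_mul_cancel₀ _ hK0.ne']
      have := mul_pos hA hc
      linarith
  let F : ((EuclideanSpace ℝ (Fin n₁) × ℝ) × (EuclideanSpace ℝ (Fin n₂) × ℝ)) × ℝ → ℝ := fun z =>
    G (z.1.1.1 - z.2 • e) z.1.1.2 z.1.2.1 z.1.2.2 - G (z.1.1.1 + z.2 • e) z.1.1.2 z.1.2.1 z.1.2.2
      - (A * (z.2 * Real.exp (-z.1.1.2)) ^ β + δ * (phi z.1.1.1 z.1.1.2 + phi z.1.2.1 z.1.2.2))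
  have hFc : Continuous F := by
    have c1 : Continuous fun z : ((EuclideanSpace ℝ (Fin n₁) × ℝ) ×
        (EuclideanSpace ℝ (Fin n₂) × ℝ)) × ℝ =>
        G (z.1.1.1 - z.2 • e) z.1.1.2 z.1.2.1 z.1.2.2 :=
      hG.continuous.comp (f := fun z : ((EuclideanSpace ℝ (Fin n₁) × ℝ) ×
        (EuclideanSpace ℝ (Fin n₂) × ℝ)) × ℝ =>
        ((z.1.1.1 - z.2 • e, z.1.1.2), (z.1.2.1, z.1.2.2))) (by fun_prop)
    have c2 : Continuous fun z : ((EuclideanSpace ℝ (Fin n₁) × ℝ) ×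
        (EuclideanSpace ℝ (Fin n₂) × ℝ)) × ℝ =>
        G (z.1.1.1 + z.2 • e) z.1.1.2 z.1.2.1 z.1.2.2 :=
      hG.continuous.comp (f := fun z : ((EuclideanSpace ℝ (Fin n₁) × ℝ) ×
        (EuclideanSpace ℝ (Fin n₂) × ℝ)) × ℝ =>
        ((z.1.1.1 + z.2 • e, z.1.1.2), (z.1.2.1, z.1.2.2))) (by fun_prop)
    have c3 : Continuous fun z : ((EuclideanSpace ℝ (Fin n₁) × ℝ) ×
        (EuclideanSpace ℝ (Fin n₂) × ℝ)) × ℝ => (z.2 * Real.exp (-z.1.1.2)) ^ β :=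
      Continuous.rpow_const (by fun_prop) (fun _ => Or.inr hβ.le)
    have c4 : Continuous fun z : ((EuclideanSpace ℝ (Fin n₁) × ℝ) ×
        (EuclideanSpace ℝ (Fin n₂) × ℝ)) × ℝ => phi z.1.1.1 z.1.1.2 :=
      phi_cont.comp (continuous_fst.comp continuous_fst)
    have c5 : Continuous fun z : ((EuclideanSpace ℝ (Fin n₁) × ℝ) ×
        (EuclideanSpace ℝ (Fin n₂) × ℝ)) × ℝ => phi z.1.2.1 z.1.2.2 :=
      phi_cont.comp (continuous_snd.comp continuous_fst)
    exact (c1.sub c2).sub ((continuous_const.mul c3).add (continuous_const.mul (c4.add c5)))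
  have hF0 : 0 < F ((((x₁, s₁), (x₂, s₂)), h)) := by
    change 0 < w - (_ + _)
    linarith
  have hSc : IsClosed {z : ((EuclideanSpace ℝ (Fin n₁) × ℝ) ×
        (EuclideanSpace ℝ (Fin n₂) × ℝ)) × ℝ | 0 ≤ z.2} :=
    isClosed_le continuous_const continuous_snd
  set B := 2 * C / δ with hB
  set M := (2 * C / A) ^ (1 / β) * Real.exp (Real.exp B) with hM
  obtain ⟨z, hz, hzmax⟩ := exists_max_proper hSc hFc (z₀ := (((x₁, s₁), (x₂, s₂)), h)) hh
    (R := max (max (max (n₁ * (Real.exp B * Real.exp (Real.exp B))) (Real.exp B))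
      (max (n₂ * (Real.exp B * Real.exp (Real.exp B))) (Real.exp B))) M) (by
    rintro ⟨⟨⟨a₁, t₁⟩, ⟨a₂, t₂⟩⟩, k⟩ hk hle
    have hk : 0 ≤ k := hk
    have hpos : 0 < G (a₁ - k • e) t₁ a₂ t₂ - G (a₁ + k • e) t₁ a₂ t₂
        - (A * (k * Real.exp (-t₁)) ^ β + δ * (phi a₁ t₁ + phi a₂ t₂)) := hF0.trans_le hle
    have g1 := (abs_le.1 (hC (a₁ - k • e) t₁ a₂ t₂)).2
    have g2 := (abs_le.1 (hC (a₁ + k • e) t₁ a₂ t₂)).1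
    have f1 := phi_nonneg a₁ t₁
    have f2 := phi_nonneg a₂ t₂
    have r0 : 0 ≤ (k * Real.exp (-t₁)) ^ β := Real.rpow_nonneg (by positivity) _
    have m0 := mul_nonneg hA.le r0
    have m1 := mul_nonneg hδ.le f1
    have m2 := mul_nonneg hδ.le f2
    have b1 : phi a₁ t₁ ≤ B := by rw [hB, le_div_iff₀ hδ]; linarith
    have b2 : phi a₂ t₂ ≤ B := by rw [hB, le_div_iff₀ hδ]; linarith
    have b3 : (k * Real.exp (-t₁)) ^ β ≤ 2 * C / A := by rw [le_div_iff₀ hA]; linarith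
    have b4 : k ≤ M := by
      have h1 : k * Real.exp (-t₁) ≤ (2 * C / A) ^ (1 / β) := by
        have := Real.rpow_le_rpow r0 b3 (z := 1 / β) (by positivity)
        rwa [← Real.rpow_mul (by positivity), mul_one_div_cancel hβ.ne', Real.rpow_one] at this
      have h2 : k = k * Real.exp (-t₁) * Real.exp t₁ := by
        rw [mul_assoc, ← Real.exp_add]; simp
      rw [h2, hM]
      have h4 : Real.exp t₁ ≤ Real.exp (Real.exp B) :=
        Real.exp_le_exp.2 ((le_abs_self _).trans (phi_s_bound b1))
      have h5 : 0 ≤ k * Real.exp (-t₁) := by positivity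
      exact mul_le_mul h1 h4 (Real.exp_pos _).le (h5.trans h1)
    have d1 := phi_s_bound b1
    have d2 := phi_s_bound b2
    have d3 := phi_x_bound b1
    have d4 := phi_x_bound b2
    simp only [Prod.norm_mk, Real.norm_eq_abs]
    rw [abs_of_nonneg hk]
    gcongr)
  obtain ⟨⟨⟨a₁, t₁⟩, ⟨a₂, t₂⟩⟩, k⟩ := z
  have hk : 0 ≤ k := hz
  have hpos : 0 < G (a₁ - k • e) t₁ a₂ t₂ - G (a₁ + k • e) t₁ a₂ t₂
        - (A * (k * Real.exp (-t₁)) ^ β + δ * (phi a₁ t₁ + phi a₂ t₂)) :=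
    hF0.trans_le (hzmax _ hh)
  have hk0 : 0 < k := by
    rcases hk.eq_or_lt with h0 | h0
    · rw [← h0] at hpos
      simp [Real.zero_rpow hβ.ne'] at hpos
      have := mul_nonneg hδ.le (add_nonneg (phi_nonneg a₁ t₁) (phi_nonneg a₂ t₂))
      linarith
    · exact h0
  have hmax : ∀ a₁' t₁' a₂' t₂' k', 0 ≤ k' →
      G (a₁' - k' • e) t₁' a₂' t₂' - G (a₁' + k' • e) t₁' a₂' t₂'
        - (A * (k' * Real.exp (-t₁')) ^ β + δ * (phi a₁' t₁' + phi a₂' t₂'))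
      ≤ G (a₁ - k • e) t₁ a₂ t₂ - G (a₁ + k • e) t₁ a₂ t₂
        - (A * (k * Real.exp (-t₁)) ^ β + δ * (phi a₁ t₁ + phi a₂ t₂)) :=
    fun a₁' t₁' a₂' t₂' k' hk' => hzmax (((a₁', t₁'), (a₂', t₂')), k') hk'
  have hg1 : ContDiff ℝ 2 (fun p : EuclideanSpace ℝ (Fin n₁) × ℝ => G p.1 p.2 a₂ t₂) :=
    hG.comp (f := fun p : EuclideanSpace ℝ (Fin n₁) × ℝ => (p, (a₂, t₂))) (by fun_prop)
  have hg2 : ∀ x s, ContDiff ℝ 2 (fun p : EuclideanSpace ℝ (Fin n₂) × ℝ => G x s p.1 p.2) :=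
    fun x s => hG.comp (f := fun p : EuclideanSpace ℝ (Fin n₂) × ℝ => ((x, s), p)) (by fun_prop)
  have R1 := factor1 (g := fun x s => G x s a₂ t₂) hγ₁.le hδ.le hA.le hβ hβ1 hβγ hc1 hc2 hg1 i a₁ t₁ k hk0
    (fun x' s' h' hh' => by
      have := hmax x' s' a₂ t₂ h' hh'
      linarith)
  have R2 := factor2 hγ₂ hδ.le (hg2 (a₁ - k • e) t₁) (hg2 (a₁ + k • e) t₁) a₂ t₂
    (fun x' s' => by
      have := hmax a₁ t₁ x' s' k hk
      linarith)
  have E1 := heq (a₁ - k • e) t₁ a₂ t₂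
  have E2 := heq (a₁ + k • e) t₁ a₂ t₂
  rw [hK] at hδ2
  linarith

lemma ePart_neg {n : ℕ} (γ : ℝ) (g : EuclideanSpace ℝ (Fin n) → ℝ → ℝ)
    (x : EuclideanSpace ℝ (Fin n)) (s : ℝ) :
    ePart γ (fun x s => - g x s) x s = - ePart γ g x s := by
  have h : ∀ f : ℝ → ℝ, deriv (fun t => - f t) = fun t => - deriv f t := by
    intro f; ext t; exact deriv.fun_neg
  unfold ePart
  simp only [h, Finset.sum_neg_distrib]
  ring

lemma xstep {n₁ n₂ : ℕ} {γ₁ γ₂ C : ℝ} (hγ₁ : 0 < γ₁) (hγ₂ : 0 ≤ γ₂)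
    {G : EuclideanSpace ℝ (Fin n₁) → ℝ → EuclideanSpace ℝ (Fin n₂) → ℝ → ℝ}
    (hG : ContDiff ℝ 2
      (fun p : (EuclideanSpace ℝ (Fin n₁) × ℝ) × (EuclideanSpace ℝ (Fin n₂) × ℝ) =>
        G p.1.1 p.1.2 p.2.1 p.2.2))
    (hC : ∀ x₁ s₁ x₂ s₂, |G x₁ s₁ x₂ s₂| ≤ C)
    (heq : ∀ x₁ s₁ x₂ s₂, ePart γ₁ (fun x s => G x s x₂ s₂) x₁ s₁
      + ePart γ₂ (G x₁ s₁) x₂ s₂ = 0)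
    (x₁ : EuclideanSpace ℝ (Fin n₁)) (s₁ : ℝ)
    (x₂ : EuclideanSpace ℝ (Fin n₂)) (s₂ : ℝ) :
    G x₁ s₁ x₂ s₂ = G 0 s₁ x₂ s₂ := by
  have h1 : ∀ (i : Fin n₁) (x : EuclideanSpace ℝ (Fin n₁)) (h : ℝ), 0 ≤ h →
      G (x - h • EuclideanSpace.single i (1:ℝ)) s₁ x₂ s₂
        = G (x + h • EuclideanSpace.single i (1:ℝ)) s₁ x₂ s₂ := by
    intro i x h hh
    refine le_antisymm (xstep_le hγ₁ hγ₂ hG hC heq i x s₁ x₂ s₂ h hh) ?_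
    have := xstep_le (G := fun x₁ s₁ x₂ s₂ => - G x₁ s₁ x₂ s₂) hγ₁ hγ₂ hG.neg
      (fun x₁ s₁ x₂ s₂ => by rw [abs_neg]; exact hC x₁ s₁ x₂ s₂)
      (fun x₁ s₁ x₂ s₂ => by
        rw [ePart_neg γ₁ (fun x s => G x s x₂ s₂), ePart_neg γ₂ (G x₁ s₁)]
        linarith [heq x₁ s₁ x₂ s₂]) i x s₁ x₂ s₂ h hh
    exact neg_le_neg_iff.1 this
  have h2 : ∀ (i : Fin n₁) (x : EuclideanSpace ℝ (Fin n₁)) (t : ℝ), 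
      G (x + t • EuclideanSpace.single i (1:ℝ)) s₁ x₂ s₂ = G x s₁ x₂ s₂ := by
    intro i x t
    have key : ∀ (x : EuclideanSpace ℝ (Fin n₁)) (t : ℝ), 0 ≤ t →
        G (x + t • EuclideanSpace.single i (1:ℝ)) s₁ x₂ s₂ = G x s₁ x₂ s₂ := by
      intro x t ht
      have := h1 i (x + (t/2) • EuclideanSpace.single i (1:ℝ)) (t/2) (by linarith)
      rw [add_sub_cancel_right, add_assoc, ← add_smul, add_halves] at this
      exact this.symm
    rcases le_total 0 t with ht | ht
    · exact key x t ht
    · have := key (x + t • EuclideanSpace.single i (1:ℝ)) (-t) (by linarith)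
      rw [add_assoc, ← add_smul, add_neg_cancel, zero_smul, add_zero] at this
      exact this.symm
  have h3 : ∀ S : Finset (Fin n₁),
      G (∑ j ∈ S, x₁ j • EuclideanSpace.single j (1 : ℝ)) s₁ x₂ s₂ = G 0 s₁ x₂ s₂ := by
    intro S
    induction S using Finset.induction_on with
    | empty => simp
    | insert a S ha ih => rw [Finset.sum_insert ha, add_comm, h2, ih]
  have hx : x₁ = ∑ j, x₁ j • EuclideanSpace.single j (1 : ℝ) := by
    ext k
    simp [Finset.sum_apply, Pi.single_apply]
  conv_lhs => rw [hx]
  exact h3 _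

lemma ystep_le {γ₁ γ₂ C : ℝ} (hγ₁ : 0 ≤ γ₁) (hγ₂ : 0 ≤ γ₂) {g : ℝ → ℝ → ℝ}
    (hg : ContDiff ℝ 2 (fun p : ℝ × ℝ => g p.1 p.2)) (hC : ∀ a b, |g a b| ≤ C)
    (heq : ∀ a b, deriv (deriv (fun t => g t b)) a + 2 * γ₁ * deriv (fun t => g t b) a
      + (deriv (deriv (g a)) b + 2 * γ₂ * deriv (g a) b) = 0)
    (a b h : ℝ) (hh : 0 ≤ h) : g (a - h) b ≤ g (a + h) b := by
  by_contra! hlt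
  set w := g (a - h) b - g (a + h) b with hw
  have hw0 : 0 < w := sub_pos.2 hlt
  have hl0 : ∀ k : ℝ, 0 ≤ k → 0 ≤ Real.log (1 + k) := fun k hk => Real.log_nonneg (by linarith)
  obtain ⟨A, hA, hA0⟩ : ∃ A : ℝ, 0 < A ∧ A * Real.log (1 + h) ≤ w / 4 := by
    have := hl0 h hh
    refine ⟨w / 4 / (Real.log (1 + h) + 1), by positivity, ?_⟩
    rw [div_mul_eq_mul_div, div_le_iff₀ (by positivity)]
    nlinarith
  set c := (Real.exp (2 * C / A) ^ 2)⁻¹ with hc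
  have hc0 : 0 < c := by positivity
  set K : ℝ := 2 * γ₁ + (2 + 2 * γ₂) with hK
  have hK0 : 0 < K := by positivity
  obtain ⟨δ, hδ, hδ1, hδ2⟩ : ∃ δ : ℝ, 0 < δ ∧ δ * (qf a + qf b) ≤ w / 4 ∧ δ * K < A * c := by
    have h1 := qf_nonneg a
    have h2 := qf_nonneg b
    refine ⟨min (w / 4 / (qf a + qf b + 1)) (A * c / 2 / K), lt_min (by positivity)
      (by positivity), ?_, ?_⟩
    · refine (mul_le_mul_of_nonneg_right (min_le_left _ _) (by positivity)).trans ?_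
      rw [div_mul_eq_mul_div, div_le_iff₀ (by positivity)]
      nlinarith
    · refine (mul_le_mul_of_nonneg_right (min_le_right _ _) hK0.le).trans_lt ?_
      rw [div_mul_cancel₀ _ hK0.ne']
      have := mul_pos hA hc0
      linarith
  let F : (ℝ × ℝ) × ℝ → ℝ := fun z =>
    g (z.1.1 - z.2) z.1.2 - g (z.1.1 + z.2) z.1.2
      - (A * Real.log (1 + |z.2|) + δ * (qf z.1.1 + qf z.1.2))
  have hFc : Continuous F := by
    have c1 : Continuous fun z : (ℝ × ℝ) × ℝ => g (z.1.1 - z.2) z.1.2 :=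
      hg.continuous.comp (f := fun z : (ℝ × ℝ) × ℝ => (z.1.1 - z.2, z.1.2)) (by fun_prop)
    have c2 : Continuous fun z : (ℝ × ℝ) × ℝ => g (z.1.1 + z.2) z.1.2 :=
      hg.continuous.comp (f := fun z : (ℝ × ℝ) × ℝ => (z.1.1 + z.2, z.1.2)) (by fun_prop)
    have c3 : Continuous fun z : (ℝ × ℝ) × ℝ => Real.log (1 + |z.2|) :=
      Continuous.log (by fun_prop) (fun z => by positivity)
    have c4 : Continuous fun z : (ℝ × ℝ) × ℝ => qf z.1.1 :=
      qf_cont.comp (continuous_fst.comp continuous_fst)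
    have c5 : Continuous fun z : (ℝ × ℝ) × ℝ => qf z.1.2 :=
      qf_cont.comp (continuous_snd.comp continuous_fst)
    exact (c1.sub c2).sub ((continuous_const.mul c3).add (continuous_const.mul (c4.add c5)))
  have hF0 : 0 < F ((a, b), h) := by
    change 0 < w - (A * Real.log (1 + |h|) + _)
    rw [abs_of_nonneg hh]
    linarith
  have hSc : IsClosed {z : (ℝ × ℝ) × ℝ | 0 ≤ z.2} := isClosed_le continuous_const continuous_snd
  set B := 2 * C / δ with hB
  have facts : ∀ a' b' k, 0 ≤ k → F ((a, b), h) ≤ F ((a', b'), k) →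
      |a'| ≤ Real.exp B ∧ |b'| ≤ Real.exp B ∧ 1 + k ≤ Real.exp (2 * C / A) := by
    intro a' b' k hk hle
    have hpos : 0 < g (a' - k) b' - g (a' + k) b'
      - (A * Real.log (1 + |k|) + δ * (qf a' + qf b')) := hF0.trans_le hle
    rw [abs_of_nonneg hk] at hpos
    have g1 := (abs_le.1 (hC (a' - k) b')).2
    have g2 := (abs_le.1 (hC (a' + k) b')).1
    have m0 := mul_nonneg hA.le (hl0 k hk)
    have m1 := mul_nonneg hδ.le (qf_nonneg a')
    have m2 := mul_nonneg hδ.le (qf_nonneg b')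
    refine ⟨abs_le_of_qf ?_, abs_le_of_qf ?_, ?_⟩
    · rw [hB, le_div_iff₀ hδ]; linarith
    · rw [hB, le_div_iff₀ hδ]; linarith
    · have : Real.log (1 + k) ≤ 2 * C / A := by rw [le_div_iff₀ hA]; linarith
      have := Real.exp_le_exp.2 this
      rwa [Real.exp_log (by linarith)] at this
  obtain ⟨z, hz, hzmax⟩ := exists_max_proper hSc hFc (z₀ := ((a, b), h)) hh
    (R := max (max (Real.exp B) (Real.exp B)) (Real.exp (2 * C / A))) (by
    rintro ⟨⟨a', b'⟩, k⟩ hk hle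
    obtain ⟨d1, d2, d3⟩ := facts a' b' k hk hle
    simp only [Prod.norm_mk, Real.norm_eq_abs]
    have hk : 0 ≤ k := hk
    have d4 : |k| ≤ Real.exp (2 * C / A) := by rw [abs_of_nonneg hk]; linarith
    gcongr)
  obtain ⟨⟨a', b'⟩, k⟩ := z
  have hk : 0 ≤ k := hz
  have hle : F ((a, b), h) ≤ F ((a', b'), k) := hzmax _ hh
  have hkb := (facts a' b' k hk hle).2.2
  have hk0 : 0 < k := by
    rcases hk.eq_or_lt with h0 | h0
    · have hpos : 0 < g (a' - k) b' - g (a' + k) b'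
        - (A * Real.log (1 + |k|) + δ * (qf a' + qf b')) := hF0.trans_le hle
      rw [← h0] at hpos
      simp at hpos
      have := mul_nonneg hδ.le (add_nonneg (qf_nonneg a') (qf_nonneg b'))
      linarith
    · exact h0
  have hmax : ∀ a'' b'' k'', 0 ≤ k'' →
      g (a'' - k'') b'' - g (a'' + k'') b''
        - (A * Real.log (1 + k'') + δ * (qf a'' + qf b''))
      ≤ g (a' - k) b' - g (a' + k) b' - (A * Real.log (1 + k) + δ * (qf a' + qf b')) := by
    intro a'' b'' k'' hk''
    have := hzmax ((a'', b''), k'') hk''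
    simp only [F] at this
    rwa [abs_of_nonneg hk'', abs_of_nonneg hk] at this
  have cda : ∀ b, ContDiff ℝ 2 (fun t => g t b) := fun b =>
    hg.comp (f := fun t : ℝ => (t, b)) (by fun_prop)
  have cdb : ∀ a, ContDiff ℝ 2 (g a) := fun a =>
    hg.comp (f := fun t : ℝ => (a, t)) (by fun_prop)
  have S1 := slice_test (t₀ := b') (cdb (a' - k)) (cdb (a' + k)) (g := fun t => δ * qf t)
    (g' := fun t => δ * qf1 t)
    (Filter.Eventually.of_forall fun t => (qf_hd t).const_mul δ)
    ((qf1_hd b').const_mul δ) (Filter.Eventually.of_forall fun t => by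
      have := hmax a' t k hk
      linarith)
  have S2 := (slice_test (t₀ := a') (f₁ := fun t => g (t - k) b') (f₂ := fun t => g (t + k) b')
    ((cda b').comp (f := fun t : ℝ => t - k) (by fun_prop))
    ((cda b').comp (f := fun t : ℝ => t + k) (by fun_prop)) (g := fun t => δ * qf t)
    (g' := fun t => δ * qf1 t)
    (Filter.Eventually.of_forall fun t => (qf_hd t).const_mul δ)
    ((qf1_hd a').const_mul δ) (Filter.Eventually.of_forall fun t => by
      have := hmax t b' k hk
      linarith)).1
  rw [deriv_comp_sub_const (f := fun t => g t b'), deriv_comp_add_const (f := fun t => g t b')] at S2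
  have S3 := (slice_test (t₀ := k) (f₁ := fun t => g (a' - t) b') (f₂ := fun t => g (a' + t) b')
    ((cda b').comp (f := fun t : ℝ => a' - t) (by fun_prop))
    ((cda b').comp (f := fun t : ℝ => a' + t) (by fun_prop))
    (g := fun t => A * Real.log (1 + t)) (g' := fun t => A * (1 + t)⁻¹)
    (g'' := A * (-((1 + k) ^ 2)⁻¹))
    (by
      filter_upwards [lt_mem_nhds hk0] with t ht
      have : HasDerivAt (fun t : ℝ => 1 + t) 1 t := (hasDerivAt_id t).const_add 1
      refine ((this.log (by positivity)).const_mul A).congr_deriv (by rw [one_div]))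
    (by
      have : HasDerivAt (fun t : ℝ => 1 + t) 1 k := (hasDerivAt_id k).const_add 1
      refine ((this.fun_inv (by positivity)).const_mul A).congr_deriv (by ring))
    (by
      filter_upwards [lt_mem_nhds hk0] with t ht
      have := hmax a' b' t ht.le
      linarith)).2
  have D1 : deriv (deriv (fun t => g (a' - t) b')) k = deriv (deriv (fun t => g t b')) (a' - k) := by
    have : deriv (fun t => g (a' - t) b') = fun t => - deriv (fun t => g t b') (a' - t) := by
      ext t; exact deriv_comp_const_sub (f := fun t => g t b') a' t
    rw [this, deriv.fun_neg, deriv_comp_const_sub (f := deriv (fun t => g t b'))]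
    ring
  have D2 : deriv (deriv (fun t => g (a' + t) b')) k = deriv (deriv (fun t => g t b')) (a' + k) := by
    have : deriv (fun t => g (a' + t) b') = fun t => deriv (fun t => g t b') (a' + t) := by
      ext t; exact deriv_comp_const_add (f := fun t => g t b') a' t
    rw [this, deriv_comp_const_add (f := deriv (fun t => g t b'))]
  rw [D1, D2] at S3
  have E1 := heq (a' - k) b'
  have E2 := heq (a' + k) b'
  have hck : c ≤ ((1 + k) ^ 2)⁻¹ := by
    rw [hc]; gcongr
  have I1 := mul_le_mul_of_nonneg_left hck hA.le
  have I2 := mul_le_mul_of_nonneg_left (qf2_le b') hδ.le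
  have I3 : 2 * γ₂ * (deriv (g (a' - k)) b' - deriv (g (a' + k)) b') ≤ 2 * γ₂ * δ := by
    rw [S1.1]
    refine mul_le_mul_of_nonneg_left ?_ (by linarith)
    have := mul_le_mul_of_nonneg_left (qf1_le b') hδ.le
    linarith
  have I4 : 2 * γ₁ * (deriv (fun t => g t b') (a' - k) - deriv (fun t => g t b') (a' + k))
      ≤ 2 * γ₁ * δ := by
    rw [S2]
    refine mul_le_mul_of_nonneg_left ?_ (by linarith)
    have := mul_le_mul_of_nonneg_left (qf1_le a') hδ.le
    linarith
  have S12 := S1.2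
  rw [hK] at hδ2
  nlinarith

lemma ystep {γ₁ γ₂ C : ℝ} (hγ₁ : 0 ≤ γ₁) (hγ₂ : 0 ≤ γ₂) {g : ℝ → ℝ → ℝ}
    (hg : ContDiff ℝ 2 (fun p : ℝ × ℝ => g p.1 p.2)) (hC : ∀ a b, |g a b| ≤ C)
    (heq : ∀ a b, deriv (deriv (fun t => g t b)) a + 2 * γ₁ * deriv (fun t => g t b) a
      + (deriv (deriv (g a)) b + 2 * γ₂ * deriv (g a) b) = 0)
    (a b : ℝ) : g a b = g 0 b := by
  have hneg : ∀ f : ℝ → ℝ, deriv (fun t => - f t) = fun t => - deriv f t := by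
    intro f; ext t; exact deriv.fun_neg
  have key : ∀ m h, 0 ≤ h → g (m - h) b = g (m + h) b := by
    intro m h hh
    refine le_antisymm (ystep_le hγ₁ hγ₂ hg hC heq m b h hh) ?_
    have := ystep_le (g := fun a b => - g a b) hγ₁ hγ₂ hg.neg
      (fun a b => by rw [abs_neg]; exact hC a b)
      (fun a b => by simp only [hneg]; linarith [heq a b]) m b h hh
    exact neg_le_neg_iff.1 this
  rcases le_total 0 a with h | h
  · have := key (a/2) (a/2) (by linarith)
    rw [sub_self, add_halves] at this
    exact this.symm
  · have := key (a/2) (-(a/2)) (by linarith)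
    rw [sub_neg_eq_add, add_halves, add_neg_cancel] at this
    exact this


lemma conv_factor {n : ℕ} {γ μ a k : ℝ} (hγ : γ ^ 2 = (n:ℝ)^2/4 - μ) (ha : a = (n:ℝ)/2 + γ)
    (u : EuclideanSpace ℝ (Fin n) → ℝ → ℝ) (x : EuclideanSpace ℝ (Fin n)) (s : ℝ)
    (hu : ContDiffOn ℝ 2 (u x) (Set.Ioi 0)) :
    ePart γ (fun x s => k * Real.exp (-(a * s)) * u x (Real.exp s)) x s
      = k * Real.exp (-(a * s)) * (hypLap n u x (Real.exp s) + μ * u x (Real.exp s)) := by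
  have d1 : ∀ y : ℝ, 0 < y → HasDerivAt (u x) (deriv (u x) y) y := fun y hy =>
    ((hu.differentiableOn (by norm_num)).differentiableAt (Ioi_mem_nhds hy)).hasDerivAt
  have d2 : ∀ y : ℝ, 0 < y → HasDerivAt (deriv (u x)) (deriv (deriv (u x)) y) y := fun y hy => by
    have := ((contDiffOn_succ_iff_deriv_of_isOpen (n := 1) isOpen_Ioi).1
      (by simpa [one_add_one_eq_two] using hu)).2.2
    exact ((this.differentiableOn (by norm_num)).differentiableAt (Ioi_mem_nhds hy)).hasDerivAt
  have hE : ∀ t : ℝ, HasDerivAt (fun t : ℝ => k * Real.exp (-(a * t)))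
      (-a * (k * Real.exp (-(a * t)))) t := by
    intro t
    have := (((hasDerivAt_id t).const_mul a).neg.exp).const_mul k
    exact this.congr_deriv (by simp; ring)
  have hs1 : ∀ t : ℝ, HasDerivAt (fun t => k * Real.exp (-(a * t)) * u x (Real.exp t))
      (k * Real.exp (-(a * t)) * (-a * u x (Real.exp t) + Real.exp t * deriv (u x) (Real.exp t))) t := by
    intro t
    have h1 := (d1 _ (Real.exp_pos t)).comp t (Real.hasDerivAt_exp t)
    exact ((hE t).mul h1).congr_deriv (by simp only [Function.comp]; ring)
  have hs2 : HasDerivAt (fun t => k * Real.exp (-(a * t)) *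
      (-a * u x (Real.exp t) + Real.exp t * deriv (u x) (Real.exp t)))
      (k * Real.exp (-(a * s)) * (a ^ 2 * u x (Real.exp s)
        + (1 - 2 * a) * Real.exp s * deriv (u x) (Real.exp s)
        + Real.exp s ^ 2 * deriv (deriv (u x)) (Real.exp s))) s := by
    have h1 := (d1 _ (Real.exp_pos s)).comp s (Real.hasDerivAt_exp s)
    have h2 := (d2 _ (Real.exp_pos s)).comp s (Real.hasDerivAt_exp s)
    exact ((hE s).mul ((h1.const_mul (-a)).add ((Real.hasDerivAt_exp s).mul h2))).congr_deriv
      (by simp only [Function.comp, Pi.add_apply, Pi.mul_apply]; ring)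
  have hd : deriv (fun t => k * Real.exp (-(a * t)) * u x (Real.exp t)) = fun t =>
      k * Real.exp (-(a * t)) * (-a * u x (Real.exp t) + Real.exp t * deriv (u x) (Real.exp t)) :=
    funext fun t => (hs1 t).deriv
  have hm : ∀ (κ : ℝ) (f : ℝ → ℝ), deriv (fun t => κ * f t) = fun t => κ * deriv f t := by
    intro κ f; ext t; exact deriv_const_mul_field κ
  have hit : ∀ f : ℝ → ℝ, iteratedDeriv 2 f = deriv (deriv f) := by
    intro f; rw [iteratedDeriv_succ, iteratedDeriv_one]
  unfold ePart hypLap lapX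
  simp only [hit]
  rw [hd, hs2.deriv]
  simp only [hm]
  rw [← Finset.mul_sum]
  have e2 : Real.exp (2 * s) = Real.exp s ^ 2 := by rw [← Real.exp_nat_mul]; norm_num
  rw [e2]
  have hμ : μ = (n:ℝ)^2/4 - γ^2 := by linarith
  rw [hμ, ha]
  ring

lemma ePart_const {n : ℕ} (γ κ : ℝ) (x : EuclideanSpace ℝ (Fin n)) (s : ℝ) :
    ePart γ (fun _ _ => κ) x s = 0 := by
  unfold ePart; simp

/-- a positive weakly `μ`-harmonic C² function on `ℍ^{n₁+1} × ℍ^{n₂+1}`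
bounded by `C·y₁^{n₁/2+γ₁} y₂^{n₂/2+γ₂}` is strongly `(μ₁,μ₂)`-harmonic. -/
theorem weak_with_decay_is_strong
    (n₁ n₂ : ℕ) (hn₁ : 1 ≤ n₁) (hn₂ : 1 ≤ n₂)
    (μ₁ μ₂ γ₁ γ₂ μ : ℝ)
    (hμ₁ : μ₁ < (n₁ : ℝ)^2/4) (hμ₂ : μ₂ < (n₂ : ℝ)^2/4)
    (hγ₁ : γ₁ = Real.sqrt ((n₁ : ℝ)^2/4 - μ₁)) (hγ₂ : γ₂ = Real.sqrt ((n₂ : ℝ)^2/4 - μ₂))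
    (hμ : μ = μ₁ + μ₂)
    (u : EuclideanSpace ℝ (Fin n₁) → ℝ → EuclideanSpace ℝ (Fin n₂) → ℝ → ℝ)
    (hupos : ∀ x₁, ∀ y₁ : ℝ, 0 < y₁ → ∀ x₂, ∀ y₂ : ℝ, 0 < y₂ → 0 < u x₁ y₁ x₂ y₂)
    (huC2 : ContDiffOn ℝ 2
      (fun p : (EuclideanSpace ℝ (Fin n₁) × ℝ) × (EuclideanSpace ℝ (Fin n₂) × ℝ) =>
        u p.1.1 p.1.2 p.2.1 p.2.2)
      {p : (EuclideanSpace ℝ (Fin n₁) × ℝ) × (EuclideanSpace ℝ (Fin n₂) × ℝ) |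
        0 < p.1.2 ∧ 0 < p.2.2})
    (hweak : ∀ x₁, ∀ y₁ : ℝ, 0 < y₁ → ∀ x₂, ∀ y₂ : ℝ, 0 < y₂ →
      -(hypLap1 n₁ n₂ u x₁ y₁ x₂ y₂ + hypLap2 n₁ n₂ u x₁ y₁ x₂ y₂) = μ * u x₁ y₁ x₂ y₂)
    (hbound : ∃ C : ℝ, 0 < C ∧ ∀ x₁, ∀ y₁ : ℝ, 0 < y₁ → ∀ x₂, ∀ y₂ : ℝ, 0 < y₂ →
      u x₁ y₁ x₂ y₂ ≤ C * y₁ ^ ((n₁ : ℝ)/2 + γ₁) * y₂ ^ ((n₂ : ℝ)/2 + γ₂)) :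
    ∀ x₁, ∀ y₁ : ℝ, 0 < y₁ → ∀ x₂, ∀ y₂ : ℝ, 0 < y₂ →
      -(hypLap1 n₁ n₂ u x₁ y₁ x₂ y₂) = μ₁ * u x₁ y₁ x₂ y₂ ∧
      -(hypLap2 n₁ n₂ u x₁ y₁ x₂ y₂) = μ₂ * u x₁ y₁ x₂ y₂ := by
  obtain ⟨C, hC0, hC⟩ := hbound
  have g1 : 0 < γ₁ := by rw [hγ₁]; exact Real.sqrt_pos.2 (by linarith)
  have g2 : 0 < γ₂ := by rw [hγ₂]; exact Real.sqrt_pos.2 (by linarith)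
  have q1 : γ₁ ^ 2 = (n₁:ℝ)^2/4 - μ₁ := by rw [hγ₁]; exact Real.sq_sqrt (by linarith)
  have q2 : γ₂ ^ 2 = (n₂:ℝ)^2/4 - μ₂ := by rw [hγ₂]; exact Real.sq_sqrt (by linarith)
  obtain ⟨a₁, ha₁⟩ : ∃ a₁ : ℝ, a₁ = (n₁:ℝ)/2 + γ₁ := ⟨_, rfl⟩
  obtain ⟨a₂, ha₂⟩ : ∃ a₂ : ℝ, a₂ = (n₂:ℝ)/2 + γ₂ := ⟨_, rfl⟩
  rw [← ha₁, ← ha₂] at hC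
  let G : EuclideanSpace ℝ (Fin n₁) → ℝ → EuclideanSpace ℝ (Fin n₂) → ℝ → ℝ :=
    fun x₁ s₁ x₂ s₂ => Real.exp (-(a₁ * s₁)) * Real.exp (-(a₂ * s₂))
      * u x₁ (Real.exp s₁) x₂ (Real.exp s₂)
  have hGcd : ContDiff ℝ 2
      (fun p : (EuclideanSpace ℝ (Fin n₁) × ℝ) × (EuclideanSpace ℝ (Fin n₂) × ℝ) =>
        G p.1.1 p.1.2 p.2.1 p.2.2) := by
    have h1 := huC2.comp_contDiff
      (f := fun p : (EuclideanSpace ℝ (Fin n₁) × ℝ) × (EuclideanSpace ℝ (Fin n₂) × ℝ) =>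
        ((p.1.1, Real.exp p.1.2), (p.2.1, Real.exp p.2.2))) (by fun_prop)
      (fun p => ⟨Real.exp_pos _, Real.exp_pos _⟩)
    exact ContDiff.mul (by fun_prop) h1
  have hGb : ∀ x₁ s₁ x₂ s₂, |G x₁ s₁ x₂ s₂| ≤ C := by
    intro x₁ s₁ x₂ s₂
    have hp := hupos x₁ _ (Real.exp_pos s₁) x₂ _ (Real.exp_pos s₂)
    have hl := hC x₁ _ (Real.exp_pos s₁) x₂ _ (Real.exp_pos s₂)
    have hG0 : 0 < G x₁ s₁ x₂ s₂ := by positivity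
    rw [abs_of_pos hG0]
    rw [← Real.exp_mul, ← Real.exp_mul] at hl
    calc G x₁ s₁ x₂ s₂ ≤ Real.exp (-(a₁ * s₁)) * Real.exp (-(a₂ * s₂))
          * (C * Real.exp (s₁ * a₁) * Real.exp (s₂ * a₂)) :=
          mul_le_mul_of_nonneg_left hl (by positivity)
      _ = C * (Real.exp (-(a₁ * s₁)) * Real.exp (s₁ * a₁))
          * (Real.exp (-(a₂ * s₂)) * Real.exp (s₂ * a₂)) := by ring
      _ = C := by
          rw [← Real.exp_add, ← Real.exp_add]
          ring_nf; simp
  have P1 : ∀ x₁ s₁ x₂ s₂, ePart γ₁ (fun x s => G x s x₂ s₂) x₁ s₁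
      = Real.exp (-(a₂ * s₂)) * Real.exp (-(a₁ * s₁))
        * (hypLap1 n₁ n₂ u x₁ (Real.exp s₁) x₂ (Real.exp s₂)
          + μ₁ * u x₁ (Real.exp s₁) x₂ (Real.exp s₂)) := by
    intro x₁ s₁ x₂ s₂
    have := conv_factor (k := Real.exp (-(a₂ * s₂))) q1 ha₁
      (fun x y => u x y x₂ (Real.exp s₂)) x₁ s₁
      (huC2.comp (f := fun y : ℝ => ((x₁, y), (x₂, Real.exp s₂))) (by fun_prop)
        (fun y hy => ⟨hy, Real.exp_pos _⟩))
    rw [hypLap1, ← this]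
    congr 1
    ext x s
    simp only [G]; ring
  have P2 : ∀ x₁ s₁ x₂ s₂, ePart γ₂ (G x₁ s₁) x₂ s₂
      = Real.exp (-(a₁ * s₁)) * Real.exp (-(a₂ * s₂))
        * (hypLap2 n₁ n₂ u x₁ (Real.exp s₁) x₂ (Real.exp s₂)
          + μ₂ * u x₁ (Real.exp s₁) x₂ (Real.exp s₂)) := by
    intro x₁ s₁ x₂ s₂
    exact conv_factor (k := Real.exp (-(a₁ * s₁))) q2 ha₂
      (u x₁ (Real.exp s₁)) x₂ s₂
      (huC2.comp (f := fun y : ℝ => ((x₁, Real.exp s₁), (x₂, y))) (by fun_prop)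
        (fun y hy => ⟨Real.exp_pos _, hy⟩))
  have heq : ∀ x₁ s₁ x₂ s₂, ePart γ₁ (fun x s => G x s x₂ s₂) x₁ s₁
      + ePart γ₂ (G x₁ s₁) x₂ s₂ = 0 := by
    intro x₁ s₁ x₂ s₂
    rw [P1, P2]
    have := hweak x₁ _ (Real.exp_pos s₁) x₂ _ (Real.exp_pos s₂)
    rw [hμ] at this
    linear_combination -(Real.exp (-(a₁ * s₁)) * Real.exp (-(a₂ * s₂))) * this
  have X1 := xstep g1 g2.le hGcd hGb heq
  have X2 := xstep (G := fun x₂ s₂ x₁ s₁ => G x₁ s₁ x₂ s₂) g2 g1.le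
    (hGcd.comp (f := fun p : (EuclideanSpace ℝ (Fin n₂) × ℝ) × (EuclideanSpace ℝ (Fin n₁) × ℝ) =>
      (p.2, p.1)) (by fun_prop))
    (fun x₂ s₂ x₁ s₁ => hGb x₁ s₁ x₂ s₂)
    (fun x₂ s₂ x₁ s₁ => by
      have := heq x₁ s₁ x₂ s₂
      rw [add_comm] at this
      exact this)
  have X3 : ∀ x₁ s₁ x₂ s₂, G x₁ s₁ x₂ s₂ = G 0 s₁ 0 s₂ := by
    intro x₁ s₁ x₂ s₂
    rw [X1 x₁ s₁ x₂ s₂]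
    exact X2 x₂ s₂ 0 s₁
  obtain ⟨g, hg⟩ : ∃ g : ℝ → ℝ → ℝ, g = fun s₁ s₂ => G 0 s₁ 0 s₂ := ⟨_, rfl⟩
  have X4 : G = fun _ s₁ _ s₂ => g s₁ s₂ := by
    ext x₁ s₁ x₂ s₂
    rw [X3, hg]
  have hgcd : ContDiff ℝ 2 (fun p : ℝ × ℝ => g p.1 p.2) := by
    rw [hg]
    exact hGcd.comp (f := fun p : ℝ × ℝ =>
      (((0 : EuclideanSpace ℝ (Fin n₁)), p.1), ((0 : EuclideanSpace ℝ (Fin n₂)), p.2)))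
      (by fun_prop)
  have hgb : ∀ a b, |g a b| ≤ C := by
    intro a b
    rw [hg]; exact hGb 0 a 0 b
  have hgeq : ∀ a b, deriv (deriv (fun t => g t b)) a + 2 * γ₁ * deriv (fun t => g t b) a
      + (deriv (deriv (g a)) b + 2 * γ₂ * deriv (g a) b) = 0 := by
    intro a b
    have := heq 0 a 0 b
    rw [X4] at this
    simpa [ePart] using this
  have Y1 := ystep g1.le g2.le hgcd hgb hgeq
  have Y2 := ystep (g := fun b a => g a b) g2.le g1.le
    (hgcd.comp (f := fun p : ℝ × ℝ => (p.2, p.1)) (by fun_prop))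
    (fun b a => hgb a b) (fun b a => by
      have := hgeq a b
      rw [add_comm] at this
      exact this)
  have X5 : G = fun _ _ _ _ => g 0 0 := by
    rw [X4]
    ext x₁ s₁ x₂ s₂
    rw [Y1 s₁ s₂]
    exact Y2 s₂ 0
  intro x₁ y₁ hy₁ x₂ y₂ hy₂
  have Q1 := P1 x₁ (Real.log y₁) x₂ (Real.log y₂)
  have Q2 := P2 x₁ (Real.log y₁) x₂ (Real.log y₂)
  rw [X5, ePart_const, Real.exp_log hy₁, Real.exp_log hy₂] at Q1 Q2
  have R1 := (mul_eq_zero.1 Q1.symm).resolve_left (by positivity)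
  have R2 := (mul_eq_zero.1 Q2.symm).resolve_left (by positivity)
  constructor <;> linarith
end

section
/- Let n₁, n₂ ≥ 1 be integers, γ₁ ∈ (0, n₁/2) and γ₂ ∈ (0, n₂/2) with γ₁, γ₂ not integers, and μᵢ = nᵢ²/4 − γᵢ². Let f be a smooth compactly supported function on ℝ^{n₁}×ℝ^{n₂}. Then there exist functions F, G, H, I : ℝ^{n₁}×[0,∞)×ℝ^{n₂}×[0,∞) → ℝ, smooth up to the boundary, with F(x₁,0,x₂,0) = f(x₁,x₂) for all (x₁,x₂), such that the function u = y₁^{n₁/2−γ₁}y₂^{n₂/2−γ₂} F + y₁^{n₁/2−γ₁}y₂^{n₂/2+γ₂} G + y₁^{n₁/2+γ₁}y₂^{n₂/2−γ₂} H + y₁^{n₁/2+γ₁}y₂^{n₂/2+γ₂} I is strongly (μ₁,μ₂)-harmonic, i.e. satisfies both −Δ₁u = μ₁u and −Δ₂u = μ₂u on ℝ^{n₁}×(0,∞)×ℝ^{n₂}×(0,∞). -/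
open Real Topology

/-- coefficients of an entire power series -/
def EntCoef (a : ℕ → ℝ) : Prop := ∀ R : ℝ, 0 < R → Summable (fun k => |a k| * R ^ k)

/-- termwise derivative of a coefficient sequence -/
def dCoef (a : ℕ → ℝ) : ℕ → ℝ := fun k => ((k : ℝ) + 1) * a (k + 1)

/-- the sum of the power series -/
noncomputable def pSum (a : ℕ → ℝ) (w : ℝ) : ℝ := ∑' k, a k * w ^ k

lemma EntCoef.deriv {a : ℕ → ℝ} (ha : EntCoef a) : EntCoef (dCoef a) := by
  intro R hR
  have h1 := (ha (2 * R) (by positivity))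
  have h2 := ((summable_nat_add_iff 1).2 h1).mul_left (1 / R)
  refine Summable.of_nonneg_of_le (fun k => by positivity) (fun k => ?_) h2
  unfold dCoef
  rw [abs_mul, abs_of_nonneg (by positivity : (0:ℝ) ≤ (k:ℝ) + 1), mul_pow]
  have h3 : ((k:ℝ) + 1) ≤ 2 ^ (k + 1) := by
    have := (Nat.lt_two_pow_self (n := k + 1)).le
    exact_mod_cast this
  have h4 : 1 / R * (|a (k + 1)| * (2 ^ (k + 1) * R ^ (k + 1))) =
      2 ^ (k + 1) * |a (k+1)| * R ^ k := by
    field_simp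
    ring
  rw [h4]
  gcongr

lemma EntCoef.summable {a : ℕ → ℝ} (ha : EntCoef a) (w : ℝ) : Summable (fun k => a k * w ^ k) := by
  have h := ha (|w| + 1) (by positivity)
  refine Summable.of_norm_bounded h (fun k => ?_)
  rw [norm_mul, norm_pow, Real.norm_eq_abs, Real.norm_eq_abs]
  gcongr
  linarith

lemma EntCoef.hasDerivAt {a : ℕ → ℝ} (ha : EntCoef a) (w : ℝ) :
    HasDerivAt (pSum a) (pSum (dCoef a) w) w := by
  have hd := ha.deriv
  set R := |w| + 1 with hR
  have hRpos : 0 < R := by positivity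
  have hu : Summable (fun k : ℕ => |(k : ℝ) * a k| * R ^ (k - 1)) := by
    rw [← summable_nat_add_iff 1]
    refine (hd R hRpos).congr (fun k => ?_)
    simp [dCoef]
  have key := hasDerivAt_tsum_of_isPreconnected (𝕜 := ℝ) (F := ℝ)
    (g := fun k z => a k * z ^ k) (g' := fun k z => (k : ℝ) * a k * z ^ (k - 1))
    (t := Metric.ball 0 R) (y₀ := 0) (y := w) hu Metric.isOpen_ball
    (convex_ball _ _).isPreconnected
    (fun k y _ => by
      have := (hasDerivAt_pow k y).const_mul (a k)
      rw [show (k : ℝ) * a k * y ^ (k - 1) = a k * ((k : ℝ) * y ^ (k - 1)) by ring]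
      exact this)
    (fun k y hy => by
      rw [mem_ball_zero_iff] at hy
      rw [norm_mul, norm_pow, Real.norm_eq_abs]
      gcongr)
    (by simpa using hRpos) (ha.summable 0) (by simp [hR])
  have e : ∑' k : ℕ, (k : ℝ) * a k * w ^ (k - 1) = pSum (dCoef a) w := by
    have hs : Summable (fun k : ℕ => (k : ℝ) * a k * w ^ (k - 1)) := by
      rw [← summable_nat_add_iff 1]
      refine (hd.summable w).congr (fun k => ?_)
      simp [dCoef]
    rw [hs.tsum_eq_zero_add]
    simp [pSum, dCoef]
  rw [e] at key
  exact key

lemma EntCoef.deriv_eq {a : ℕ → ℝ} (ha : EntCoef a) : _root_.deriv (pSum a) = pSum (dCoef a) :=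
  funext fun w => (ha.hasDerivAt w).deriv

lemma EntCoef.contDiff_nat (n : ℕ) : ∀ {a : ℕ → ℝ}, EntCoef a → ContDiff ℝ n (pSum a) := by
  induction n with
  | zero =>
    intro a ha
    exact contDiff_zero.2 (continuous_iff_continuousAt.2 fun w => (ha.hasDerivAt w).continuousAt)
  | succ n ih =>
    intro a ha
    push_cast
    rw [contDiff_succ_iff_deriv]
    refine ⟨fun w => (ha.hasDerivAt w).differentiableAt, by simp, ?_⟩
    rw [ha.deriv_eq]
    exact ih ha.deriv

/-- Bessel-type coefficients -/
noncomputable def bCoef (ν : ℝ) : ℕ → ℝ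
  | 0 => 1
  | (k + 1) => bCoef ν k / (4 * ((k : ℝ) + 1) * ((k : ℝ) + 1 + ν))

lemma bCoef_ent (ν : ℝ) (hν : ∀ k : ℕ, (k : ℝ) + 1 + ν ≠ 0) : EntCoef (bCoef ν) := by
  have hne : ∀ k, bCoef ν k ≠ 0 := by
    intro k
    induction k with
    | zero => simp [bCoef]
    | succ k ih =>
      simp only [bCoef]
      exact div_ne_zero ih (mul_ne_zero (by positivity) (hν k))
  intro R hR
  refine summable_of_ratio_test_tendsto_lt_one (l := 0) one_pos
    (Filter.Eventually.of_forall fun k => ?_) ?_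
  · have := hne k
    positivity
  · have h1 : Filter.Tendsto (fun k : ℕ => (R / 4) * ((k:ℝ) + 1)⁻¹ * (|(k:ℝ) + 1 + ν|)⁻¹)
        Filter.atTop (𝓝 ((R/4) * 0 * 0)) := by
      have hk : Filter.Tendsto (fun k : ℕ => (k:ℝ) + 1) Filter.atTop Filter.atTop :=
        Filter.tendsto_atTop_add_const_right _ _ tendsto_natCast_atTop_atTop
      refine (tendsto_const_nhds.mul (tendsto_inv_atTop_zero.comp hk)).mul ?_
      refine tendsto_inv_atTop_zero.comp (Filter.tendsto_abs_atTop_atTop.comp ?_)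
      exact Filter.tendsto_atTop_add_const_right _ _ hk
    simp only [mul_zero] at h1
    refine h1.congr (fun k => ?_)
    have h2 := hne k
    have h3 := hν k
    simp only [bCoef]
    rw [norm_mul, norm_mul, norm_pow, norm_pow, norm_abs_eq_norm, norm_abs_eq_norm, norm_div,
      norm_mul, norm_mul, Real.norm_eq_abs, Real.norm_eq_abs, Real.norm_eq_abs, Real.norm_eq_abs,
      Real.norm_eq_abs, abs_of_pos hR, abs_of_pos (by positivity : (0:ℝ) < (k:ℝ)+1)]
    have h4 : |bCoef ν k| ≠ 0 := abs_ne_zero.2 h2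
    have h5 : |(k:ℝ)+1+ν| ≠ 0 := abs_ne_zero.2 h3
    simp only [abs_of_pos (by norm_num : (0:ℝ) < 4)]
    field_simp
    ring

lemma bessel_exists (ν : ℝ) (hν : ∀ k : ℕ, (k : ℝ) + 1 + ν ≠ 0) :
    ∃ A : ℝ → ℝ, ContDiff ℝ (⊤ : ℕ∞) A ∧ A 0 = 1 ∧
      (∀ w, w * deriv (deriv A) w + (1 + ν) * deriv A w = A w / 4) ∧
      (0 ≤ ν → ∀ w, 0 ≤ w → 1 ≤ A w ∧ 0 ≤ deriv A w) := by
  have ha := bCoef_ent ν hν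
  refine ⟨pSum (bCoef ν), contDiff_infty.2 fun n => ha.contDiff_nat n, ?_, ?_, ?_⟩
  · unfold pSum
    rw [tsum_eq_single 0 (fun k hk => by simp [hk])]
    simp [bCoef]
  · intro w
    rw [ha.deriv_eq, ha.deriv.deriv_eq]
    have h1 : w * pSum (dCoef (dCoef (bCoef ν))) w =
        ∑' k : ℕ, (k : ℝ) * dCoef (bCoef ν) k * w ^ k := by
      have hs : Summable (fun k : ℕ => (k : ℝ) * dCoef (bCoef ν) k * w ^ k) := by
        rw [← summable_nat_add_iff 1]
        refine ((ha.deriv.deriv.summable w).mul_left w).congr (fun k => ?_)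
        simp only [dCoef]; push_cast; ring
      rw [hs.tsum_eq_zero_add]
      simp only [pSum, ← tsum_mul_left]
      simp only [Nat.cast_zero, zero_mul, zero_add]
      refine tsum_congr fun k => ?_
      simp only [dCoef]; push_cast; ring
    have hs : Summable (fun k : ℕ => (k : ℝ) * dCoef (bCoef ν) k * w ^ k) := by
      rw [← summable_nat_add_iff 1]
      refine ((ha.deriv.deriv.summable w).mul_left w).congr (fun k => ?_)
      simp only [dCoef]; push_cast; ring
    rw [h1]
    simp only [pSum, ← tsum_mul_left]
    rw [← hs.tsum_add ((ha.deriv.summable w).mul_left _), ← tsum_div_const]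
    refine tsum_congr fun k => ?_
    have h3 := hν k
    simp only [dCoef, bCoef]
    field_simp
    ring
  · intro h0 w hw
    have hpos : ∀ k, 0 ≤ bCoef ν k := by
      intro k
      induction k with
      | zero => simp [bCoef]
      | succ k ih => simp only [bCoef]; positivity
    constructor
    · have := (ha.summable w).sum_le_tsum {0} (fun k _ => mul_nonneg (hpos k) (pow_nonneg hw k))
      simpa [bCoef, pSum] using this
    · rw [ha.deriv_eq]
      exact tsum_nonneg fun k => mul_nonneg (mul_nonneg (by positivity) (hpos _)) (pow_nonneg hw k)


lemma wronskian_const {γ : ℝ} {A B : ℝ → ℝ} (hA : ContDiff ℝ (⊤ : ℕ∞) A)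
    (hB : ContDiff ℝ (⊤ : ℕ∞) B) (hA0 : A 0 = 1) (hB0 : B 0 = 1)
    (hAode : ∀ w, w * deriv (deriv A) w + (1 - γ) * deriv A w = A w / 4)
    (hBode : ∀ w, w * deriv (deriv B) w + (1 + γ) * deriv B w = B w / 4) (w : ℝ) :
    A w * (γ * B w + w * deriv B w) - w * deriv A w * B w = γ := by
  have hA1 : ∀ w, HasDerivAt A (deriv A w) w := fun w =>
    (hA.differentiable (by simp)).differentiableAt.hasDerivAt
  have hB1 : ∀ w, HasDerivAt B (deriv B w) w := fun w =>
    (hB.differentiable (by simp)).differentiableAt.hasDerivAt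
  have hA' : ContDiff ℝ (⊤ : ℕ∞) (deriv A) := hA.iterate_deriv 1
  have hB' : ContDiff ℝ (⊤ : ℕ∞) (deriv B) := hB.iterate_deriv 1
  have hA2 : ∀ w, HasDerivAt (deriv A) (deriv (deriv A) w) w := fun w =>
    (hA'.differentiable (by simp)).differentiableAt.hasDerivAt
  have hB2 : ∀ w, HasDerivAt (deriv B) (deriv (deriv B) w) w := fun w =>
    (hB'.differentiable (by simp)).differentiableAt.hasDerivAt
  have key : ∀ w, HasDerivAt (fun w => A w * (γ * B w + w * deriv B w) - w * deriv A w * B w)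
      0 w := by
    intro w
    have h := ((hA1 w).mul (((hB1 w).const_mul γ).add ((hasDerivAt_id w).mul (hB2 w)))).sub
      (((hasDerivAt_id w).mul (hA2 w)).mul (hB1 w))
    refine h.congr_deriv ?_
    simp only [id, Pi.add_apply, Pi.mul_apply]
    linear_combination A w * hBode w - B w * hAode w
  have h := is_const_of_deriv_eq_zero (fun w => (key w).differentiableAt)
    (fun w => (key w).deriv) w 0
  simp only [hA0, hB0] at h
  linarith

lemma decay_const {γ : ℝ} (hγ : 0 < γ) {A B : ℝ → ℝ} (hA : ContDiff ℝ (⊤ : ℕ∞) A)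
    (hB : ContDiff ℝ (⊤ : ℕ∞) B) (hA0 : A 0 = 1) (hB0 : B 0 = 1)
    (hAode : ∀ w, w * deriv (deriv A) w + (1 - γ) * deriv A w = A w / 4)
    (hBode : ∀ w, w * deriv (deriv B) w + (1 + γ) * deriv B w = B w / 4)
    (hBpos : ∀ w, 0 ≤ w → 1 ≤ B w ∧ 0 ≤ deriv B w) :
    ∃ c : ℝ, ∀ w, 0 < w → 0 ≤ A w - c * w ^ γ * B w ∧ A w - c * w ^ γ * B w ≤ 1 := by
  have hA1 : ∀ w, HasDerivAt A (deriv A w) w := fun w =>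
    (hA.differentiable (by simp)).differentiableAt.hasDerivAt
  have hB1 : ∀ w, HasDerivAt B (deriv B w) w := fun w =>
    (hB.differentiable (by simp)).differentiableAt.hasDerivAt
  have hW := wronskian_const hA hB hA0 hB0 hAode hBode
  set r : ℝ → ℝ := fun w => w ^ (-γ) * A w / B w with hr
  set q : ℝ → ℝ := fun w => w ^ (-γ) * (A w - 1) / B w with hq
  have hrd : ∀ w, 0 < w → HasDerivAt r (-(γ * w ^ (-γ - 1) / B w ^ 2)) w := by
    intro w hw
    have hb : B w ≠ 0 := by linarith [(hBpos w hw.le).1]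
    have h := ((Real.hasDerivAt_rpow_const (p := -γ) (Or.inl hw.ne')).mul (hA1 w)).div (hB1 w) hb
    refine h.congr_deriv ?_
    have e : w ^ (-γ) = w ^ (-γ - 1) * w := by
      rw [← Real.rpow_add_one hw.ne']; ring_nf
    simp only [Pi.mul_apply]
    rw [e]
    field_simp
    linear_combination -(hW w)
  have hqd : ∀ w, 0 < w → HasDerivAt q (-(γ * w ^ (-γ - 1) / B w ^ 2) +
      (γ * w ^ (-γ - 1) / B w + w ^ (-γ) * deriv B w / B w ^ 2)) w := by
    intro w hw
    have hb : B w ≠ 0 := by linarith [(hBpos w hw.le).1]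
    have h := ((Real.hasDerivAt_rpow_const (p := -γ) (Or.inl hw.ne')).mul
      ((hA1 w).sub_const 1)).div (hB1 w) hb
    refine h.congr_deriv ?_
    have e : w ^ (-γ) = w ^ (-γ - 1) * w := by
      rw [← Real.rpow_add_one hw.ne']; ring_nf
    simp only [Pi.mul_apply]
    rw [e]
    field_simp
    linear_combination -(hW w)
  have hranti : AntitoneOn r (Set.Ioi 0) := by
    refine antitoneOn_of_deriv_nonpos (convex_Ioi 0)
      (fun w hw => (hrd w hw).continuousAt.continuousWithinAt)
      (fun w hw => ?_) (fun w hw => ?_)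
    · rw [interior_Ioi] at hw; exact (hrd w hw).differentiableAt.differentiableWithinAt
    · rw [interior_Ioi] at hw
      have hw' : 0 < w := hw
      rw [(hrd w hw).deriv]
      have : 0 ≤ γ * w ^ (-γ - 1) / B w ^ 2 := by positivity
      linarith
  have hqmono : MonotoneOn q (Set.Ioi 0) := by
    refine monotoneOn_of_deriv_nonneg (convex_Ioi 0)
      (fun w hw => (hqd w hw).continuousAt.continuousWithinAt)
      (fun w hw => ?_) (fun w hw => ?_)
    · rw [interior_Ioi] at hw; exact (hqd w hw).differentiableAt.differentiableWithinAt
    · rw [interior_Ioi] at hw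
      have hw' : 0 < w := hw
      rw [(hqd w hw).deriv]
      obtain ⟨hb1, hb2⟩ := hBpos w hw'.le
      have h1 : 0 ≤ w ^ (-γ) * deriv B w / B w ^ 2 := by positivity
      have h2 : γ * w ^ (-γ - 1) / B w ^ 2 ≤ γ * w ^ (-γ - 1) / B w := by
        apply div_le_div_of_nonneg_left (by positivity) (by positivity)
        nlinarith
      linarith
  have hqr : ∀ w, 0 < w → q w ≤ r w := by
    intro w hw
    obtain ⟨hb1, hb2⟩ := hBpos w hw.le
    simp only [hq, hr]
    gcongr
    linarith
  have hall : ∀ w, 0 < w → ∀ v, 0 < v → q w ≤ r v := by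
    intro w hw v hv
    rcases le_total w v with h | h
    · exact (hqmono hw hv h).trans (hqr v hv)
    · exact (hqr w hw).trans (hranti hv hw h)
  refine ⟨sSup (q '' Set.Ioi 0), fun w hw => ?_⟩
  have hbdd : BddAbove (q '' Set.Ioi 0) := ⟨r 1, by
    rintro _ ⟨v, hv, rfl⟩; exact hall v hv 1 one_pos⟩
  have h1 : q w ≤ sSup (q '' Set.Ioi 0) := le_csSup hbdd ⟨w, hw, rfl⟩
  have h2 : sSup (q '' Set.Ioi 0) ≤ r w := csSup_le ⟨_, 1, Set.mem_Ioi.2 one_pos, rfl⟩ (by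
    rintro _ ⟨v, hv, rfl⟩; exact hall v hv w hw)
  set c := sSup (q '' Set.Ioi 0)
  have hb : 0 < B w := by linarith [(hBpos w hw.le).1]
  have hp : 0 < w ^ γ := by positivity
  have e : w ^ (-γ) = (w ^ γ)⁻¹ := Real.rpow_neg hw.le γ
  simp only [hq, hr, e] at h1 h2
  rw [div_le_iff₀ hb, inv_mul_le_iff₀ hp] at h1
  rw [le_div_iff₀ hb, le_inv_mul_iff₀ hp] at h2
  constructor <;> nlinarith

/-- first derivative bound -/
lemma decay_deriv {γ : ℝ} (hγ : 0 < γ) {A B : ℝ → ℝ} (hA : ContDiff ℝ (⊤ : ℕ∞) A)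
    (hB : ContDiff ℝ (⊤ : ℕ∞) B)
    (hAode : ∀ w, w * deriv (deriv A) w + (1 - γ) * deriv A w = A w / 4)
    (hBode : ∀ w, w * deriv (deriv B) w + (1 + γ) * deriv B w = B w / 4)
    {c : ℝ} (hc : ∀ w, 0 < w → 0 ≤ A w - c * w ^ γ * B w ∧ A w - c * w ^ γ * B w ≤ 1) :
    ∃ C : ℝ, ∀ w, 1 ≤ w → |w ^ (-γ) * A w - c * B w| ≤ C ∧
      |-γ * w ^ (-γ - 1) * A w + w ^ (-γ) * deriv A w - c * deriv B w| ≤ C := by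
  have hA1 : ∀ w, HasDerivAt A (deriv A w) w := fun w =>
    (hA.differentiable (by simp)).differentiableAt.hasDerivAt
  have hB1 : ∀ w, HasDerivAt B (deriv B w) w := fun w =>
    (hB.differentiable (by simp)).differentiableAt.hasDerivAt
  have hA' : ContDiff ℝ (⊤ : ℕ∞) (deriv A) := hA.iterate_deriv 1
  have hB' : ContDiff ℝ (⊤ : ℕ∞) (deriv B) := hB.iterate_deriv 1
  have hA2 : ∀ w, HasDerivAt (deriv A) (deriv (deriv A) w) w := fun w =>
    (hA'.differentiable (by simp)).differentiableAt.hasDerivAt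
  have hB2 : ∀ w, HasDerivAt (deriv B) (deriv (deriv B) w) w := fun w =>
    (hB'.differentiable (by simp)).differentiableAt.hasDerivAt
  set g : ℝ → ℝ := fun w => A w - c * w ^ γ * B w with hg
  set k : ℝ → ℝ := fun w => w ^ (1 - γ) * deriv A w - c * γ * B w - c * (w * deriv B w) with hk
  have hpow : ∀ w : ℝ, 0 < w → w ^ (1 - γ) * w ^ (γ - 1) = 1 := by
    intro w hw; rw [← Real.rpow_add hw]; simp
  have hgd : ∀ w, 0 < w → HasDerivAt g (w ^ (γ - 1) * k w) w := by
    intro w hw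
    have h := (hA1 w).sub (((Real.hasDerivAt_rpow_const (p := γ) (Or.inl hw.ne')).const_mul c).mul
      (hB1 w))
    refine h.congr_deriv ?_
    have e : w ^ γ = w ^ (γ - 1) * w := by
      rw [← Real.rpow_add_one hw.ne']; ring_nf
    simp only [hk]
    rw [e]
    linear_combination -(deriv A w) * hpow w hw
  have hkd : ∀ w, 0 < w → HasDerivAt k (w ^ (-γ) * g w / 4) w := by
    intro w hw
    have h := (((Real.hasDerivAt_rpow_const (p := 1 - γ) (Or.inl hw.ne')).mul (hA2 w)).sub
      ((hB1 w).const_mul (c * γ))).sub (((hasDerivAt_id w).mul (hB2 w)).const_mul c)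
    refine h.congr_deriv ?_
    have e : w ^ (1 - γ) = w ^ (-γ) * w := by
      rw [← Real.rpow_add_one hw.ne']; ring_nf
    have e2 : w ^ (1 - γ - 1) = w ^ (-γ) := by ring_nf
    have e3 : w ^ (-γ) * w ^ γ = 1 := by rw [← Real.rpow_add hw]; simp
    simp only [hg, id]
    rw [e2, e]
    linear_combination w ^ (-γ) * hAode w - c * hBode w + c * B w / 4 * e3
  have hkmono : MonotoneOn k (Set.Ioi 0) := by
    refine monotoneOn_of_deriv_nonneg (convex_Ioi 0)
      (fun w hw => (hkd w hw).continuousAt.continuousWithinAt)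
      (fun w hw => ?_) (fun w hw => ?_)
    · rw [interior_Ioi] at hw; exact (hkd w hw).differentiableAt.differentiableWithinAt
    · rw [interior_Ioi] at hw
      have hw' : 0 < w := hw
      rw [(hkd w hw).deriv]
      have := (hc w hw').1
      positivity
  have hkneg : ∀ w, 0 < w → k w ≤ 0 := by
    intro w0 hw0
    by_contra hcon
    push Not at hcon
    set h : ℝ → ℝ := fun w => g w - k w0 / γ * w ^ γ with hh
    have hhd : ∀ w, 0 < w → HasDerivAt h (w ^ (γ - 1) * (k w - k w0)) w := by
      intro w hw
      have := (hgd w hw).sub ((Real.hasDerivAt_rpow_const (p := γ) (Or.inl hw.ne')).const_mul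
        (k w0 / γ))
      refine this.congr_deriv ?_
      field_simp
    have hhm : MonotoneOn h (Set.Ici w0) := by
      refine monotoneOn_of_deriv_nonneg (convex_Ici w0)
        (fun w hw => (hhd w (hw0.trans_le hw)).continuousAt.continuousWithinAt)
        (fun w hw => ?_) (fun w hw => ?_)
      · rw [interior_Ici] at hw
        exact (hhd w (hw0.trans hw)).differentiableAt.differentiableWithinAt
      · rw [interior_Ici] at hw
        have hw' : w0 < w := hw
        have hw'' : 0 < w := hw0.trans hw'
        rw [(hhd w hw'').deriv]
        have := hkmono (show w0 ∈ Set.Ioi 0 from hw0) (show w ∈ Set.Ioi 0 from hw'') hw'.le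
        exact mul_nonneg (by positivity) (by linarith)
    have hlim : Filter.Tendsto (fun w : ℝ => k w0 / γ * w ^ γ) Filter.atTop Filter.atTop :=
      (tendsto_rpow_atTop hγ).const_mul_atTop (by positivity)
    obtain ⟨w, hw1, hw2⟩ := ((hlim.eventually_gt_atTop (1 - h w0)).and
      (Filter.eventually_ge_atTop w0)).exists
    have h1 := hhm (Set.self_mem_Ici) (show w ∈ Set.Ici w0 from hw2) hw2
    have h2 := (hc w (hw0.trans_le hw2)).2
    have h3 : h w = g w - k w0 / γ * w ^ γ := rfl
    have h4 : g w = A w - c * w ^ γ * B w := rfl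
    linarith
  refine ⟨1 + γ + |k 1|, fun w hw => ?_⟩
  have hw0 : 0 < w := one_pos.trans_le hw
  have e3 : w ^ (-γ) * w ^ γ = 1 := by rw [← Real.rpow_add hw0]; simp
  have hle : w ^ (-γ) ≤ 1 := Real.rpow_le_one_of_one_le_of_nonpos hw (by linarith)
  have hpos : 0 < w ^ (-γ) := by positivity
  obtain ⟨hc1, hc2⟩ := hc w hw0
  have hE : w ^ (-γ) * A w - c * B w = w ^ (-γ) * (A w - c * w ^ γ * B w) := by
    linear_combination c * B w * e3
  have hE0 : 0 ≤ w ^ (-γ) * A w - c * B w := by rw [hE]; positivity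
  have hE1 : w ^ (-γ) * A w - c * B w ≤ 1 := by
    rw [hE]; nlinarith
  have e : w ^ (-γ) = w ^ (-γ - 1) * w := by
    rw [← Real.rpow_add_one hw0.ne']; ring_nf
  have hE' : -γ * w ^ (-γ - 1) * A w + w ^ (-γ) * deriv A w - c * deriv B w =
      w⁻¹ * (k w - γ * (w ^ (-γ) * A w - c * B w)) := by
    have e1 : w ^ (1 - γ) = w ^ (-γ - 1) * w * w := by
      rw [← e, ← Real.rpow_add_one hw0.ne']; ring_nf
    simp only [hk]
    rw [e1, e]
    field_simp
    ring
  constructor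
  · rw [abs_of_nonneg hE0]
    have := abs_nonneg (k 1)
    linarith
  · rw [hE', abs_mul]
    have h1 : |w⁻¹| ≤ 1 := by
      rw [abs_of_pos (by positivity)]; exact inv_le_one_of_one_le₀ hw
    have h2 : |k w - γ * (w ^ (-γ) * A w - c * B w)| ≤ |k 1| + γ := by
      have hk1 := hkmono (Set.mem_Ioi.2 one_pos) (show w ∈ Set.Ioi 0 from hw0) hw
      have hk2 := hkneg w hw0
      have := neg_abs_le (k 1)
      rw [abs_le]
      have : γ * (w ^ (-γ) * A w - c * B w) ≤ γ := by nlinarith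
      have : 0 ≤ γ * (w ^ (-γ) * A w - c * B w) := by positivity
      have := abs_nonneg (k 1)
      constructor <;> linarith
    have h3 : 0 ≤ |k w - γ * (w ^ (-γ) * A w - c * B w)| := abs_nonneg _
    nlinarith [abs_nonneg w⁻¹]


lemma ode_bound {γ C : ℝ} {E : ℝ → ℝ} (hE : ContDiffOn ℝ (⊤ : ℕ∞) E (Set.Ioi 0))
    (hode : ∀ w, 0 < w → w * deriv (deriv E) w + (1 + γ) * deriv E w = E w / 4)
    (h0 : ∀ w, 1 ≤ w → |E w| ≤ C) (h1 : ∀ w, 1 ≤ w → |deriv E w| ≤ C) (n : ℕ) :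
    ∃ K : ℝ, ∀ w, 1 ≤ w → |iteratedDeriv n E w| ≤ K := by
  have hsm : ∀ n, ContDiffOn ℝ (⊤ : ℕ∞) (iteratedDeriv n E) (Set.Ioi 0) := by
    intro n
    induction n with
    | zero => simpa using hE
    | succ n ih =>
      rw [iteratedDeriv_succ]
      exact ih.deriv_of_isOpen isOpen_Ioi (by simp)
  have hd : ∀ n w, 0 < w → HasDerivAt (iteratedDeriv n E) (iteratedDeriv (n + 1) E w) w := by
    intro n w hw
    rw [iteratedDeriv_succ]
    exact (((hsm n).differentiableOn (by simp)).differentiableAt (Ioi_mem_nhds hw)).hasDerivAt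
  have hrec : ∀ n : ℕ, ∀ w, 0 < w → w * iteratedDeriv (n + 2) E w +
      ((n : ℝ) + 1 + γ) * iteratedDeriv (n + 1) E w = iteratedDeriv n E w / 4 := by
    intro n
    induction n with
    | zero =>
      intro w hw
      have := hode w hw
      simp only [iteratedDeriv_succ, iteratedDeriv_zero, Nat.cast_zero, zero_add]
      exact this
    | succ n ih =>
      intro w hw
      have hl := ((hasDerivAt_id w).mul (hd (n + 2) w hw)).add
        ((hd (n + 1) w hw).const_mul ((n : ℝ) + 1 + γ))
      have hr := (hd n w hw).div_const 4
      have heq : (fun w => w * iteratedDeriv (n + 2) E w +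
          ((n : ℝ) + 1 + γ) * iteratedDeriv (n + 1) E w) =ᶠ[𝓝 w]
          fun w => iteratedDeriv n E w / 4 :=
        Filter.eventually_of_mem (Ioi_mem_nhds hw) ih
      have := hl.unique (hr.congr_of_eventuallyEq heq)
      simp only [id] at this
      push_cast
      linear_combination this
  have hpair : ∀ n : ℕ, ∃ K : ℝ, ∀ w, 1 ≤ w → |iteratedDeriv n E w| ≤ K ∧
      |iteratedDeriv (n + 1) E w| ≤ K := by
    intro n
    induction n with
    | zero => exact ⟨C, fun w hw => ⟨by simpa using h0 w hw, by
        simpa [iteratedDeriv_succ] using h1 w hw⟩⟩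
    | succ n ih =>
      obtain ⟨K, hK⟩ := ih
      refine ⟨K + K / 4 + |(n:ℝ) + 1 + γ| * K, fun w hw => ?_⟩
      obtain ⟨k1, k2⟩ := hK w hw
      have hK0 : 0 ≤ K := (abs_nonneg _).trans k1
      have hm : 0 ≤ |(n:ℝ) + 1 + γ| * K := by positivity
      refine ⟨by linarith, ?_⟩
      have hw0 : 0 < w := by linarith
      have h := hrec n w hw0
      have h2 : |w * iteratedDeriv (n + 2) E w| ≤ K / 4 + |(n:ℝ) + 1 + γ| * K := by
        have : w * iteratedDeriv (n + 2) E w = iteratedDeriv n E w / 4 -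
          ((n : ℝ) + 1 + γ) * iteratedDeriv (n + 1) E w := by linarith
        rw [this]
        refine (abs_sub _ _).trans ?_
        rw [abs_mul, abs_div, abs_of_pos (by norm_num : (0:ℝ) < 4)]
        gcongr
      rw [abs_mul, abs_of_pos hw0] at h2
      have h3 : |iteratedDeriv (n + 2) E w| ≤ w * |iteratedDeriv (n + 2) E w| := by
        nlinarith [abs_nonneg (iteratedDeriv (n + 2) E w)]
      show |iteratedDeriv (n + 2) E w| ≤ _
      linarith
  obtain ⟨K, hK⟩ := hpair n
  exact ⟨K, fun w hw => (hK w hw).1⟩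

lemma temperate_of_tail {b E : ℝ → ℝ} (hb : ContDiff ℝ (⊤ : ℕ∞) b) (h0 : ∀ w, w < -2 → b w = 0)
    (hE : ∀ w, 2 < w → b w = E w)
    (hbd : ∀ n : ℕ, ∃ K : ℝ, ∀ w, 1 ≤ w → |iteratedDeriv n E w| ≤ K) :
    b.HasTemperateGrowth := by
  refine ⟨hb, fun n => ?_⟩
  obtain ⟨K, hK⟩ := hbd n
  have hc : Continuous (iteratedDeriv n b) := hb.continuous_iteratedDeriv n (by exact_mod_cast le_top)
  obtain ⟨M, hM⟩ := (isCompact_Icc (a := (-2:ℝ)) (b := 2)).exists_bound_of_continuousOn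
    hc.continuousOn
  refine ⟨0, max (max M K) 0, fun w => ?_⟩
  rw [norm_iteratedFDeriv_eq_norm_iteratedDeriv, pow_zero, mul_one]
  rcases lt_or_ge w (-2) with h | h
  · have : b =ᶠ[𝓝 w] fun _ => 0 := Filter.eventually_of_mem (Iio_mem_nhds h) h0
    rw [this.iteratedDeriv_eq]
    rw [iteratedDeriv_const]
    split_ifs <;> simp
  rcases le_or_gt w 2 with h' | h'
  · exact (hM w ⟨h, h'⟩).trans ((le_max_left _ _).trans (le_max_left _ _))
  · have : b =ᶠ[𝓝 w] E := Filter.eventually_of_mem (Ioi_mem_nhds h') hE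
    rw [this.iteratedDeriv_eq, Real.norm_eq_abs]
    exact (hK w (by linarith)).trans ((le_max_right _ _).trans (le_max_left _ _))

/-- first two derivatives of `w^{-γ} h - c B` at positive points -/
lemma twisted_deriv {γ c : ℝ} {h B b : ℝ → ℝ} (hh : ContDiff ℝ (⊤ : ℕ∞) h)
    (hB : ContDiff ℝ (⊤ : ℕ∞) B) (hb : ∀ w, 0 < w → b w = w ^ (-γ) * h w - c * B w)
    {w : ℝ} (hw : 0 < w) :
    deriv b w = -γ * w ^ (-γ - 1) * h w + w ^ (-γ) * deriv h w - c * deriv B w ∧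
    deriv (deriv b) w = γ * (γ + 1) * w ^ (-γ - 1 - 1) * h w - 2 * γ * w ^ (-γ - 1) * deriv h w
      + w ^ (-γ) * deriv (deriv h) w - c * deriv (deriv B) w := by
  have hh1 : ∀ w, HasDerivAt h (deriv h w) w := fun w =>
    (hh.differentiable (by simp)).differentiableAt.hasDerivAt
  have hB1 : ∀ w, HasDerivAt B (deriv B w) w := fun w =>
    (hB.differentiable (by simp)).differentiableAt.hasDerivAt
  have hh' : ContDiff ℝ (⊤ : ℕ∞) (deriv h) := hh.iterate_deriv 1
  have hB' : ContDiff ℝ (⊤ : ℕ∞) (deriv B) := hB.iterate_deriv 1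
  have hh2 : ∀ w, HasDerivAt (deriv h) (deriv (deriv h) w) w := fun w =>
    (hh'.differentiable (by simp)).differentiableAt.hasDerivAt
  have hB2 : ∀ w, HasDerivAt (deriv B) (deriv (deriv B) w) w := fun w =>
    (hB'.differentiable (by simp)).differentiableAt.hasDerivAt
  have hp : ∀ p w : ℝ, 0 < w → HasDerivAt (fun w : ℝ => w ^ p) (p * w ^ (p - 1)) w :=
    fun p w hw => Real.hasDerivAt_rpow_const (Or.inl hw.ne')
  have d1 : ∀ w, 0 < w →
      deriv b w = -γ * w ^ (-γ - 1) * h w + w ^ (-γ) * deriv h w - c * deriv B w := by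
    intro w hw
    have e : b =ᶠ[𝓝 w] fun w => w ^ (-γ) * h w - c * B w :=
      Filter.eventually_of_mem (Ioi_mem_nhds hw) hb
    rw [e.deriv_eq]
    exact (((hp (-γ) w hw).mul (hh1 w)).sub ((hB1 w).const_mul c)).deriv
  refine ⟨d1 w hw, ?_⟩
  have e : deriv b =ᶠ[𝓝 w] fun w =>
      -γ * w ^ (-γ - 1) * h w + w ^ (-γ) * deriv h w - c * deriv B w :=
    Filter.eventually_of_mem (Ioi_mem_nhds hw) d1
  rw [e.deriv_eq]
  have := (((((hp (-γ - 1) w hw).const_mul (-γ)).mul (hh1 w)).add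
    ((hp (-γ) w hw).mul (hh2 w))).sub ((hB2 w).const_mul c)).deriv
  refine Eq.trans this ?_
  ring

/-- The radial profile: `a + w^γ b` solves the modified Bessel equation and `a`, `b` have
temperate growth. -/
lemma profile_exists {γ : ℝ} (hγ : 0 < γ) (hint : ∀ k : ℤ, γ ≠ (k : ℝ)) :
    ∃ a b : ℝ → ℝ, a.HasTemperateGrowth ∧ b.HasTemperateGrowth ∧ a 0 = 1 ∧
      ∀ w, 0 < w → (4 * w * deriv (deriv a) w + 4 * (1 - γ) * deriv a w - a w) +
        w ^ γ * (4 * w * deriv (deriv b) w + 4 * (1 + γ) * deriv b w - b w) = 0 := by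
  obtain ⟨A, hA, hA0, hAode, -⟩ := bessel_exists (-γ) (fun k hk => hint (k + 1) (by
    push_cast; linarith))
  obtain ⟨B, hB, hB0, hBode, hBpos⟩ := bessel_exists γ (fun k => by positivity)
  replace hBpos := hBpos hγ.le
  replace hAode : ∀ w, w * deriv (deriv A) w + (1 - γ) * deriv A w = A w / 4 := fun w => by
    have := hAode w
    rwa [← sub_eq_add_neg] at this
  obtain ⟨c, hc⟩ := decay_const hγ hA hB hA0 hB0 hAode hBode hBpos
  obtain ⟨C, hC⟩ := decay_deriv hγ hA hB hAode hBode hc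
  set E : ℝ → ℝ := fun w => w ^ (-γ) * A w - c * B w with hEdef
  have hEsm : ContDiffOn ℝ (⊤ : ℕ∞) E (Set.Ioi 0) := by
    intro w hw
    have h1 : ContDiffAt ℝ (⊤ : ℕ∞) (fun w : ℝ => w ^ (-γ)) w :=
      Real.contDiffAt_rpow_const_of_ne (ne_of_gt hw)
    exact ((h1.mul hA.contDiffAt).sub (contDiffAt_const.mul hB.contDiffAt)).contDiffWithinAt
  have hpow1 : ∀ w : ℝ, 0 < w → w ^ (-γ) = w ^ (-γ - 1) * w := fun w hw => by
      rw [← Real.rpow_add_one hw.ne']; ring_nf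
  have hpow2 : ∀ w : ℝ, 0 < w → w ^ (-γ - 1) = w ^ (-γ - 1 - 1) * w := fun w hw => by
      rw [← Real.rpow_add_one hw.ne']; ring_nf
  have hEode : ∀ w, 0 < w → w * deriv (deriv E) w + (1 + γ) * deriv E w = E w / 4 := by
    intro w hw
    obtain ⟨e1, e2⟩ := twisted_deriv (b := E) hA hB (fun w hw => rfl) hw
    rw [e1, e2]
    simp only [hEdef]
    rw [hpow1 w hw, hpow2 w hw]
    linear_combination w ^ (-γ - 1 - 1) * w * w * hAode w - c * hBode w
  have hEbd := ode_bound hEsm hEode (fun w hw => (hC w hw).1) (fun w hw => by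
    obtain ⟨e1, e2⟩ := twisted_deriv (b := E) hA hB (fun w hw => rfl) (w := w) (by linarith)
    rw [e1]; exact (hC w hw).2)
  set θ : ℝ → ℝ := fun w => Real.smoothTransition (2 - w) with hθ
  set χ : ℝ → ℝ := fun w => Real.smoothTransition (2 - w) * Real.smoothTransition (2 + w) with hχ
  have hθsm : ContDiff ℝ (⊤ : ℕ∞) θ := Real.smoothTransition.contDiff.comp (by fun_prop)
  have hχsm : ContDiff ℝ (⊤ : ℕ∞) χ := hθsm.mul (Real.smoothTransition.contDiff.comp (by fun_prop))
  have hχθ : ∀ w, 0 < w → χ w = θ w := by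
    intro w hw
    simp only [hχ, hθ]
    rw [Real.smoothTransition.one_of_one_le (by linarith : 1 ≤ 2 + w), mul_one]
  have hχ1 : ∀ w, w < -2 → χ w = 0 := by
    intro w hw
    simp only [hχ]
    rw [Real.smoothTransition.zero_of_nonpos (by linarith : 2 + w ≤ 0), mul_zero]
  have hχ2 : ∀ w, 2 < w → χ w = 0 := by
    intro w hw
    simp only [hχ]
    rw [Real.smoothTransition.zero_of_nonpos (by linarith : 2 - w ≤ 0), zero_mul]
  have hθ1 : ∀ w, w ≤ 1 → θ w = 1 := by
    intro w hw
    simp only [hθ]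
    rw [Real.smoothTransition.one_of_one_le (by linarith : 1 ≤ 2 - w)]
  set a : ℝ → ℝ := fun w => χ w * A w with ha
  set b : ℝ → ℝ := fun w => (1 - θ w) * E w - c * (χ w * B w) with hb
  have hasm : ContDiff ℝ (⊤ : ℕ∞) a := hχsm.mul hA
  have hbsm : ContDiff ℝ (⊤ : ℕ∞) b := by
    refine ContDiff.sub ?_ (contDiff_const.mul (hχsm.mul hB))
    rw [contDiff_iff_contDiffAt]
    intro w
    rcases lt_or_ge w 1 with h | h
    · have : (fun w => (1 - θ w) * E w) =ᶠ[𝓝 w] fun _ => 0 :=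
        Filter.eventually_of_mem (Iio_mem_nhds h) fun v hv => by
          simp [hθ1 v (le_of_lt hv)]
      exact contDiffAt_const.congr_of_eventuallyEq this
    · exact (contDiffAt_const.sub hθsm.contDiffAt).mul
        ((hEsm w (by simp; linarith)).contDiffAt (Ioi_mem_nhds (by linarith)))
  refine ⟨a, b, ?_, ?_, ?_, ?_⟩
  · refine temperate_of_tail (E := fun _ => 0) hasm (fun w hw => by simp [ha, hχ1 w hw])
      (fun w hw => by simp [ha, hχ2 w hw]) (fun n => ⟨0, fun w _ => ?_⟩)
    rw [iteratedDeriv_const]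
    split_ifs <;> simp
  · refine temperate_of_tail (E := E) hbsm (fun w hw => ?_) (fun w hw => ?_) hEbd
    · simp [hb, hχ1 w hw, hθ1 w (by linarith)]
    · have := hχθ w (by linarith)
      simp [hb, hχ2 w hw, ← this]
  · simp only [ha, hχ, hA0]
    rw [Real.smoothTransition.one_of_one_le (by norm_num),
      Real.smoothTransition.one_of_one_le (by norm_num)]
    norm_num
  · intro w hw
    set h : ℝ → ℝ := fun w => A w - a w with hh
    have hhsm : ContDiff ℝ (⊤ : ℕ∞) h := hA.sub hasm
    obtain ⟨e1, e2⟩ := twisted_deriv (b := b) (γ := γ) (c := c) hhsm hB (fun v hv => by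
      simp only [hb, hh, ha, hEdef, hχθ v hv]; ring) hw
    have hd : ∀ v, deriv h v = deriv A v - deriv a v := fun v =>
      deriv_sub (hA.differentiable (by simp)).differentiableAt
        (hasm.differentiable (by simp)).differentiableAt
    have hd2 : deriv (deriv h) w = deriv (deriv A) w - deriv (deriv a) w := by
      rw [funext hd]
      exact deriv_sub ((hA.iterate_deriv 1).differentiable (by simp)).differentiableAt
        ((hasm.iterate_deriv 1).differentiable (by simp)).differentiableAt
    have hbw : b w = w ^ (-γ) * h w - c * B w := by
      simp only [hb, hh, ha, hEdef, hχθ w hw]; ring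
    rw [e1, e2, hd, hd2, hbw, hpow1 w hw, hpow2 w hw]
    have hcancel : w ^ γ * (w ^ (-γ - 1 - 1) * w * w) = 1 := by
      rw [← hpow2 w hw, ← hpow1 w hw, ← Real.rpow_add hw]; simp
    simp only [hh]
    linear_combination (4 * w ^ γ * (w ^ (-γ - 1 - 1) * w * w)) * hAode w
      - 4 * c * w ^ γ * hBode w
      - (4 * w * deriv (deriv a) w + 4 * (1 - γ) * deriv a w - a w) * hcancel


set_option linter.unusedSectionVars false

section Part4
open MeasureTheory

variable {E V : Type*} [NormedAddCommGroup E] [NormedSpace ℝ E]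
  [NormedAddCommGroup V] [InnerProductSpace ℝ V]

/-- Rapidly decaying continuous functions. -/
def RapidDecay (m : V → ℂ) : Prop :=
  Continuous m ∧ ∀ N : ℕ, ∃ C : ℝ, ∀ ξ, (1 + ‖ξ‖) ^ N * ‖m ξ‖ ≤ C

lemma RapidDecay.mul {m k : V → ℂ} (hm : RapidDecay m) (hk : Continuous k) {N : ℕ} {C : ℝ}
    (hC : ∀ ξ, ‖k ξ‖ ≤ C * (1 + ‖ξ‖) ^ N) : RapidDecay (fun ξ => k ξ * m ξ) := by
  refine ⟨hk.mul hm.1, fun M => ?_⟩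
  obtain ⟨D, hD⟩ := hm.2 (M + N)
  refine ⟨C * D, fun ξ => ?_⟩
  have h0 : 0 ≤ C := by
    have := (norm_nonneg _).trans (hC 0)
    simpa using this
  rw [norm_mul]
  calc (1 + ‖ξ‖) ^ M * (‖k ξ‖ * ‖m ξ‖)
      ≤ (1 + ‖ξ‖) ^ M * ((C * (1 + ‖ξ‖) ^ N) * ‖m ξ‖) := by gcongr; exact hC ξ
    _ = C * ((1 + ‖ξ‖) ^ (M + N) * ‖m ξ‖) := by ring
    _ ≤ C * D := by gcongr; exact hD ξ

lemma RapidDecay.add {m k : V → ℂ} (hm : RapidDecay m) (hk : RapidDecay k) :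
    RapidDecay (fun ξ => m ξ + k ξ) := by
  refine ⟨hm.1.add hk.1, fun M => ?_⟩
  obtain ⟨D, hD⟩ := hm.2 M
  obtain ⟨D', hD'⟩ := hk.2 M
  refine ⟨D + D', fun ξ => ?_⟩
  calc (1 + ‖ξ‖) ^ M * ‖m ξ + k ξ‖ ≤ (1 + ‖ξ‖) ^ M * (‖m ξ‖ + ‖k ξ‖) := by
        gcongr; exact norm_add_le _ _
    _ = (1 + ‖ξ‖) ^ M * ‖m ξ‖ + (1 + ‖ξ‖) ^ M * ‖k ξ‖ := by ring
    _ ≤ _ := add_le_add (hD ξ) (hD' ξ)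

lemma RapidDecay.integrable_pow [FiniteDimensional ℝ V] [MeasurableSpace V] [BorelSpace V]
    {m : V → ℂ} (hm : RapidDecay m) (N : ℕ) :
    Integrable (fun ξ => (1 + ‖ξ‖) ^ N * ‖m ξ‖) := by
  obtain ⟨C, hC⟩ := hm.2 (N + (Module.finrank ℝ V + 1))
  have h1 : Integrable (fun ξ : V => C * (1 + ‖ξ‖) ^ (-((Module.finrank ℝ V + 1 : ℕ) : ℝ))) :=
    (integrable_one_add_norm (by push_cast; linarith)).const_mul C
  refine h1.mono' ?_ (Filter.Eventually.of_forall fun ξ => ?_)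
  · have := hm.1
    exact Continuous.aestronglyMeasurable (by fun_prop)
  · have hp : (0:ℝ) < 1 + ‖ξ‖ := by positivity
    rw [Real.rpow_neg hp.le, Real.rpow_natCast, Real.norm_of_nonneg (by positivity),
      ← div_eq_mul_inv, le_div_iff₀ (by positivity)]
    calc _ = (1 + ‖ξ‖) ^ (N + (Module.finrank ℝ V + 1)) * ‖m ξ‖ := by rw [pow_add]; ring
      _ ≤ C := hC ξ

lemma temperate_fderiv {D F : Type*} [NormedAddCommGroup D] [NormedSpace ℝ D]
    [NormedAddCommGroup F] [NormedSpace ℝ F] {f : D → F} (hf : f.HasTemperateGrowth) :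
    (fderiv ℝ f).HasTemperateGrowth := by
  refine ⟨hf.1.fderiv_right (by simp), fun n => ?_⟩
  obtain ⟨k, C, h⟩ := hf.2 (n + 1)
  refine ⟨k, C, fun x => ?_⟩
  rw [norm_iteratedFDeriv_fderiv]
  exact h x

lemma temperate_fderiv_apply {D F : Type*} [NormedAddCommGroup D] [NormedSpace ℝ D]
    [NormedAddCommGroup F] [NormedSpace ℝ F] {f : D → F} (hf : f.HasTemperateGrowth) (v : D) :
    (fun x => fderiv ℝ f x v).HasTemperateGrowth :=
  (ContinuousLinearMap.apply ℝ F v).hasTemperateGrowth.comp (temperate_fderiv hf)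

lemma temperate_bound {D F : Type*} [NormedAddCommGroup D] [NormedSpace ℝ D]
    [NormedAddCommGroup F] [NormedSpace ℝ F] {f : D → F} (hf : f.HasTemperateGrowth) :
    ∃ (k : ℕ) (C : ℝ), 0 ≤ C ∧ ∀ x, ‖f x‖ ≤ C * (1 + ‖x‖) ^ k := by
  obtain ⟨k, C, h⟩ := hf.2 0
  refine ⟨k, C, ?_, fun x => by simpa using h x⟩
  have := (norm_nonneg _).trans (h 0)
  simpa using this

lemma prod_norm_bound (p : E) (ξ : V) (R : ℝ) (hp : ‖p‖ ≤ R) :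
    1 + ‖(p, ξ)‖ ≤ (1 + R) * (1 + ‖ξ‖) := by
  have h0 : 0 ≤ R := (norm_nonneg _).trans hp
  have h1 : ‖(p, ξ)‖ ≤ ‖p‖ + ‖ξ‖ := by
    rw [Prod.norm_def]; exact max_le_add_of_nonneg (norm_nonneg _) (norm_nonneg _)
  nlinarith [norm_nonneg ξ, mul_nonneg h0 (norm_nonneg ξ)]

/-- Oscillatory-type integral with temperate kernel. -/
noncomputable def TInt [MeasurableSpace V] [FiniteDimensional ℝ V] [BorelSpace V]
    (Ψ : E × V → ℂ) (m : V → ℂ) (p : E) : ℂ := ∫ ξ, Ψ (p, ξ) * m ξ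

variable [MeasurableSpace V] [FiniteDimensional ℝ V] [BorelSpace V]

lemma TInt_integrable {Ψ : E × V → ℂ} (hΨ : Ψ.HasTemperateGrowth) {m : V → ℂ}
    (hm : RapidDecay m) (p : E) : Integrable (fun ξ => Ψ (p, ξ) * m ξ) := by
  obtain ⟨k, C, hC0, hC⟩ := temperate_bound hΨ
  have hc := hΨ.1.continuous
  have hc2 := hm.1
  refine ((hm.integrable_pow k).const_mul (C * (1 + ‖p‖) ^ k)).mono' ?_
    (Filter.Eventually.of_forall fun ξ => ?_)
  · exact Continuous.aestronglyMeasurable (by fun_prop)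
  · rw [norm_mul]
    calc ‖Ψ (p, ξ)‖ * ‖m ξ‖ ≤ (C * (1 + ‖(p, ξ)‖) ^ k) * ‖m ξ‖ := by gcongr; exact hC _
      _ ≤ (C * ((1 + ‖p‖) * (1 + ‖ξ‖)) ^ k) * ‖m ξ‖ := by
          gcongr; exact prod_norm_bound p ξ _ le_rfl
      _ = _ := by rw [mul_pow]; ring

lemma TInt_hasFDerivAt {Ψ : E × V → ℂ} (hΨ : Ψ.HasTemperateGrowth) {m : V → ℂ}
    (hm : RapidDecay m) (p : E) :
    ∃ T : E →L[ℝ] ℂ, HasFDerivAt (TInt Ψ m) T p ∧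
      ∀ e, T e = TInt (fun q => fderiv ℝ Ψ q (e, 0)) m p := by
  obtain ⟨k, C, hC0, hC⟩ := temperate_bound (temperate_fderiv hΨ)
  have hc := hΨ.1.continuous
  have hc1 := (temperate_fderiv hΨ).1.continuous
  have hc2 := hm.1
  set F' : E → V → E →L[ℝ] ℂ := fun q ξ =>
    m ξ • (fderiv ℝ Ψ (q, ξ)).comp (ContinuousLinearMap.inl ℝ E V) with hF'
  have hF'c : ∀ q, Continuous (F' q) := by
    intro q
    have : Continuous fun ξ => (fderiv ℝ Ψ (q, ξ)).comp (ContinuousLinearMap.inl ℝ E V) :=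
      (hc1.comp (by fun_prop : Continuous fun ξ : V => (q, ξ))).clm_comp continuous_const
    exact hc2.smul this
  have hinl : ‖ContinuousLinearMap.inl ℝ E V‖ ≤ 1 := ContinuousLinearMap.norm_inl_le_one ℝ E V
  have hbd : ∀ ξ, ∀ q ∈ Metric.ball p 1,
      ‖F' q ξ‖ ≤ C * (1 + (‖p‖ + 1)) ^ k * ((1 + ‖ξ‖) ^ k * ‖m ξ‖) := by
    intro ξ q hq
    have hq' : ‖q‖ ≤ ‖p‖ + 1 := by
      have : ‖q - p‖ < 1 := by simpa [dist_eq_norm] using hq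
      linarith [norm_le_norm_add_norm_sub' q p]
    calc ‖F' q ξ‖ ≤ ‖m ξ‖ * (‖fderiv ℝ Ψ (q, ξ)‖ * ‖ContinuousLinearMap.inl ℝ E V‖) := by
          rw [hF', norm_smul]; gcongr; exact ContinuousLinearMap.opNorm_comp_le _ _
      _ ≤ ‖m ξ‖ * ((C * (1 + ‖(q, ξ)‖) ^ k) * 1) := by gcongr; exact hC _
      _ ≤ ‖m ξ‖ * ((C * ((1 + (‖p‖ + 1)) * (1 + ‖ξ‖)) ^ k) * 1) := by
          gcongr; exact prod_norm_bound q ξ _ hq'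
      _ = _ := by rw [mul_pow]; ring
  have hint := (hm.integrable_pow k).const_mul (C * (1 + (‖p‖ + 1)) ^ k)
  have hF'int : Integrable (F' p) := hint.mono' (hF'c p).aestronglyMeasurable
    (Filter.Eventually.of_forall fun ξ => hbd ξ p (Metric.mem_ball_self one_pos))
  refine ⟨∫ ξ, F' p ξ, ?_, fun e => ?_⟩
  · refine hasFDerivAt_integral_of_dominated_of_fderiv_le (𝕜 := ℝ)
      (F := fun p ξ => Ψ (p, ξ) * m ξ) (F' := F') (Metric.ball_mem_nhds p one_pos)
      (Filter.Eventually.of_forall fun q => (TInt_integrable hΨ hm q).aestronglyMeasurable)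
      (TInt_integrable hΨ hm p) (hF'c p).aestronglyMeasurable
      (Filter.Eventually.of_forall hbd) hint (Filter.Eventually.of_forall fun ξ q _ => ?_)
    have h1 : HasFDerivAt Ψ (fderiv ℝ Ψ (q, ξ)) (q, ξ) :=
      (hΨ.1.differentiable (by simp)).differentiableAt.hasFDerivAt
    have h2 : HasFDerivAt (fun q => Ψ (q, ξ))
        ((fderiv ℝ Ψ (q, ξ)).comp (ContinuousLinearMap.inl ℝ E V)) q :=
      h1.comp q (hasFDerivAt_prodMk_left q ξ)
    exact h2.mul_const (m ξ)
  · rw [ContinuousLinearMap.integral_apply hF'int]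
    unfold TInt
    refine integral_congr_ae (Filter.Eventually.of_forall fun ξ => ?_)
    simp [hF', mul_comm]

lemma TInt_contDiff [FiniteDimensional ℝ E] {m : V → ℂ} (hm : RapidDecay m) (n : ℕ) :
    ∀ {Ψ : E × V → ℂ}, Ψ.HasTemperateGrowth → ContDiff ℝ n (TInt Ψ m) := by
  induction n with
  | zero =>
    intro Ψ hΨ
    refine contDiff_zero.2 (continuous_iff_continuousAt.2 fun p => ?_)
    obtain ⟨T, hT, -⟩ := TInt_hasFDerivAt hΨ hm p
    exact hT.continuousAt
  | succ n ih =>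
    intro Ψ hΨ
    push_cast
    refine contDiff_succ_iff_fderiv_apply.2 ⟨fun p => ?_, by simp, fun e => ?_⟩
    · obtain ⟨T, hT, -⟩ := TInt_hasFDerivAt hΨ hm p
      exact hT.differentiableAt
    · have : (fun x => fderiv ℝ (TInt Ψ m) x e) = TInt (fun q => fderiv ℝ Ψ q (e, 0)) m := by
        funext p
        obtain ⟨T, hT, hT'⟩ := TInt_hasFDerivAt hΨ hm p
        rw [hT.fderiv, hT' e]
      rw [this]
      exact ih (temperate_fderiv_apply hΨ _)

lemma TInt_smooth [FiniteDimensional ℝ E] {m : V → ℂ} (hm : RapidDecay m)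
    {Ψ : E × V → ℂ} (hΨ : Ψ.HasTemperateGrowth) : ContDiff ℝ (⊤ : ℕ∞) (TInt Ψ m) :=
  contDiff_infty.2 fun n => TInt_contDiff hm n hΨ

/-- Differentiation along lines. -/
lemma TInt_line {m : V → ℂ} (hm : RapidDecay m)
    {Ψ Ψ' : E × V → ℂ} (hΨ : Ψ.HasTemperateGrowth) (e : E)
    (h : ∀ p ξ, HasDerivAt (fun t : ℝ => Ψ (p + t • e, ξ)) (Ψ' (p, ξ)) 0) :
    Ψ'.HasTemperateGrowth ∧ ∀ p, ∀ t : ℝ,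
      HasDerivAt (fun t : ℝ => TInt Ψ m (p + t • e)) (TInt Ψ' m (p + t • e)) t := by
  have key : Ψ' = fun q => fderiv ℝ Ψ q (e, 0) := by
    funext ⟨p, ξ⟩
    have h1 : HasFDerivAt Ψ (fderiv ℝ Ψ (p, ξ)) (p + (0:ℝ) • e, ξ) := by
      simpa using (hΨ.1.differentiable (by simp)).differentiableAt.hasFDerivAt
    have h2 : HasDerivAt (fun t : ℝ => (p + t • e, ξ)) ((1:ℝ) • e, (0 : V)) 0 :=
      (((hasDerivAt_id (0:ℝ)).smul_const e).const_add p).prodMk (hasDerivAt_const _ _)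
    have h3 := h1.comp_hasDerivAt (0:ℝ) h2
    have := (h p ξ).unique h3
    simpa using this
  subst key
  refine ⟨temperate_fderiv_apply hΨ _, fun p t => ?_⟩
  obtain ⟨T, hT, hT'⟩ := TInt_hasFDerivAt hΨ hm (p + t • e)
  have h2 : HasDerivAt (fun t : ℝ => p + t • e) ((1:ℝ) • e) t :=
    ((hasDerivAt_id t).smul_const e).const_add p
  have := hT.comp_hasDerivAt t h2
  rw [one_smul, hT'] at this
  exact this

lemma temperate_expI : (fun t : ℝ => Complex.exp (t * Complex.I)).HasTemperateGrowth := by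
  have hd : ∀ t : ℝ, HasDerivAt (fun t : ℝ => Complex.exp (t * Complex.I))
      (Complex.I * Complex.exp (t * Complex.I)) t := by
    intro t
    have h1 : HasDerivAt (fun t : ℝ => (t : ℂ) * Complex.I) (1 * Complex.I) t :=
      (Complex.ofRealCLM.hasDerivAt).mul_const _
    have := h1.cexp
    simpa [mul_comm] using this
  have hi : ∀ n : ℕ, iteratedDeriv n (fun t : ℝ => Complex.exp (t * Complex.I)) =
      fun t : ℝ => Complex.I ^ n * Complex.exp (t * Complex.I) := by
    intro n
    induction n with
    | zero => simp
    | succ n ih =>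
      rw [iteratedDeriv_succ, ih]
      funext t
      rw [((hd t).const_mul (Complex.I ^ n)).deriv]; ring
  refine ⟨?_, fun n => ⟨0, 1, fun x => ?_⟩⟩
  · have : ContDiff ℝ (⊤ : ℕ∞) (fun t : ℝ => (t : ℂ)) := Complex.ofRealCLM.contDiff
    exact (this.mul contDiff_const).cexp
  · rw [norm_iteratedFDeriv_eq_norm_iteratedDeriv, hi]
    simp [Complex.norm_exp]

end Part4

section Part5
open MeasureTheory

variable {V : Type*} [NormedAddCommGroup V] [InnerProductSpace ℝ V]

/-- squared rescaled frequency. -/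
noncomputable def rr {n : ℕ} (L : V →L[ℝ] EuclideanSpace ℝ (Fin n)) (ξ : V) : ℝ :=
  (2 * π) ^ 2 * ‖L ξ‖ ^ 2

/-- one-factor kernel. -/
noncomputable def Kern {n : ℕ} (A : ℝ → ℝ) (L : V →L[ℝ] EuclideanSpace ℝ (Fin n))
    (q : (EuclideanSpace ℝ (Fin n) × ℝ) × V) : ℂ :=
  ((A (q.1.2 ^ 2 * rr L q.2) : ℝ) : ℂ) *
    Complex.exp (((2 * π * inner ℝ q.1.1 (L q.2) : ℝ) : ℂ) * Complex.I)

variable {n : ℕ} (L : V →L[ℝ] EuclideanSpace ℝ (Fin n))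

lemma rr_nonneg (ξ : V) : 0 ≤ rr L ξ := by unfold rr; positivity

lemma rr_continuous : Continuous (rr L) := by unfold rr; fun_prop

lemma temperate_phase {D H : Type*} [NormedAddCommGroup D] [NormedSpace ℝ D]
    [NormedAddCommGroup H] [InnerProductSpace ℝ H] {f g : D → H}
    (hf : f.HasTemperateGrowth) (hg : g.HasTemperateGrowth) :
    (fun q => Complex.exp (((2 * π * inner ℝ (f q) (g q) : ℝ) : ℂ) * Complex.I)).HasTemperateGrowth := by
  have h1 : (fun q => inner ℝ (f q) (g q)).HasTemperateGrowth :=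
    (innerSL ℝ : H →L[ℝ] H →L[ℝ] ℝ).bilinear_hasTemperateGrowth hf hg
  have h2 : (fun q => 2 * π * inner ℝ (f q) (g q)).HasTemperateGrowth :=
    (Function.HasTemperateGrowth.const (2 * π)).mul h1
  exact temperate_expI.comp h2

lemma temperate_fst {D D' : Type*} [NormedAddCommGroup D] [NormedSpace ℝ D]
    [NormedAddCommGroup D'] [NormedSpace ℝ D'] :
    (fun q : D × D' => q.1).HasTemperateGrowth :=
  (ContinuousLinearMap.fst ℝ D D').hasTemperateGrowth

lemma temperate_snd {D D' : Type*} [NormedAddCommGroup D] [NormedSpace ℝ D]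
    [NormedAddCommGroup D'] [NormedSpace ℝ D'] :
    (fun q : D × D' => q.2).HasTemperateGrowth :=
  (ContinuousLinearMap.snd ℝ D D').hasTemperateGrowth

lemma temperate_kern {A : ℝ → ℝ} (hA : A.HasTemperateGrowth) :
    (Kern A L).HasTemperateGrowth := by
  have hy : (fun q : (EuclideanSpace ℝ (Fin n) × ℝ) × V => q.1.2).HasTemperateGrowth :=
    temperate_snd.comp temperate_fst
  have hx : (fun q : (EuclideanSpace ℝ (Fin n) × ℝ) × V => q.1.1).HasTemperateGrowth :=
    temperate_fst.comp temperate_fst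
  have hξ : (fun q : (EuclideanSpace ℝ (Fin n) × ℝ) × V => L q.2).HasTemperateGrowth :=
    L.hasTemperateGrowth.comp temperate_snd
  have hr : (fun q : (EuclideanSpace ℝ (Fin n) × ℝ) × V => rr L q.2).HasTemperateGrowth :=
    (Function.HasTemperateGrowth.const ((2 * π) ^ 2)).mul
      ((Function.hasTemperateGrowth_norm_sq (EuclideanSpace ℝ (Fin n))).comp hξ)
  have h1 : (fun q : (EuclideanSpace ℝ (Fin n) × ℝ) × V =>
      ((A (q.1.2 ^ 2 * rr L q.2) : ℝ) : ℂ)).HasTemperateGrowth :=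
    Function.HasTemperateGrowth.comp Complex.ofRealCLM.hasTemperateGrowth (hA.comp ((hy.pow 2).mul hr))
  exact h1.mul (temperate_phase hx hξ)

lemma kern_bound {A : ℝ → ℝ} (hA : A.HasTemperateGrowth) (p : EuclideanSpace ℝ (Fin n) × ℝ) :
    Continuous (fun ξ => Kern A L (p, ξ)) ∧
    ∃ (k : ℕ) (C : ℝ), ∀ ξ, ‖Kern A L (p, ξ)‖ ≤ C * (1 + ‖ξ‖) ^ k := by
  have hc := (temperate_kern L hA).1.continuous
  refine ⟨by fun_prop, ?_⟩
  obtain ⟨k, C, hC0, hC⟩ := temperate_bound (temperate_kern L hA)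
  refine ⟨k, C * (1 + ‖p‖) ^ k, fun ξ => (hC _).trans ?_⟩
  calc C * (1 + ‖(p, ξ)‖) ^ k ≤ C * ((1 + ‖p‖) * (1 + ‖ξ‖)) ^ k := by
        gcongr; exact prod_norm_bound p ξ _ le_rfl
    _ = _ := by rw [mul_pow]; ring

lemma RapidDecay.kern {A : ℝ → ℝ} (hA : A.HasTemperateGrowth)
    (p : EuclideanSpace ℝ (Fin n) × ℝ) {m : V → ℂ} (hm : RapidDecay m) :
    RapidDecay (fun ξ => Kern A L (p, ξ) * m ξ) := by
  obtain ⟨hc, k, C, hC⟩ := kern_bound L hA p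
  exact hm.mul hc hC

lemma RapidDecay.rr_mul {γ : ℝ} (hγ : 0 < γ) {m : V → ℂ} (hm : RapidDecay m) :
    RapidDecay (fun ξ => ((rr L ξ ^ γ : ℝ) : ℂ) * m ξ) := by
  have hc : Continuous (fun ξ => rr L ξ ^ γ) := (rr_continuous L).rpow_const fun _ => Or.inr hγ.le
  refine hm.mul (N := ⌈2 * γ⌉₊) (C := ((2 * π * ‖L‖) ^ 2) ^ γ)
    (Complex.continuous_ofReal.comp hc) fun ξ => ?_
  have h1 : (1:ℝ) ≤ 1 + ‖ξ‖ := by linarith [norm_nonneg ξ]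
  have h2 : rr L ξ ≤ (2 * π * ‖L‖) ^ 2 * (1 + ‖ξ‖) ^ 2 := by
    unfold rr
    rw [← mul_pow, ← mul_pow]
    have : ‖L ξ‖ ≤ ‖L‖ * (1 + ‖ξ‖) := (L.le_opNorm ξ).trans (by gcongr; linarith)
    calc (2 * π * ‖L ξ‖) ^ 2 ≤ (2 * π * (‖L‖ * (1 + ‖ξ‖))) ^ 2 := by gcongr
      _ = _ := by ring
  rw [Complex.norm_real, Real.norm_of_nonneg (Real.rpow_nonneg (rr_nonneg L ξ) _)]
  calc rr L ξ ^ γ ≤ ((2 * π * ‖L‖) ^ 2 * (1 + ‖ξ‖) ^ 2) ^ γ :=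
        Real.rpow_le_rpow (rr_nonneg L ξ) h2 hγ.le
    _ = ((2 * π * ‖L‖) ^ 2) ^ γ * (1 + ‖ξ‖) ^ (2 * γ) := by
        rw [Real.mul_rpow (by positivity) (by positivity)]
        congr 1
        rw [← Real.rpow_natCast, ← Real.rpow_mul (by positivity)]; norm_num
    _ ≤ ((2 * π * ‖L‖) ^ 2) ^ γ * (1 + ‖ξ‖) ^ (⌈2 * γ⌉₊ : ℝ) := by
        gcongr
        exact Nat.le_ceil _
    _ = _ := by rw [Real.rpow_natCast]

lemma iteratedDeriv_two_of {g g1 : ℝ → ℝ} {g2 t : ℝ} (h1 : ∀ᶠ s in 𝓝 t, HasDerivAt g (g1 s) s)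
    (h2 : HasDerivAt g1 g2 t) : iteratedDeriv 2 g t = g2 := by
  rw [iteratedDeriv_succ, iteratedDeriv_one]
  have : deriv g =ᶠ[𝓝 t] g1 := h1.mono fun s hs => hs.deriv
  rw [this.deriv_eq, h2.deriv]

lemma hasDerivAt_congr_val {g : ℝ → ℂ} {a b : ℂ} {t : ℝ} (h : HasDerivAt g a t) (hab : b = a) :
    HasDerivAt g b t := hab ▸ h

lemma hasDerivAt_re {g : ℝ → ℂ} {g' : ℂ} {t : ℝ} (h : HasDerivAt g g' t) :
    HasDerivAt (fun s => (g s).re) g'.re t :=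
  (Complex.reCLM.hasFDerivAt.comp_hasDerivAt t h)

variable [MeasurableSpace V] [FiniteDimensional ℝ V] [BorelSpace V]

/-- x-derivatives -/
lemma kern_x {A : ℝ → ℝ} (hA : A.HasTemperateGrowth) {m : V → ℂ} (hm : RapidDecay m)
    (x : EuclideanSpace ℝ (Fin n)) (y : ℝ) (i : Fin n) :
    Integrable (fun ξ => (-((2 * π * (L ξ) i) ^ 2 : ℝ) : ℂ) * (Kern A L ((x, y), ξ) * m ξ)) ∧
    ∃ g1 : ℝ → ℂ, (∀ t : ℝ, HasDerivAt
      (fun t : ℝ => TInt (Kern A L) m (x + t • EuclideanSpace.single i (1:ℝ), y)) (g1 t) t) ∧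
      HasDerivAt g1 (∫ ξ, (-((2 * π * (L ξ) i) ^ 2 : ℝ) : ℂ) * (Kern A L ((x, y), ξ) * m ξ)) 0 := by
  set e : EuclideanSpace ℝ (Fin n) × ℝ := (EuclideanSpace.single i (1:ℝ), 0) with he
  set Ψ1 : (EuclideanSpace ℝ (Fin n) × ℝ) × V → ℂ := fun q =>
    (((2 * π * (L q.2) i : ℝ) : ℂ) * Complex.I) * Kern A L q with hΨ1
  have hK : ∀ p ξ, HasDerivAt (fun t : ℝ => Kern A L (p + t • e, ξ)) (Ψ1 (p, ξ)) 0 := by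
    intro p ξ
    have h0 : HasDerivAt (fun t : ℝ => 2 * π * inner ℝ (p.1 + t • EuclideanSpace.single i (1:ℝ)) (L ξ))
        (2 * π * (L ξ) i) 0 := by
      have : (fun t : ℝ => 2 * π * inner ℝ (p.1 + t • EuclideanSpace.single i (1:ℝ)) (L ξ)) =
          fun t : ℝ => 2 * π * (inner ℝ p.1 (L ξ) + t * (L ξ) i) := by
        funext t
        simp [inner_add_left, inner_smul_left, EuclideanSpace.inner_single_left]
      rw [this]
      have := (((hasDerivAt_id (0:ℝ)).mul_const ((L ξ) i)).const_add (inner ℝ p.1 (L ξ))).const_mul (2 * π)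
      simpa using this
    have h1 := ((h0.ofReal_comp).mul_const Complex.I).cexp.const_mul
      ((A (p.2 ^ 2 * rr L ξ) : ℝ) : ℂ)
    have h2 : (fun t : ℝ => Kern A L (p + t • e, ξ)) = fun t : ℝ =>
        ((A (p.2 ^ 2 * rr L ξ) : ℝ) : ℂ) * Complex.exp (((2 * π * inner ℝ (p.1 + t • EuclideanSpace.single i (1:ℝ)) (L ξ) : ℝ) : ℂ) * Complex.I) := by
      funext t
      simp [Kern, he]
    rw [h2]
    refine hasDerivAt_congr_val h1 ?_
    simp only [hΨ1, Kern]
    simp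
    ring
  obtain ⟨hT1, hD1⟩ := TInt_line hm (temperate_kern L hA) e hK
  set Ψ2 : (EuclideanSpace ℝ (Fin n) × ℝ) × V → ℂ := fun q =>
    (((2 * π * (L q.2) i : ℝ) : ℂ) * Complex.I) * Ψ1 q with hΨ2
  obtain ⟨hT2, hD2⟩ := TInt_line (Ψ' := Ψ2) hm hT1 e (fun p ξ => by
    exact (hK p ξ).const_mul (((2 * π * (L ξ) i : ℝ) : ℂ) * Complex.I))
  have hpt : ∀ ξ, Ψ2 ((x, y), ξ) * m ξ =
      (-((2 * π * (L ξ) i) ^ 2 : ℝ) : ℂ) * (Kern A L ((x, y), ξ) * m ξ) := by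
    intro ξ
    simp only [hΨ2, hΨ1]
    push_cast
    linear_combination (2 * π * (L ξ) i : ℂ) ^ 2 * Kern A L ((x, y), ξ) * m ξ * Complex.I_sq
  refine ⟨(TInt_integrable hT2 hm (x, y)).congr (Filter.Eventually.of_forall hpt),
    fun t => TInt Ψ1 m ((x, y) + t • e), fun t => ?_, ?_⟩
  · have := hD1 (x, y) t
    simpa [he] using this
  · have := hD2 (x, y) 0
    rw [zero_smul, add_zero] at this
    have h3 : TInt Ψ2 m (x, y) = ∫ ξ, (-((2 * π * (L ξ) i) ^ 2 : ℝ) : ℂ) * (Kern A L ((x, y), ξ) * m ξ) :=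
      integral_congr_ae (Filter.Eventually.of_forall hpt)
    rw [h3] at this
    exact this

/-- y-derivatives -/
lemma kern_y {A : ℝ → ℝ} (hA : A.HasTemperateGrowth) {m : V → ℂ} (hm : RapidDecay m)
    (x : EuclideanSpace ℝ (Fin n)) :
    ∃ Ψ1 Ψ2 : (EuclideanSpace ℝ (Fin n) × ℝ) × V → ℂ,
      Ψ1.HasTemperateGrowth ∧ Ψ2.HasTemperateGrowth ∧
      (∀ y ξ, Ψ1 ((x, y), ξ) = ((2 * y * rr L ξ * deriv A (y ^ 2 * rr L ξ) : ℝ) : ℂ) *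
        Complex.exp (((2 * π * inner ℝ x (L ξ) : ℝ) : ℂ) * Complex.I)) ∧
      (∀ y ξ, Ψ2 ((x, y), ξ) = ((2 * rr L ξ * deriv A (y ^ 2 * rr L ξ) +
          4 * y ^ 2 * rr L ξ ^ 2 * deriv (deriv A) (y ^ 2 * rr L ξ) : ℝ) : ℂ) *
        Complex.exp (((2 * π * inner ℝ x (L ξ) : ℝ) : ℂ) * Complex.I)) ∧
      (∀ y, HasDerivAt (fun y : ℝ => TInt (Kern A L) m (x, y)) (TInt Ψ1 m (x, y)) y) ∧
      (∀ y, HasDerivAt (fun y : ℝ => TInt Ψ1 m (x, y)) (TInt Ψ2 m (x, y)) y) := by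
  have hAd : Differentiable ℝ A := hA.1.differentiable (by simp)
  have hAd2 : Differentiable ℝ (deriv A) := by
    have : ContDiff ℝ 1 (deriv A) := by
      have h2 : ContDiff ℝ (1 + 1) A := (contDiff_infty.1 hA.1 2).of_le (by norm_num)
      exact (contDiff_succ_iff_deriv.1 h2).2.2
    exact this.differentiable (by simp)
  set e : EuclideanSpace ℝ (Fin n) × ℝ := (0, 1) with he
  set Ψ1 : (EuclideanSpace ℝ (Fin n) × ℝ) × V → ℂ := fun q =>
    ((2 * q.1.2 * rr L q.2 * deriv A (q.1.2 ^ 2 * rr L q.2) : ℝ) : ℂ) *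
        Complex.exp (((2 * π * inner ℝ q.1.1 (L q.2) : ℝ) : ℂ) * Complex.I) with hΨ1
  set Ψ2 : (EuclideanSpace ℝ (Fin n) × ℝ) × V → ℂ := fun q =>
    ((2 * rr L q.2 * deriv A (q.1.2 ^ 2 * rr L q.2) +
          4 * q.1.2 ^ 2 * rr L q.2 ^ 2 * deriv (deriv A) (q.1.2 ^ 2 * rr L q.2) : ℝ) : ℂ) *
        Complex.exp (((2 * π * inner ℝ q.1.1 (L q.2) : ℝ) : ℂ) * Complex.I) with hΨ2
  have hw : ∀ (y r : ℝ), HasDerivAt (fun t : ℝ => (y + t) ^ 2 * r) (2 * y * r) 0 := by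
    intro y r
    have := (((hasDerivAt_id (0:ℝ)).const_add y).pow 2).mul_const r
    simpa using this
  have hcomp : ∀ (g : ℝ → ℝ), Differentiable ℝ g → ∀ y r : ℝ,
      HasDerivAt (fun t : ℝ => g ((y + t) ^ 2 * r)) (deriv g (y ^ 2 * r) * (2 * y * r)) 0 := by
    intro g hg y r
    have h1 : HasDerivAt g (deriv g (y ^ 2 * r)) ((y + 0) ^ 2 * r) := by
      rw [add_zero]; exact (hg _).hasDerivAt
    exact h1.comp (0:ℝ) (hw y r)
  have hK1 : ∀ p ξ, HasDerivAt (fun t : ℝ => Kern A L (p + t • e, ξ)) (Ψ1 (p, ξ)) 0 := by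
    intro p ξ
    have h1 := ((hcomp A hAd p.2 (rr L ξ)).ofReal_comp).mul_const
      (Complex.exp (((2 * π * inner ℝ p.1 (L ξ) : ℝ) : ℂ) * Complex.I))
    have h2 : (fun t : ℝ => Kern A L (p + t • e, ξ)) = fun t : ℝ =>
        ((A ((p.2 + t) ^ 2 * rr L ξ) : ℝ) : ℂ) *
          Complex.exp (((2 * π * inner ℝ p.1 (L ξ) : ℝ) : ℂ) * Complex.I) := by
      funext t; simp [Kern, he]
    rw [h2]
    refine hasDerivAt_congr_val h1 ?_
    · simp only [hΨ1]; congr 2; ring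
  have hK2 : ∀ p ξ, HasDerivAt (fun t : ℝ => Ψ1 (p + t • e, ξ)) (Ψ2 (p, ξ)) 0 := by
    intro p ξ
    have h0 : HasDerivAt (fun t : ℝ => 2 * (p.2 + t) * rr L ξ) (2 * rr L ξ) 0 := by
      have := (((hasDerivAt_id (0:ℝ)).const_add p.2).const_mul 2).mul_const (rr L ξ)
      simpa using this
    have h1 := ((h0.mul (hcomp _ hAd2 p.2 (rr L ξ))).ofReal_comp).mul_const
      (Complex.exp (((2 * π * inner ℝ p.1 (L ξ) : ℝ) : ℂ) * Complex.I))
    have h2 : (fun t : ℝ => Ψ1 (p + t • e, ξ)) = fun t : ℝ =>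
        ((2 * (p.2 + t) * rr L ξ * deriv A ((p.2 + t) ^ 2 * rr L ξ) : ℝ) : ℂ) *
          Complex.exp (((2 * π * inner ℝ p.1 (L ξ) : ℝ) : ℂ) * Complex.I) := by
      funext t; simp [hΨ1, he]
    rw [h2]
    refine hasDerivAt_congr_val h1 ?_
    · simp only [hΨ2, add_zero]; congr 2; ring
  obtain ⟨hT1, hD1⟩ := TInt_line hm (temperate_kern L hA) e hK1
  obtain ⟨hT2, hD2⟩ := TInt_line hm hT1 e hK2
  refine ⟨Ψ1, Ψ2, hT1, hT2, fun _ _ => rfl, fun _ _ => rfl, fun y => ?_, fun y => ?_⟩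
  · simpa [he] using hD1 (x, 0) y
  · simpa [he] using hD2 (x, 0) y


lemma kern_lap {A : ℝ → ℝ} (hA : A.HasTemperateGrowth) {m : V → ℂ} (hm : RapidDecay m)
    (x : EuclideanSpace ℝ (Fin n)) (y : ℝ) :
    Integrable (fun ξ => (-(rr L ξ : ℝ) : ℂ) * (Kern A L ((x, y), ξ) * m ξ)) ∧
    ∑ i, ∫ ξ, (-((2 * π * (L ξ) i) ^ 2 : ℝ) : ℂ) * (Kern A L ((x, y), ξ) * m ξ) =
      ∫ ξ, (-(rr L ξ : ℝ) : ℂ) * (Kern A L ((x, y), ξ) * m ξ) := by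
  have hi := fun i => (kern_x L hA hm x y i).1
  have hpt : ∀ ξ, ∑ i, (-((2 * π * (L ξ) i) ^ 2 : ℝ) : ℂ) * (Kern A L ((x, y), ξ) * m ξ) =
      (-(rr L ξ : ℝ) : ℂ) * (Kern A L ((x, y), ξ) * m ξ) := by
    intro ξ
    rw [← Finset.sum_mul]
    congr 1
    rw [rr, EuclideanSpace.norm_sq_eq, Finset.mul_sum, Finset.sum_neg_distrib]
    push_cast
    congr 1
    refine Finset.sum_congr rfl fun i _ => ?_
    rw [← Complex.ofReal_pow ‖_‖, Real.norm_eq_abs, sq_abs]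
    push_cast
    ring
  constructor
  · have := integrable_finsetSum Finset.univ (fun i _ => hi i)
    refine this.congr (Filter.Eventually.of_forall fun ξ => ?_)
    simpa using hpt ξ
  · rw [← integral_finsetSum _ (fun i _ => hi i)]
    exact integral_congr_ae (Filter.Eventually.of_forall hpt)

lemma six_integrals {g1 g2 g3 g4 g5 g6 : V → ℂ} (h1 : Integrable g1) (h2 : Integrable g2)
    (h3 : Integrable g3) (h4 : Integrable g4) (h5 : Integrable g5) (h6 : Integrable g6)
    (c1 c2 c3 d c4 c5 c6 : ℂ)
    (h : ∀ ξ, (c1 * g1 ξ + c2 * g2 ξ + c3 * g3 ξ) +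
      d * (c4 * g4 ξ + c5 * g5 ξ + c6 * g6 ξ) = 0) :
    (c1 * (∫ ξ, g1 ξ) + c2 * (∫ ξ, g2 ξ) + c3 * (∫ ξ, g3 ξ)) +
      d * (c4 * (∫ ξ, g4 ξ) + c5 * (∫ ξ, g5 ξ) + c6 * (∫ ξ, g6 ξ)) = 0 := by
  have k1 := h1.const_mul c1
  have k2 := h2.const_mul c2
  have k3 := h3.const_mul c3
  have k4 := h4.const_mul c4
  have k5 := h5.const_mul c5
  have k6 := h6.const_mul c6
  have i12 : Integrable (fun ξ => c1 * g1 ξ + c2 * g2 ξ) := k1.add k2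
  have i123 : Integrable (fun ξ => c1 * g1 ξ + c2 * g2 ξ + c3 * g3 ξ) := i12.add k3
  have i45 : Integrable (fun ξ => c4 * g4 ξ + c5 * g5 ξ) := k4.add k5
  have i456 : Integrable (fun ξ => c4 * g4 ξ + c5 * g5 ξ + c6 * g6 ξ) := i45.add k6
  have e : ∫ ξ, ((c1 * g1 ξ + c2 * g2 ξ + c3 * g3 ξ) +
      d * (c4 * g4 ξ + c5 * g5 ξ + c6 * g6 ξ)) = 0 := by simp [h]
  rw [integral_add i123 (i456.const_mul d), integral_const_mul, integral_add i12 k3,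
    integral_add k1 k2, integral_add i45 k6, integral_add k4 k5] at e
  simpa only [integral_const_mul] using e

lemma one_factor {γ : ℝ} (hγ : 0 < γ) {a b : ℝ → ℝ}
    (ha : a.HasTemperateGrowth) (hb : b.HasTemperateGrowth)
    (hode : ∀ w, 0 < w → (4*w*deriv (deriv a) w + 4*(1-γ)*deriv a w - a w) +
        w^γ * (4*w*deriv (deriv b) w + 4*(1+γ)*deriv b w - b w) = 0)
    {M : V → ℂ} (hM : RapidDecay M) (x : EuclideanSpace ℝ (Fin n)) (y : ℝ) (hy : 0 < y)
    (v : EuclideanSpace ℝ (Fin n) → ℝ → ℝ)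
    (hv : v = fun x y => y ^ ((n : ℝ)/2 - γ) * (TInt (Kern a L) M (x, y)).re +
      y ^ ((n : ℝ)/2 + γ) *
        (TInt (Kern b L) (fun ξ => ((rr L ξ ^ γ : ℝ) : ℂ) * M ξ) (x, y)).re) :
    -(hypLap n v x y) = ((n : ℝ)^2/4 - γ^2) * v x y := by
  set N : V → ℂ := fun ξ => ((rr L ξ ^ γ : ℝ) : ℂ) * M ξ with hN
  have hNr : RapidDecay N := hM.rr_mul L hγ
  set s : ℝ := (n : ℝ)/2 - γ with hs
  set s' : ℝ := (n : ℝ)/2 + γ with hs'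
  obtain ⟨P1, P2, hP1t, hP2t, hP1, hP2, hPd1, hPd2⟩ := kern_y L ha hM x
  obtain ⟨Q1, Q2, hQ1t, hQ2t, hQ1, hQ2, hQd1, hQd2⟩ := kern_y L hb hNr x
  obtain ⟨hLPi, hLP⟩ := kern_lap L ha hM x y
  obtain ⟨hLQi, hLQ⟩ := kern_lap L hb hNr x y
  -- Laplacian in x
  have hlap : lapX v x y = y ^ s * (∫ ξ, (-(rr L ξ : ℝ) : ℂ) * (Kern a L ((x, y), ξ) * M ξ)).re +
      y ^ s' * (∫ ξ, (-(rr L ξ : ℝ) : ℂ) * (Kern b L ((x, y), ξ) * N ξ)).re := by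
    rw [← hLP, ← hLQ, Complex.re_sum, Complex.re_sum, Finset.mul_sum, Finset.mul_sum,
      ← Finset.sum_add_distrib]
    unfold lapX
    refine Finset.sum_congr rfl fun i _ => ?_
    obtain ⟨-, g1, hg1, hg2⟩ := kern_x L ha hM x y i
    obtain ⟨-, k1, hk1, hk2⟩ := kern_x L hb hNr x y i
    rw [hv]
    refine iteratedDeriv_two_of (g1 := fun t => y ^ s * (g1 t).re + y ^ s' * (k1 t).re)
      (Filter.Eventually.of_forall fun t => ?_) ?_
    · exact ((hasDerivAt_re (hg1 t)).const_mul _).add ((hasDerivAt_re (hk1 t)).const_mul _)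
    · exact ((hasDerivAt_re hg2).const_mul _).add ((hasDerivAt_re hk2).const_mul _)
  -- y derivatives
  have hpow : ∀ (c z : ℝ), 0 < z → HasDerivAt (fun z : ℝ => z ^ c) (c * z ^ (c - 1)) z :=
    fun c z hz => Real.hasDerivAt_rpow_const (Or.inl hz.ne')
  have hd1 : ∀ z, 0 < z → HasDerivAt (v x)
      ((s * z ^ (s - 1) * (TInt (Kern a L) M (x, z)).re + z ^ s * (TInt P1 M (x, z)).re) +
       (s' * z ^ (s' - 1) * (TInt (Kern b L) N (x, z)).re + z ^ s' * (TInt Q1 N (x, z)).re)) z := by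
    intro z hz
    rw [hv]
    exact ((hpow s z hz).mul (hasDerivAt_re (hPd1 z))).add
      ((hpow s' z hz).mul (hasDerivAt_re (hQd1 z)))
  have hd2 : iteratedDeriv 2 (v x) y =
      ((s * ((s - 1) * y ^ (s - 1 - 1)) * (TInt (Kern a L) M (x, y)).re +
          s * y ^ (s - 1) * (TInt P1 M (x, y)).re) +
        (s * y ^ (s - 1) * (TInt P1 M (x, y)).re + y ^ s * (TInt P2 M (x, y)).re)) +
      ((s' * ((s' - 1) * y ^ (s' - 1 - 1)) * (TInt (Kern b L) N (x, y)).re +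
          s' * y ^ (s' - 1) * (TInt Q1 N (x, y)).re) +
        (s' * y ^ (s' - 1) * (TInt Q1 N (x, y)).re + y ^ s' * (TInt Q2 N (x, y)).re)) := by
    refine iteratedDeriv_two_of ((eventually_gt_nhds hy).mono hd1) ?_
    exact ((((hpow (s - 1) y hy).const_mul s).mul (hasDerivAt_re (hPd1 y))).add
        ((hpow s y hy).mul (hasDerivAt_re (hPd2 y)))).add
      ((((hpow (s' - 1) y hy).const_mul s').mul (hasDerivAt_re (hQd1 y))).add
        ((hpow s' y hy).mul (hasDerivAt_re (hQd2 y))))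
  -- powers
  have e1 : ∀ c : ℝ, y ^ (c - 1) * y = y ^ c := fun c => by
    rw [Real.rpow_sub_one hy.ne']; field_simp
  have e2 : ∀ c : ℝ, y ^ (c - 1 - 1) * y ^ 2 = y ^ c := fun c => by
    rw [pow_two, ← mul_assoc, e1, e1]
  have e3 : y ^ s' = y ^ s * y ^ (2 * γ) := by
    rw [← Real.rpow_add hy]; congr 1; rw [hs, hs']; ring
  -- the integral identity
  have hzero : (y ^ 2 * (∫ ξ, (-(rr L ξ : ℝ) : ℂ) * (Kern a L ((x, y), ξ) * M ξ)).re
        + y ^ 2 * (TInt P2 M (x, y)).re + (1 - 2 * γ) * y * (TInt P1 M (x, y)).re) +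
      y ^ (2 * γ) * (y ^ 2 * (∫ ξ, (-(rr L ξ : ℝ) : ℂ) * (Kern b L ((x, y), ξ) * N ξ)).re
        + y ^ 2 * (TInt Q2 N (x, y)).re + (1 + 2 * γ) * y * (TInt Q1 N (x, y)).re) = 0 := by
    have iP1 := TInt_integrable hP1t hM (x, y)
    have iP2 := TInt_integrable hP2t hM (x, y)
    have iQ1 := TInt_integrable hQ1t hNr (x, y)
    have iQ2 := TInt_integrable hQ2t hNr (x, y)
    have hc : (((y ^ 2 : ℝ) : ℂ) * (∫ ξ, (-(rr L ξ : ℝ) : ℂ) * (Kern a L ((x, y), ξ) * M ξ))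
        + ((y ^ 2 : ℝ) : ℂ) * (TInt P2 M (x, y)) +
          (((1 - 2 * γ) * y : ℝ) : ℂ) * (TInt P1 M (x, y))) +
      ((y ^ (2 * γ) : ℝ) : ℂ) *
        (((y ^ 2 : ℝ) : ℂ) * (∫ ξ, (-(rr L ξ : ℝ) : ℂ) * (Kern b L ((x, y), ξ) * N ξ))
        + ((y ^ 2 : ℝ) : ℂ) * (TInt Q2 N (x, y)) +
          (((1 + 2 * γ) * y : ℝ) : ℂ) * (TInt Q1 N (x, y))) = 0 := by
      unfold TInt
      refine six_integrals hLPi iP2 iP1 hLQi iQ2 iQ1 _ _ _ _ _ _ _ fun ξ => ?_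
      have hr : ((y ^ 2 * -(rr L ξ) * a (y ^ 2 * rr L ξ) +
          y ^ 2 * (2 * rr L ξ * deriv a (y ^ 2 * rr L ξ) +
          4 * y ^ 2 * rr L ξ ^ 2 * deriv (deriv a) (y ^ 2 * rr L ξ)) +
          (1 - 2 * γ) * y * (2 * y * rr L ξ * deriv a (y ^ 2 * rr L ξ))) +
          y ^ (2 * γ) * rr L ξ ^ γ * (y ^ 2 * -(rr L ξ) * b (y ^ 2 * rr L ξ) +
          y ^ 2 * (2 * rr L ξ * deriv b (y ^ 2 * rr L ξ) +
          4 * y ^ 2 * rr L ξ ^ 2 * deriv (deriv b) (y ^ 2 * rr L ξ)) +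
          (1 + 2 * γ) * y * (2 * y * rr L ξ * deriv b (y ^ 2 * rr L ξ)))) = 0 := by
        rcases (rr_nonneg L ξ).eq_or_lt with h0 | h0
        · simp [← h0]
        · have hw := hode (y ^ 2 * rr L ξ) (by positivity)
          have e4 : y ^ (2 * γ) * rr L ξ ^ γ = (y ^ 2 * rr L ξ) ^ γ := by
            rw [Real.mul_rpow (by positivity) h0.le, Real.rpow_mul hy.le]
            norm_num
          rw [e4]
          linear_combination (y ^ 2 * rr L ξ) * hw
      have hr' := congrArg (fun z : ℝ => (z : ℂ)) hr
      simp only [hP1, hP2, hQ1, hQ2, hN, Kern]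
      push_cast at hr' ⊢
      linear_combination (Complex.exp (2 * π * (inner ℝ x (L ξ) : ℝ) * Complex.I) * M ξ) * hr'
    have := congrArg Complex.re hc
    simpa only [Complex.add_re, Complex.re_ofReal_mul, Complex.zero_re] using this
  unfold hypLap
  rw [hlap, hd2, (hd1 y hy).deriv]
  have hvx : v x y = y ^ s * (TInt (Kern a L) M (x, y)).re +
      y ^ s' * (TInt (Kern b L) N (x, y)).re := by rw [hv]
  rw [hvx]
  have hs2 : s * (s - 1) - ((n:ℝ) - 1) * s + ((n : ℝ)^2/4 - γ^2) = 0 := by rw [hs]; ring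
  have hs2' : s' * (s' - 1) - ((n:ℝ) - 1) * s' + ((n : ℝ)^2/4 - γ^2) = 0 := by rw [hs']; ring
  have hs3 : 2 * s - ((n:ℝ) - 1) = 1 - 2 * γ := by rw [hs]; ring
  have hs3' : 2 * s' - ((n:ℝ) - 1) = 1 + 2 * γ := by rw [hs']; ring
  generalize (TInt (Kern a L) M (x, y)).re = A0 at *
  generalize (TInt (Kern b L) N (x, y)).re = B0 at *
  generalize (TInt P1 M (x, y)).re = A1 at *
  generalize (TInt P2 M (x, y)).re = A2 at *
  generalize (TInt Q1 N (x, y)).re = B1 at *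
  generalize (TInt Q2 N (x, y)).re = B2 at *
  generalize (∫ ξ, (-(rr L ξ : ℝ) : ℂ) * (Kern a L ((x, y), ξ) * M ξ)).re = AL at *
  generalize (∫ ξ, (-(rr L ξ : ℝ) : ℂ) * (Kern b L ((x, y), ξ) * N ξ)).re = BL at *
  have a1 := e1 s
  have a2 := e2 s
  have b1 := e1 s'
  have b2 := e2 s'
  linear_combination (-(y ^ s)) * hzero - (s * (s - 1) * A0) * a2 - (s' * (s' - 1) * B0) * b2
    - (2 * s * y * A1 - ((n:ℝ) - 1) * s * A0) * a1
    - (2 * s' * y * B1 - ((n:ℝ) - 1) * s' * B0) * b1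
    - y ^ s * A0 * hs2 - y ^ s' * B0 * hs2' - y ^ s * y * A1 * hs3 - y ^ s' * y * B1 * hs3'
    - (y ^ 2 * BL + y ^ 2 * B2 + (1 + 2 * γ) * y * B1) * e3

end Part5

section Part6
open MeasureTheory FourierTransform

variable {V : Type*} [NormedAddCommGroup V] [InnerProductSpace ℝ V]
  [MeasurableSpace V] [FiniteDimensional ℝ V] [BorelSpace V]

lemma fourier_rep {g : V → ℂ} (hg : ContDiff ℝ (⊤ : ℕ∞) g) (hs : HasCompactSupport g) :
    ∃ m : V → ℂ, RapidDecay m ∧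
      ∀ w, g w = ∫ ξ, Complex.exp (((2 * π * inner ℝ w ξ : ℝ) : ℂ) * Complex.I) * m ξ := by
  set G : SchwartzMap V ℂ := hs.toSchwartzMap hg with hG
  set K : SchwartzMap V ℂ := 𝓕 G with hK
  refine ⟨K, ⟨K.continuous, fun N => ?_⟩, fun w => ?_⟩
  · refine ⟨(2 : ℝ) ^ N * (Finset.Iic (N, 0)).sup (fun m => SchwartzMap.seminorm ℝ m.1 m.2) K,
      fun ξ => ?_⟩
    · have := SchwartzMap.one_add_le_sup_seminorm_apply (𝕜 := ℝ) (m := (N, 0)) (k := N) (n := 0)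
        le_rfl le_rfl K ξ
      simpa using this
  · have h1 : (𝓕⁻ K : SchwartzMap V ℂ) = G := fourierInv_fourier_eq G
    have h2 : g w = (𝓕⁻ K : SchwartzMap V ℂ) w := by rw [h1]; rfl
    rw [h2, SchwartzMap.fourierInv_coe, Real.fourierInv_eq']
    refine integral_congr_ae (Filter.Eventually.of_forall fun ξ => ?_)
    simp only [smul_eq_mul]
    rw [real_inner_comm]

lemma two_factor {n : ℕ} (L : V →L[ℝ] EuclideanSpace ℝ (Fin n)) {γ : ℝ} (hγ : 0 < γ) {a b : ℝ → ℝ}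
    (ha : a.HasTemperateGrowth) (hb : b.HasTemperateGrowth)
    (hode : ∀ w, 0 < w → (4*w*deriv (deriv a) w + 4*(1-γ)*deriv a w - a w) +
        w^γ * (4*w*deriv (deriv b) w + 4*(1+γ)*deriv b w - b w) = 0)
    {k l : V → ℂ} (hk : RapidDecay k) (hl : RapidDecay l) (c d : ℝ)
    (x : EuclideanSpace ℝ (Fin n)) (y : ℝ) (hy : 0 < y)
    (v : EuclideanSpace ℝ (Fin n) → ℝ → ℝ)
    (hv : v = fun x y => y ^ ((n : ℝ)/2 - γ) * (c * (TInt (Kern a L) k (x, y)).re +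
        d * (TInt (Kern a L) l (x, y)).re) +
      y ^ ((n : ℝ)/2 + γ) * (c *
        (TInt (Kern b L) (fun ξ => ((rr L ξ ^ γ : ℝ) : ℂ) * k ξ) (x, y)).re +
        d * (TInt (Kern b L) (fun ξ => ((rr L ξ ^ γ : ℝ) : ℂ) * l ξ) (x, y)).re)) :
    -(hypLap n v x y) = ((n : ℝ)^2/4 - γ^2) * v x y := by
  have hconst : ∀ (c : ℝ) {k : V → ℂ}, RapidDecay k → RapidDecay (fun ξ => (c : ℂ) * k ξ) :=
    fun c k hk => hk.mul (N := 0) (C := ‖(c : ℂ)‖) continuous_const (by simp)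
  have hM : RapidDecay (fun ξ => (c : ℂ) * k ξ + (d : ℂ) * l ξ) := (hconst c hk).add (hconst d hl)
  have hlin : ∀ (A : ℝ → ℝ), A.HasTemperateGrowth → ∀ (k l M : V → ℂ), RapidDecay k →
      RapidDecay l → (∀ ξ, M ξ = (c : ℂ) * k ξ + (d : ℂ) * l ξ) → ∀ p,
      (TInt (Kern A L) M p).re = c * (TInt (Kern A L) k p).re + d * (TInt (Kern A L) l p).re := by
    intro A hA k l M hk hl hMM p
    have h1 := TInt_integrable (temperate_kern L hA) hk p
    have h2 := TInt_integrable (temperate_kern L hA) hl p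
    have : TInt (Kern A L) M p = (c : ℂ) * TInt (Kern A L) k p + (d : ℂ) * TInt (Kern A L) l p := by
      unfold TInt
      rw [← integral_const_mul, ← integral_const_mul,
        ← integral_add (h1.const_mul _) (h2.const_mul _)]
      refine integral_congr_ae (Filter.Eventually.of_forall fun ξ => ?_)
      simp only [hMM]
      ring
    rw [this]
    simp only [Complex.add_re, Complex.re_ofReal_mul]
  refine one_factor L hγ ha hb hode hM x y hy v ?_
  rw [hv]
  funext x y
  rw [hlin a ha k l _ hk hl (fun _ => rfl),
    hlin b hb _ _ (fun ξ => ((rr L ξ ^ γ : ℝ) : ℂ) * ((c : ℂ) * k ξ + (d : ℂ) * l ξ))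
      (hk.rr_mul L hγ) (hl.rr_mul L hγ) (fun ξ => by ring)]

/-- The product kernel. -/
noncomputable def Kern2 {n₁ n₂ : ℕ} (A B : ℝ → ℝ) (L₁ : V →L[ℝ] EuclideanSpace ℝ (Fin n₁))
    (L₂ : V →L[ℝ] EuclideanSpace ℝ (Fin n₂))
    (q : ((EuclideanSpace ℝ (Fin n₁) × ℝ) × (EuclideanSpace ℝ (Fin n₂) × ℝ)) × V) : ℂ :=
  Kern A L₁ (q.1.1, q.2) * Kern B L₂ (q.1.2, q.2)

lemma temperate_prodMk {D E F : Type*} [NormedAddCommGroup D] [NormedSpace ℝ D]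
    [NormedAddCommGroup E] [NormedSpace ℝ E] [NormedAddCommGroup F] [NormedSpace ℝ F]
    {f : D → E} {g : D → F} (hf : f.HasTemperateGrowth) (hg : g.HasTemperateGrowth) :
    (fun x => (f x, g x)).HasTemperateGrowth := by
  have h1 := (ContinuousLinearMap.inl ℝ E F).hasTemperateGrowth.comp hf
  have h2 := (ContinuousLinearMap.inr ℝ E F).hasTemperateGrowth.comp hg
  convert h1.add h2 using 1
  funext x
  simp

lemma temperate_kern2 {n₁ n₂ : ℕ} {A B : ℝ → ℝ} (hA : A.HasTemperateGrowth)
    (hB : B.HasTemperateGrowth) (L₁ : V →L[ℝ] EuclideanSpace ℝ (Fin n₁))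
    (L₂ : V →L[ℝ] EuclideanSpace ℝ (Fin n₂)) : (Kern2 A B L₁ L₂).HasTemperateGrowth := by
  have h1 := (temperate_kern L₁ hA).comp (temperate_prodMk
    (temperate_fst.comp (temperate_fst (D := (EuclideanSpace ℝ (Fin n₁) × ℝ) ×
      (EuclideanSpace ℝ (Fin n₂) × ℝ)) (D' := V))) temperate_snd)
  have h2 := (temperate_kern L₂ hB).comp (temperate_prodMk
    (temperate_snd.comp (temperate_fst (D := (EuclideanSpace ℝ (Fin n₁) × ℝ) ×
      (EuclideanSpace ℝ (Fin n₂) × ℝ)) (D' := V))) temperate_snd)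
  exact h1.mul h2

lemma kern2_left {n₁ n₂ : ℕ} (A B : ℝ → ℝ) (L₁ : V →L[ℝ] EuclideanSpace ℝ (Fin n₁))
    (L₂ : V →L[ℝ] EuclideanSpace ℝ (Fin n₂)) (m M : V → ℂ) (p₁ p₂)
    (hM : ∀ ξ, M ξ = Kern B L₂ (p₂, ξ) * m ξ) :
    TInt (Kern2 A B L₁ L₂) m (p₁, p₂) = TInt (Kern A L₁) M p₁ := by
  unfold TInt Kern2
  refine integral_congr_ae (Filter.Eventually.of_forall fun ξ => ?_)
  simp only [hM]; ring

lemma kern2_right {n₁ n₂ : ℕ} (A B : ℝ → ℝ) (L₁ : V →L[ℝ] EuclideanSpace ℝ (Fin n₁))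
    (L₂ : V →L[ℝ] EuclideanSpace ℝ (Fin n₂)) (m M : V → ℂ) (p₁ p₂)
    (hM : ∀ ξ, M ξ = Kern A L₁ (p₁, ξ) * m ξ) :
    TInt (Kern2 A B L₁ L₂) m (p₁, p₂) = TInt (Kern B L₂) M p₂ := by
  unfold TInt Kern2
  refine integral_congr_ae (Filter.Eventually.of_forall fun ξ => ?_)
  simp only [hM]; ring

end Part6

/-- four-term asymptotic expansion: for smooth compactly supported
Dirichlet data `f` there is a strongly `(μ₁,μ₂)`-harmonic function on
`ℍ^{n₁+1} × ℍ^{n₂+1}` of the form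
`u = y₁^{n₁/2-γ₁}y₂^{n₂/2-γ₂}F + y₁^{n₁/2-γ₁}y₂^{n₂/2+γ₂}G
   + y₁^{n₁/2+γ₁}y₂^{n₂/2-γ₂}H + y₁^{n₁/2+γ₁}y₂^{n₂/2+γ₂}I`
with `F, G, H, I` smooth up to the boundary and `F(x₁,0,x₂,0) = f(x₁,x₂)`. -/
theorem four_term_expansion
    (n₁ n₂ : ℕ) (hn₁ : 1 ≤ n₁) (hn₂ : 1 ≤ n₂)
    (γ₁ γ₂ : ℝ) (hγ₁ : γ₁ ∈ Set.Ioo (0:ℝ) ((n₁ : ℝ)/2)) (hγ₂ : γ₂ ∈ Set.Ioo (0:ℝ) ((n₂ : ℝ)/2))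
    (hγ₁int : ∀ k : ℤ, γ₁ ≠ (k : ℝ)) (hγ₂int : ∀ k : ℤ, γ₂ ≠ (k : ℝ))
    (μ₁ μ₂ : ℝ) (hμ₁ : μ₁ = (n₁ : ℝ)^2/4 - γ₁^2) (hμ₂ : μ₂ = (n₂ : ℝ)^2/4 - γ₂^2)
    (f : EuclideanSpace ℝ (Fin n₁) × EuclideanSpace ℝ (Fin n₂) → ℝ)
    (hf : ContDiff ℝ (⊤ : ℕ∞) f) (hfsupp : HasCompactSupport f) :
    ∃ F G H I : EuclideanSpace ℝ (Fin n₁) → ℝ → EuclideanSpace ℝ (Fin n₂) → ℝ → ℝ,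
      (∀ W ∈ [F, G, H, I], ContDiffOn ℝ (⊤ : ℕ∞)
        (fun p : (EuclideanSpace ℝ (Fin n₁) × ℝ) × (EuclideanSpace ℝ (Fin n₂) × ℝ) =>
          W p.1.1 p.1.2 p.2.1 p.2.2)
        {p : (EuclideanSpace ℝ (Fin n₁) × ℝ) × (EuclideanSpace ℝ (Fin n₂) × ℝ) |
          0 ≤ p.1.2 ∧ 0 ≤ p.2.2}) ∧
      (∀ x₁ x₂, F x₁ 0 x₂ 0 = f (x₁, x₂)) ∧
      (let u : EuclideanSpace ℝ (Fin n₁) → ℝ → EuclideanSpace ℝ (Fin n₂) → ℝ → ℝ :=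
        fun x₁ y₁ x₂ y₂ =>
          y₁ ^ ((n₁ : ℝ)/2 - γ₁) * y₂ ^ ((n₂ : ℝ)/2 - γ₂) * F x₁ y₁ x₂ y₂ +
          y₁ ^ ((n₁ : ℝ)/2 - γ₁) * y₂ ^ ((n₂ : ℝ)/2 + γ₂) * G x₁ y₁ x₂ y₂ +
          y₁ ^ ((n₁ : ℝ)/2 + γ₁) * y₂ ^ ((n₂ : ℝ)/2 - γ₂) * H x₁ y₁ x₂ y₂ +
          y₁ ^ ((n₁ : ℝ)/2 + γ₁) * y₂ ^ ((n₂ : ℝ)/2 + γ₂) * I x₁ y₁ x₂ y₂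
       ∀ x₁, ∀ y₁ : ℝ, 0 < y₁ → ∀ x₂, ∀ y₂ : ℝ, 0 < y₂ →
        -(hypLap1 n₁ n₂ u x₁ y₁ x₂ y₂) = μ₁ * u x₁ y₁ x₂ y₂ ∧
        -(hypLap2 n₁ n₂ u x₁ y₁ x₂ y₂) = μ₂ * u x₁ y₁ x₂ y₂) := by
  classical
  subst hμ₁ hμ₂
  obtain ⟨a₁, b₁, ha₁, hb₁, ha₁0, hode₁⟩ := profile_exists hγ₁.1 hγ₁int
  obtain ⟨a₂, b₂, ha₂, hb₂, ha₂0, hode₂⟩ := profile_exists hγ₂.1 hγ₂int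
  let V := WithLp 2 (EuclideanSpace ℝ (Fin n₁) × EuclideanSpace ℝ (Fin n₂))
  letI : MeasurableSpace V := borel V
  haveI : BorelSpace V := ⟨rfl⟩
  haveI : FiniteDimensional ℝ V := inferInstance
  let T : V ≃L[ℝ] EuclideanSpace ℝ (Fin n₁) × EuclideanSpace ℝ (Fin n₂) :=
    WithLp.prodContinuousLinearEquiv 2 ℝ _ _
  let L₁ : V →L[ℝ] EuclideanSpace ℝ (Fin n₁) :=
    (ContinuousLinearMap.fst ℝ _ _).comp T.toContinuousLinearMap
  let L₂ : V →L[ℝ] EuclideanSpace ℝ (Fin n₂) :=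
    (ContinuousLinearMap.snd ℝ _ _).comp T.toContinuousLinearMap
  obtain ⟨m, hm, hrep⟩ := fourier_rep (V := V) (g := fun z => ((f (T z) : ℝ) : ℂ))
    (Complex.ofRealCLM.contDiff.comp (hf.comp T.contDiff))
    ((hfsupp.comp_homeomorph T.toHomeomorph).comp_left (g := Complex.ofReal) (by simp))
  let m₁ : V → ℂ := fun ξ => ((rr L₁ ξ ^ γ₁ : ℝ) : ℂ) * m ξ
  let m₂ : V → ℂ := fun ξ => ((rr L₂ ξ ^ γ₂ : ℝ) : ℂ) * m ξ
  let m₁₂ : V → ℂ := fun ξ => ((rr L₁ ξ ^ γ₁ : ℝ) : ℂ) * m₂ ξ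
  have hm₁ : RapidDecay m₁ := hm.rr_mul L₁ hγ₁.1
  have hm₂ : RapidDecay m₂ := hm.rr_mul L₂ hγ₂.1
  have hm₁₂ : RapidDecay m₁₂ := hm₂.rr_mul L₁ hγ₁.1
  have hsm : ∀ (A B : ℝ → ℝ) (k : V → ℂ), A.HasTemperateGrowth → B.HasTemperateGrowth →
      RapidDecay k → ContDiff ℝ (⊤ : ℕ∞)
        (fun p : (EuclideanSpace ℝ (Fin n₁) × ℝ) × (EuclideanSpace ℝ (Fin n₂) × ℝ) =>
          (TInt (Kern2 A B L₁ L₂) k ((p.1.1, p.1.2), (p.2.1, p.2.2))).re) := by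
    intro A B k hA hB hk
    exact Complex.reCLM.contDiff.comp (TInt_smooth hk (temperate_kern2 hA hB L₁ L₂))
  refine ⟨fun x₁ y₁ x₂ y₂ => (TInt (Kern2 a₁ a₂ L₁ L₂) m ((x₁, y₁), (x₂, y₂))).re,
    fun x₁ y₁ x₂ y₂ => (TInt (Kern2 a₁ b₂ L₁ L₂) m₂ ((x₁, y₁), (x₂, y₂))).re,
    fun x₁ y₁ x₂ y₂ => (TInt (Kern2 b₁ a₂ L₁ L₂) m₁ ((x₁, y₁), (x₂, y₂))).re,
    fun x₁ y₁ x₂ y₂ => (TInt (Kern2 b₁ b₂ L₁ L₂) m₁₂ ((x₁, y₁), (x₂, y₂))).re, ?_, ?_, ?_⟩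
  · intro W hW
    simp only [List.mem_cons, List.not_mem_nil, or_false] at hW
    rcases hW with rfl | rfl | rfl | rfl
    · exact (hsm a₁ a₂ m ha₁ ha₂ hm).contDiffOn
    · exact (hsm a₁ b₂ m₂ ha₁ hb₂ hm₂).contDiffOn
    · exact (hsm b₁ a₂ m₁ hb₁ ha₂ hm₁).contDiffOn
    · exact (hsm b₁ b₂ m₁₂ hb₁ hb₂ hm₁₂).contDiffOn
  · intro x₁ x₂
    have h1 := hrep (T.symm (x₁, x₂))
    simp only [ContinuousLinearEquiv.apply_symm_apply] at h1
    have h2 : TInt (Kern2 a₁ a₂ L₁ L₂) m ((x₁, 0), (x₂, 0)) = ((f (x₁, x₂) : ℝ) : ℂ) := by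
      rw [h1]
      unfold TInt
      refine MeasureTheory.integral_congr_ae (Filter.Eventually.of_forall fun ξ => ?_)
      have hin : inner ℝ (T.symm (x₁, x₂)) ξ = inner ℝ x₁ (L₁ ξ) + inner ℝ x₂ (L₂ ξ) :=
        WithLp.prod_inner_apply _ _
      simp only [Kern2, Kern, hin]
      have e0 : ∀ r : ℝ, (0:ℝ) ^ 2 * r = 0 := by intro r; ring
      rw [e0, e0, ha₁0, ha₂0]
      simp only [Complex.ofReal_one, one_mul]
      rw [← Complex.exp_add]
      congr 2
      push_cast
      ring
    simp only [h2, Complex.ofReal_re]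
  · intro u x₁ y₁ hy₁ x₂ y₂ hy₂
    constructor
    · refine two_factor L₁ hγ₁.1 ha₁ hb₁ hode₁ (hm.kern L₂ ha₂ (x₂, y₂))
        (hm₂.kern L₂ hb₂ (x₂, y₂)) (y₂ ^ ((n₂ : ℝ)/2 - γ₂)) (y₂ ^ ((n₂ : ℝ)/2 + γ₂))
        x₁ y₁ hy₁ (fun x y => u x y x₂ y₂) ?_
      funext x y
      simp only [u]
      rw [kern2_left a₁ a₂ L₁ L₂ m _ (x, y) (x₂, y₂) (fun _ => rfl),
        kern2_left a₁ b₂ L₁ L₂ m₂ _ (x, y) (x₂, y₂) (fun _ => rfl),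
        kern2_left b₁ a₂ L₁ L₂ m₁ (fun ξ => ((rr L₁ ξ ^ γ₁ : ℝ) : ℂ) *
          (Kern a₂ L₂ ((x₂, y₂), ξ) * m ξ)) (x, y) (x₂, y₂)
          (fun ξ => by simp only [m₁]; ring),
        kern2_left b₁ b₂ L₁ L₂ m₁₂ (fun ξ => ((rr L₁ ξ ^ γ₁ : ℝ) : ℂ) *
          (Kern b₂ L₂ ((x₂, y₂), ξ) * m₂ ξ)) (x, y) (x₂, y₂)
          (fun ξ => by simp only [m₁₂]; ring)]
      ring
    · refine two_factor L₂ hγ₂.1 ha₂ hb₂ hode₂ (hm.kern L₁ ha₁ (x₁, y₁))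
        (hm₁.kern L₁ hb₁ (x₁, y₁)) (y₁ ^ ((n₁ : ℝ)/2 - γ₁)) (y₁ ^ ((n₁ : ℝ)/2 + γ₁))
        x₂ y₂ hy₂ (u x₁ y₁) ?_
      funext x y
      simp only [u]
      rw [kern2_right a₁ a₂ L₁ L₂ m _ (x₁, y₁) (x, y) (fun _ => rfl),
        kern2_right b₁ a₂ L₁ L₂ m₁ _ (x₁, y₁) (x, y) (fun _ => rfl),
        kern2_right a₁ b₂ L₁ L₂ m₂ (fun ξ => ((rr L₂ ξ ^ γ₂ : ℝ) : ℂ) *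
          (Kern a₁ L₁ ((x₁, y₁), ξ) * m ξ)) (x₁, y₁) (x, y)
          (fun ξ => by simp only [m₂]; ring),
        kern2_right b₁ b₂ L₁ L₂ m₁₂ (fun ξ => ((rr L₂ ξ ^ γ₂ : ℝ) : ℂ) *
          (Kern b₁ L₁ ((x₁, y₁), ξ) * m₁ ξ)) (x₁, y₁) (x, y)
          (fun ξ => by simp only [m₁₂, m₁, m₂]; ring)]
      ring
end
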